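/- Every τ-tilting-finite locally hereditary finite-dimensional algebra over an algebraically closed field K is representation-finite. -/

import Mathlib

/- Formalization of statements from
   "Report on the finiteness of silting objects"
   by T. Aihara, T. Honma, K. Miyamoto, Q. Wang. -/

open CategoryTheory CategoryTheory.Limits

universe u v w

noncomputable section
namespace PaperSilting
/-! ### Module-theoretic notions.

We model right `Λ`-modules as left modules over the opposite ring; all the
definitions below are stated for left modules over a ring `R` and are applied
with `R := Λᵐᵒᵖ`. -/

/-- The category of `R`-modules (in `Type 0`). -/
abbrev ModCat (R : Type) [Ring R] := ModuleCat.{0} R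

variable {R : Type} [Ring R]

/-- The module object `M` is finitely generated. -/
def IsFGMod {R : Type} [Ring R] (M : ModCat R) : Prop := Module.Finite R M

/-- Indecomposable module object. -/
def IsIndecMod {R : Type} [Ring R] (M : ModCat R) : Prop :=
  ¬ IsZero M ∧ ∀ A B : ModCat R, Nonempty (M ≅ A ⊞ B) → IsZero A ∨ IsZero B

/-- `N` belongs to `add M`, i.e. `N` is a direct summand of a finite direct sum
of copies of `M`. -/
def MemAddMod {R : Type} [Ring R] (N M : ModCat R) : Prop :=
  ∃ (k : ℕ) (g : N ⟶ ⨁ (fun _ : Fin k => M)) (h : (⨁ (fun _ : Fin k => M)) ⟶ N),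
    g ≫ h = 𝟙 N

/-- A basic module: it has no direct summand of the form `N ⊕ N` with `N ≠ 0`. -/
def IsBasicMod {R : Type} [Ring R] (M : ModCat R) : Prop :=
  ∀ N X : ModCat R, Nonempty (M ≅ (N ⊞ N) ⊞ X) → IsZero N

/-- `M` is τ-rigid, i.e. `Hom(M, τM) = 0`: there is a projective presentation
`P₁ → P₀ → M → 0` by finitely generated projectives such that
`Hom(P₀, M) → Hom(P₁, M)` is surjective (Adachi–Iyama–Reiten). -/
def IsTauRigidMod {R : Type} [Ring R] (M : ModCat R) : Prop :=
  ∃ (P₁ P₀ : ModCat R) (f : P₁ ⟶ P₀) (g : P₀ ⟶ M),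
    Projective P₁ ∧ Projective P₀ ∧ IsFGMod P₁ ∧ IsFGMod P₀ ∧
    Function.Surjective g ∧ Function.Exact f g ∧
    ∀ h : P₁ ⟶ M, ∃ k : P₀ ⟶ M, f ≫ k = h

/-- A τ-rigid pair `(M, P)`: `M` is a τ-rigid module and `P` is a finitely
generated projective with `Hom(P, M) = 0`. -/
def IsTauRigidPairMod {R : Type} [Ring R] (M P : ModCat R) : Prop :=
  IsFGMod M ∧ IsTauRigidMod M ∧ IsFGMod P ∧ Projective P ∧ ∀ f : P ⟶ M, f = 0

/-- `M` is a support τ-tilting module: `(M, P)` is a maximal τ-rigid pair for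
some projective `P` (Adachi–Iyama–Reiten; equivalently, `M` is the `0`-th
cohomology of a two-term silting complex in `K^b(proj)`). -/
def IsSupportTauTiltingMod {R : Type} [Ring R] (M : ModCat R) : Prop :=
  ∃ P : ModCat R, IsTauRigidPairMod M P ∧
    ∀ N Q : ModCat R, IsTauRigidPairMod (M ⊞ N) (P ⊞ Q) → MemAddMod N M ∧ MemAddMod Q P

/-- The ring `R` admits only finitely many basic support τ-tilting modules up
to isomorphism. -/
def IsTauTiltingFiniteRing (R : Type) [Ring R] : Prop :=
  ∃ (n : ℕ) (f : Fin n → ModCat R),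
    ∀ M : ModCat R, IsSupportTauTiltingMod M → IsBasicMod M → ∃ i, Nonempty (M ≅ f i)

/-- The ring `R` admits only finitely many finitely generated indecomposable
modules up to isomorphism. -/
def IsRepFiniteRing (R : Type) [Ring R] : Prop :=
  ∃ (n : ℕ) (f : Fin n → ModCat R),
    ∀ M : ModCat R, IsFGMod M → IsIndecMod M → ∃ i, Nonempty (M ≅ f i)

/-- `R` has exactly `n` isomorphism classes of basic support τ-tilting modules. -/
def SupportTauTiltingCount (R : Type) [Ring R] (n : ℕ) : Prop :=
  ∃ f : Fin n → ModCat R,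
    (∀ i, IsSupportTauTiltingMod (f i) ∧ IsBasicMod (f i)) ∧
    (∀ i j, Nonempty (f i ≅ f j) → i = j) ∧
    (∀ M : ModCat R, IsSupportTauTiltingMod M → IsBasicMod M → ∃ i, Nonempty (M ≅ f i))

/-- An algebra `Λ` is τ-tilting-finite (with respect to right modules,
i.e. left `Λᵐᵒᵖ`-modules). -/
def IsTauTiltingFinite (Λ : Type) [Ring Λ] : Prop := IsTauTiltingFiniteRing Λᵐᵒᵖ

/-- An algebra `Λ` is representation-finite (with respect to right modules). -/
def IsRepFinite (Λ : Type) [Ring Λ] : Prop := IsRepFiniteRing Λᵐᵒᵖ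
/-- `R` is locally hereditary: every homomorphism between (finitely generated)
indecomposable projective modules is a monomorphism or zero. -/
def IsLocallyHereditaryRing (R : Type) [Ring R] : Prop :=
  ∀ (P Q : ModCat R) (f : P ⟶ Q), IsFGMod P → IsFGMod Q → Projective P → Projective Q →
    IsIndecMod P → IsIndecMod Q → Function.Injective f ∨ f = 0

/-!
By Bongartz completion, τ-tilting finiteness leaves only finitely many indecomposable τ-rigid
modules. The algebra being locally hereditary, its indecomposable projectives are partially ordered
by the existence of a nonzero map. A two-dimensional space of maps would produce infinitely many
preprojective modules of a Kronecker quiver, and a crown in the poset infinitely many of a quiver of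
type `Ã`, all of them τ-rigid.
Hence the homomorphism spaces are at most one-dimensional, and the radical of `P x` splits into
indecomposable summands along the connected components of the lower sets.

For a lower set `W` of the poset, consider the torsion class `T` of all modules supported on `W`. As
long as `T ≠ 0`, it contains a relatively simple projective module `X`. Being a summand of an
Ext-progenerator of `T`, it is τ-rigid, and it is the only indecomposable lost in passing from `T`
to `T ∩ ⊥X`. As the modules `X` are pairwise nonisomorphic, the process reaches `T = 0`, and then
every indecomposable module supported on `W` is one of them. The existence of `X` comes from
induction on `W`: the order in which the modules over `W \ {x}`, with `x` maximal in `W`, are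
removed is a rank that weakly increases along nonzero maps, and a module of minimal rank in `T`
among those whose predecessors all avoid `x` is relatively simple projective.
-/

open Function
open scoped ModuleCat

section Indecomposable

variable {M N L V : Type*} [AddCommGroup M] [Module R M] [AddCommGroup N] [Module R N]
  [AddCommGroup L] [Module R L] [AddCommGroup V] [Module R V]

variable (R M) in
/-- Indecomposability of an unbundled module, expressed through idempotent endomorphisms. -/
def IsIndecomposable : Prop :=
  Nontrivial M ∧ ∀ e : Module.End R M, IsIdempotentElem e → e = 0 ∨ e = 1

variable (R N V) in
/-- `N` belongs to `add V`, the additive closure of `V`. That `N` is a retract of a finite power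
`ι → V` is encoded by the components of the section and of the retraction. -/
def MemAdd : Prop :=
  ∃ (ι : Type) (_ : Fintype ι) (s : ι → N →ₗ[R] V) (r : ι → V →ₗ[R] N),
    ∑ i, r i ∘ₗ s i = LinearMap.id

lemma comp_sum {ι : Type*} (t : Finset ι) (f : N →ₗ[R] L) (g : ι → M →ₗ[R] N) :
    f ∘ₗ ∑ i ∈ t, g i = ∑ i ∈ t, f ∘ₗ g i := by
  ext; simp [LinearMap.sum_apply]

lemma sum_comp {ι : Type*} (t : Finset ι) (f : ι → N →ₗ[R] L) (g : M →ₗ[R] N) :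
    (∑ i ∈ t, f i) ∘ₗ g = ∑ i ∈ t, f i ∘ₗ g := by
  ext; simp [LinearMap.sum_apply]

lemma exists_comp_eq_of_ker_le {q : M →ₗ[R] N} (hq : Surjective q) {r : M →ₗ[R] L}
    (h : LinearMap.ker q ≤ LinearMap.ker r) : ∃ s : N →ₗ[R] L, s ∘ₗ q = r := by
  refine ⟨(LinearMap.ker q).liftQ r h ∘ₗ (q.quotKerEquivOfSurjective hq).symm.toLinearMap, ?_⟩
  ext m
  have : (q.quotKerEquivOfSurjective hq).symm (q m) = Submodule.Quotient.mk m := by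
    rw [LinearEquiv.symm_apply_eq]; rfl
  simp [this]

lemma exists_comp_eq_of_comp_eq_zero [Module.Projective R V] {f : M →ₗ[R] N} {g : N →ₗ[R] L}
    (hfg : Exact f g) {φ : V →ₗ[R] N} (h : g ∘ₗ φ = 0) : ∃ β : V →ₗ[R] M, f ∘ₗ β = φ := by
  obtain ⟨β, hβ⟩ := Module.projective_lifting_property f.rangeRestrict
    (φ.codRestrict _ fun x ↦ (hfg _).1 (LinearMap.congr_fun h x)) f.surjective_rangeRestrict
  exact ⟨β, LinearMap.ext fun x ↦ congrArg Subtype.val (LinearMap.congr_fun hβ x)⟩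

namespace MemAdd

lemma of_retract {s : N →ₗ[R] V} {r : V →ₗ[R] N} (h : r ∘ₗ s = LinearMap.id) : MemAdd R N V :=
  ⟨Unit, inferInstance, fun _ ↦ s, fun _ ↦ r, by simpa using h⟩

lemma of_linearEquiv (e : M ≃ₗ[R] N) : MemAdd R M N :=
  of_retract (s := e.toLinearMap) (r := e.symm.toLinearMap) (by ext; simp)

variable (R M) in
lemma refl : MemAdd R M M := of_linearEquiv (.refl R M)

lemma trans (h₁ : MemAdd R M N) (h₂ : MemAdd R N V) : MemAdd R M V := by
  obtain ⟨ι, _, s, r, h⟩ := h₁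
  obtain ⟨κ, _, s', r', h'⟩ := h₂
  refine ⟨ι × κ, inferInstance, fun x ↦ s' x.2 ∘ₗ s x.1, fun x ↦ r x.1 ∘ₗ r' x.2, ?_⟩
  calc ∑ x : ι × κ, (r x.1 ∘ₗ r' x.2) ∘ₗ (s' x.2 ∘ₗ s x.1)
      = ∑ i, r i ∘ₗ (∑ j, r' j ∘ₗ s' j) ∘ₗ s i := by
        simp only [Fintype.sum_prod_type, sum_comp, comp_sum,
          LinearMap.comp_assoc]
    _ = LinearMap.id := by simp only [h', LinearMap.id_comp, h]

lemma pi {ι : Type} [Finite ι] {W : ι → Type*} [∀ i, AddCommGroup (W i)] [∀ i, Module R (W i)]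
    (h : ∀ i, MemAdd R (W i) V) : MemAdd R (∀ i, W i) V := by
  classical
  have := Fintype.ofFinite ι
  choose κ _ s r h using h
  refine ⟨Σ i, κ i, inferInstance, fun x ↦ s x.1 x.2 ∘ₗ LinearMap.proj x.1,
    fun x ↦ LinearMap.single R W x.1 ∘ₗ r x.1 x.2, ?_⟩
  calc ∑ x : Σ i, κ i, (LinearMap.single R W x.1 ∘ₗ r x.1 x.2) ∘ₗ (s x.1 x.2 ∘ₗ LinearMap.proj x.1)
      = ∑ i, LinearMap.single R W i ∘ₗ (∑ j, r i j ∘ₗ s i j) ∘ₗ LinearMap.proj i := by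
        simp only [Fintype.sum_sigma, sum_comp, comp_sum, LinearMap.comp_assoc]
    _ = LinearMap.id := by
        refine LinearMap.ext fun w ↦ ?_
        simp only [h, LinearMap.id_comp, LinearMap.sum_apply]
        exact Finset.univ_sum_single w

lemma prod (h₁ : MemAdd R M V) (h₂ : MemAdd R N V) : MemAdd R (M × N) V := by
  obtain ⟨ι, _, s, r, h⟩ := h₁
  obtain ⟨κ, _, s', r', h'⟩ := h₂
  refine ⟨ι ⊕ κ, inferInstance,
    Sum.elim (fun i ↦ s i ∘ₗ LinearMap.fst R M N) (fun i ↦ s' i ∘ₗ LinearMap.snd R M N),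
    Sum.elim (fun i ↦ LinearMap.inl R M N ∘ₗ r i) (fun i ↦ LinearMap.inr R M N ∘ₗ r' i), ?_⟩
  calc _ = LinearMap.inl R M N ∘ₗ (∑ i, r i ∘ₗ s i) ∘ₗ LinearMap.fst R M N +
        LinearMap.inr R M N ∘ₗ (∑ i, r' i ∘ₗ s' i) ∘ₗ LinearMap.snd R M N := by
        simp only [Fintype.sum_sum_type, Sum.elim_inl, Sum.elim_inr, sum_comp,
          comp_sum, LinearMap.comp_assoc]
    _ = LinearMap.id := by
        rw [h, h']
        ext <;> simp

lemma finite [Module.Finite R V] (h : MemAdd R N V) : Module.Finite R N := by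
  classical
  obtain ⟨ι, _, s, r, h⟩ := h
  refine Module.Finite.of_surjective (LinearMap.lsum R (fun _ : ι ↦ V) ℕ r) fun n ↦
    ⟨fun i ↦ s i n, ?_⟩
  simpa [LinearMap.sum_apply] using LinearMap.congr_fun h n

lemma eq_zero_of_source (h : MemAdd R N V) (hV : ∀ g : V →ₗ[R] L, g = 0) (g : N →ₗ[R] L) :
    g = 0 := by
  obtain ⟨ι, _, s, r, h⟩ := h
  rw [← g.comp_id, ← h, comp_sum]
  exact Finset.sum_eq_zero fun i _ ↦ by
    rw [← LinearMap.comp_assoc, hV (g ∘ₗ r i), LinearMap.zero_comp]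

lemma eq_zero_of_target (h : MemAdd R N V) (hV : ∀ g : L →ₗ[R] V, g = 0) (g : L →ₗ[R] N) :
    g = 0 := by
  obtain ⟨ι, _, s, r, h⟩ := h
  rw [← g.id_comp, ← h, sum_comp]
  exact Finset.sum_eq_zero fun i _ ↦ by
    rw [LinearMap.comp_assoc, hV (s i ∘ₗ g), LinearMap.comp_zero]

end MemAdd

namespace IsIndecomposable

/-- Fitting's lemma. -/
lemma isUnit_or_isNilpotent [IsArtinian R M] [IsNoetherian R M] (h : IsIndecomposable R M)
    (f : Module.End R M) : IsUnit f ∨ IsNilpotent f := by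
  obtain ⟨n, hn⟩ := Filter.eventually_atTop.1 f.eventually_isCompl_ker_pow_range_pow
  have hc := (hn (n + 1) (by lia)).symm
  rcases h.2 _ (Submodule.isIdempotentElem_projection hc) with h0 | h1
  · refine .inr ⟨n + 1, LinearMap.ext fun x ↦ ?_⟩
    have := Submodule.projection_apply_left hc ⟨(f ^ (n + 1)) x, x, rfl⟩
    rw [h0] at this
    exact this.symm
  · rw [Module.End.isUnit_iff]
    refine .inl (IsArtinian.bijective_of_injective_endomorphism f ?_)
    refine (injective_iff_map_eq_zero f).2 fun x hx ↦ ?_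
    have := Submodule.projection_apply_right hc ⟨x, by simp [pow_succ, hx]⟩
    rwa [h1] at this

lemma isLocalRing_end [IsArtinian R M] [IsNoetherian R M] (h : IsIndecomposable R M) :
    IsLocalRing (Module.End R M) := by
  have := h.1
  exact .of_isUnit_or_isUnit_one_sub_self fun f ↦
    (h.isUnit_or_isNilpotent f).imp id fun hf ↦ hf.isUnit_one_sub

lemma exists_bijective_of_sum [IsArtinian R M] [IsNoetherian R M] (h : IsIndecomposable R M)
    {ι : Type*} {s : Finset ι} {φ : ι → Module.End R M}
    (hs : Bijective (∑ i ∈ s, φ i : Module.End R M)) :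
    ∃ i ∈ s, Bijective (φ i) := by
  have := h.isLocalRing_end
  simp only [← Module.End.isUnit_iff] at hs ⊢
  exact IsLocalRing.exists_of_isUnit_sum hs

lemma bijective_of_retract [Nontrivial N] (h : IsIndecomposable R M) {s : N →ₗ[R] M}
    {r : M →ₗ[R] N} (hrs : r ∘ₗ s = LinearMap.id) : Bijective s ∧ Bijective r := by
  have hrs' : LeftInverse r s := LinearMap.congr_fun hrs
  have hid : IsIdempotentElem (s ∘ₗ r : Module.End R M) := LinearMap.ext fun x ↦ by
    simp [hrs' (r x)]
  rcases h.2 _ hid with h0 | h1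
  · obtain ⟨x, hx⟩ := exists_ne (0 : N)
    have := congrArg r (LinearMap.congr_fun h0 (s x))
    simp only [LinearMap.comp_apply, hrs' x, LinearMap.zero_apply, map_zero] at this
    exact absurd this hx
  · have hsr : LeftInverse s r := LinearMap.congr_fun h1
    exact ⟨⟨hrs'.injective, hsr.surjective⟩, ⟨hsr.injective, hrs'.surjective⟩⟩

end IsIndecomposable

lemma MemAdd.exists_retract [IsArtinian R N] [IsNoetherian R N] (hN : IsIndecomposable R N)
    (h : MemAdd R N V) : ∃ (s : N →ₗ[R] V) (r : V →ₗ[R] N), r ∘ₗ s = LinearMap.id := by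
  obtain ⟨ι, _, s, r, h⟩ := h
  obtain ⟨i, -, hi⟩ := hN.exists_bijective_of_sum (φ := fun i ↦ r i ∘ₗ s i)
    (by rw [h]; exact bijective_id)
  let e := LinearEquiv.ofBijective _ hi
  exact ⟨s i, e.symm.toLinearMap ∘ₗ r i, LinearMap.ext e.symm_apply_apply⟩

lemma exists_proper_retract_of_not_bijective [IsArtinian R M] [IsNoetherian R M]
    {f : Module.End R M} (hf : ¬ Bijective f) :
    ∃ (n : ℕ) (r : M →ₗ[R] LinearMap.range (f ^ n)), LinearMap.range (f ^ n) ≠ ⊤ ∧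
      r ∘ₗ (LinearMap.range (f ^ n)).subtype = LinearMap.id := by
  obtain ⟨n, hn⟩ := Filter.eventually_atTop.1 f.eventually_isCompl_ker_pow_range_pow
  refine ⟨n + 1, _, fun htop ↦ hf ?_,
    Submodule.projectionOnto_comp_subtype (hn (n + 1) (by lia)).symm⟩
  refine IsNoetherian.bijective_of_surjective_endomorphism f fun x ↦ ?_
  obtain ⟨y, rfl⟩ := LinearMap.range_eq_top.1 htop x
  exact ⟨(f ^ n) y, by rw [pow_succ']; rfl⟩

end Indecomposable

section Decomposition

variable {M : Type v} {N : Type*} [AddCommGroup M] [Module R M] [AddCommGroup N] [Module R N]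
  [IsArtinian R M] [IsNoetherian R M]

variable (R M) in
lemma exists_linearEquiv_pi_isIndecomposable :
    ∃ (ι : Type) (_ : Fintype ι) (W : ι → ModuleCat.{v} R),
      (∀ i, IsIndecomposable R (W i)) ∧ Nonempty (M ≃ₗ[R] ∀ i, W i) := by
  induction hn : Module.length R M using WellFoundedLT.induction generalizing M with
  | ind n ih =>
  subst hn
  rcases subsingleton_or_nontrivial M with hM | hM
  · exact ⟨Empty, inferInstance, Empty.elim, Empty.rec, ⟨0⟩⟩
  by_cases hI : IsIndecomposable R M
  · exact ⟨Unit, inferInstance, fun _ ↦ .of R M, fun _ ↦ hI,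
      ⟨(LinearEquiv.funUnique Unit R M).symm⟩⟩
  obtain ⟨e, he, h0, h1⟩ : ∃ e : Module.End R M, IsIdempotentElem e ∧ e ≠ 0 ∧ e ≠ 1 := by
    simpa [IsIndecomposable, hM] using hI
  have hker : LinearMap.ker e ≠ ⊤ := fun h ↦ h0 (LinearMap.ker_eq_top.1 h)
  have hrange : LinearMap.range e ≠ ⊤ := fun h ↦ h1 <| LinearMap.ext fun x ↦
    (LinearMap.IsIdempotentElem.mem_range_iff he).1 (h ▸ Submodule.mem_top)
  obtain ⟨ι, _, W, hW, ⟨eW⟩⟩ := ih _ (Submodule.length_lt hrange) (LinearMap.range e) rfl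
  obtain ⟨κ, _, W', hW', ⟨eW'⟩⟩ := ih _ (Submodule.length_lt hker) (LinearMap.ker e) rfl
  exact ⟨ι ⊕ κ, inferInstance, Sum.elim W W', Sum.rec hW hW',
    ⟨(Submodule.prodEquivOfIsCompl _ _ (LinearMap.IsIdempotentElem.isCompl he)).symm ≪≫ₗ
      eW.prodCongr eW' ≪≫ₗ
      (LinearEquiv.sumPiEquivProdPi R ι κ fun i ↦ (Sum.elim W W' i : ModuleCat R)).symm⟩⟩

lemma exists_isIndecomposable_comp_ne_zero {g : M →ₗ[R] N} (hg : g ≠ 0) :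
    ∃ (W : ModuleCat.{v} R) (s : W →ₗ[R] M) (r : M →ₗ[R] W),
      Module.Finite R W ∧ IsIndecomposable R W ∧ r ∘ₗ s = LinearMap.id ∧ g ∘ₗ s ≠ 0 := by
  classical
  obtain ⟨ι, _, W, hW, ⟨e⟩⟩ := exists_linearEquiv_pi_isIndecomposable R M
  obtain ⟨i, hi⟩ : ∃ i, (g ∘ₗ e.symm.toLinearMap) ∘ₗ LinearMap.single R _ i ≠ 0 := by
    by_contra! h
    refine hg (LinearMap.ext fun x ↦ ?_)
    have : g ∘ₗ e.symm.toLinearMap = 0 := LinearMap.pi_ext' fun i ↦ by simp [h i]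
    simpa using LinearMap.congr_fun this (e x)
  have hr : (LinearMap.proj i ∘ₗ e.toLinearMap) ∘ₗ
      (e.symm.toLinearMap ∘ₗ LinearMap.single R _ i) = (LinearMap.id : W i →ₗ[R] W i) := by
    ext; simp
  exact ⟨W i, _, _, .of_surjective _ (LinearMap.surjective_of_comp_eq_id _ _ hr), hW i, hr, hi⟩

lemma exists_isIndecomposable_ne_zero_comp {g : N →ₗ[R] M} (hg : g ≠ 0) :
    ∃ (W : ModuleCat.{v} R) (s : W →ₗ[R] M) (r : M →ₗ[R] W),
      Module.Finite R W ∧ IsIndecomposable R W ∧ r ∘ₗ s = LinearMap.id ∧ r ∘ₗ g ≠ 0 := by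
  classical
  obtain ⟨ι, _, W, hW, ⟨e⟩⟩ := exists_linearEquiv_pi_isIndecomposable R M
  obtain ⟨i, hi⟩ : ∃ i, LinearMap.proj i ∘ₗ e.toLinearMap ∘ₗ g ≠ 0 := by
    by_contra! h
    refine hg (LinearMap.ext fun x ↦ e.injective (funext fun i ↦ ?_))
    simpa using LinearMap.congr_fun (h i) x
  have hr : (LinearMap.proj i ∘ₗ e.toLinearMap) ∘ₗ
      (e.symm.toLinearMap ∘ₗ LinearMap.single R _ i) = (LinearMap.id : W i →ₗ[R] W i) := by
    ext; simp
  exact ⟨W i, _, _, .of_surjective _ (LinearMap.surjective_of_comp_eq_id _ _ hr), hW i, hr, hi⟩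

end Decomposition

section Algebra

variable {M N : Type*} [AddCommGroup M] [Module R M] [AddCommGroup N] [Module R N]

section Approximation

variable [Module.Finite R M] [Module.Finite R N]

variable (R M N) in
lemma finite_linearMap (k : Type*) [CommRing k] [IsNoetherianRing k] [Algebra k R]
    [Module.Finite k R] [Module k N] [IsScalarTower k R N] : Module.Finite k (M →ₗ[R] N) := by
  have : Module.Finite k N := .trans R N
  obtain ⟨n, f, hf⟩ := Module.Finite.exists_fin' R M
  let ev : (M →ₗ[R] N) →ₗ[k] (Fin n → N) :=
    { toFun g i := g (f (Pi.single i 1))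
      map_add' _ _ := rfl
      map_smul' _ _ := rfl }
  refine .of_injective ev fun g h hgh ↦ LinearMap.ext fun m ↦ ?_
  obtain ⟨x, rfl⟩ := hf m
  have : g ∘ₗ f = h ∘ₗ f := LinearMap.pi_ext' fun i ↦ LinearMap.ext_ring (congrFun hgh i)
  exact LinearMap.congr_fun this x

variable (R M N) in
lemma exists_left_approximation (k : Type*) [CommRing k] [IsNoetherianRing k] [Algebra k R]
    [Module.Finite k R] :
    ∃ (n : ℕ) (g : M →ₗ[R] (Fin n → N)), ∀ φ : M →ₗ[R] N,
      ∃ ψ : (Fin n → N) →ₗ[R] N, ψ ∘ₗ g = φ := by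
  let : Module k N := Module.restrictScalars k R N
  have : IsScalarTower k R N := .restrictScalars k R N
  have := finite_linearMap R M N k
  obtain ⟨n, b, hb⟩ := Module.Finite.exists_fin (R := k) (M := M →ₗ[R] N)
  refine ⟨n, LinearMap.pi b, fun φ ↦ ?_⟩
  obtain ⟨c, rfl⟩ := (Submodule.mem_span_range_iff_exists_fun k).1 (hb ▸ Submodule.mem_top (x := φ))
  exact ⟨∑ i, c i • LinearMap.proj i, by ext; simp [LinearMap.sum_apply]⟩

variable (R M N) in
lemma exists_right_approximation (k : Type*) [CommRing k] [IsNoetherianRing k] [Algebra k R]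
    [Module.Finite k R] :
    ∃ (n : ℕ) (g : (Fin n → M) →ₗ[R] N), ∀ φ : M →ₗ[R] N,
      ∃ ψ : M →ₗ[R] (Fin n → M), g ∘ₗ ψ = φ := by
  let : Module k N := Module.restrictScalars k R N
  have : IsScalarTower k R N := .restrictScalars k R N
  let : Module k M := Module.restrictScalars k R M
  have : IsScalarTower k R M := .restrictScalars k R M
  have := finite_linearMap R M N k
  obtain ⟨n, b, hb⟩ := Module.Finite.exists_fin (R := k) (M := M →ₗ[R] N)
  refine ⟨n, ∑ i, b i ∘ₗ LinearMap.proj i, fun φ ↦ ?_⟩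
  obtain ⟨c, rfl⟩ := (Submodule.mem_span_range_iff_exists_fun k).1 (hb ▸ Submodule.mem_top (x := φ))
  exact ⟨LinearMap.pi fun i ↦ c i • LinearMap.id, by ext; simp [LinearMap.sum_apply]⟩

end Approximation

end Algebra

section TorsionClasses

variable (R) in
/-- A property of `R`-modules, standing for a full subcategory of the module category. -/
abbrev ModuleProp := ∀ (M : Type) [AddCommGroup M] [Module R M], Prop

/-- A torsion class in the category of finitely generated modules. The empty class is allowed. -/
structure IsTorsionClass (T : ModuleProp R) : Prop where
  finite {M : Type} [AddCommGroup M] [Module R M] : T M → Module.Finite R M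
  quotient {M N : Type} [AddCommGroup M] [Module R M] [AddCommGroup N] [Module R N]
    (g : M →ₗ[R] N) : Surjective g → T M → T N
  extension {M N : Type} [AddCommGroup M] [Module R M] [AddCommGroup N] [Module R N]
    (g : M →ₗ[R] N) : Surjective g → T (LinearMap.ker g) → T N → T M

/-- `X` is simple projective relative to `T`: it is a nonzero module in `T`, and every nonzero map
from a module in `T` to `X` is a split epimorphism. -/
structure IsSimpleProjectiveIn (T : ModuleProp R) (X : Type) [AddCommGroup X] [Module R X] :
    Prop where
  nontrivial : Nontrivial X
  mem : T X
  exists_section {Y : Type} [AddCommGroup Y] [Module R Y] : T Y →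
    ∀ g : Y →ₗ[R] X, g ≠ 0 → ∃ s : X →ₗ[R] Y, g ∘ₗ s = LinearMap.id

/-- `U` is Ext-projective relative to `T`: `Ext¹(U, -)` vanishes on `T`, expressed as the lifting
of maps out of `U` along the epimorphisms with kernel in `T`. -/
def IsExtProjective (T : ModuleProp R) (U : Type) [AddCommGroup U] [Module R U] : Prop :=
  ∀ ⦃E B : Type⦄ [AddCommGroup E] [Module R E] [AddCommGroup B] [Module R B] (p : E →ₗ[R] B),
    Surjective p → T (LinearMap.ker p) → ∀ g : U →ₗ[R] B, ∃ h : U →ₗ[R] E, p ∘ₗ h = g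

/-- `U` is an Ext-progenerator of `T`: an Ext-projective module in `T` such that every module in `T`
is covered by a module in `add U`, with kernel in `T`. -/
structure IsExtProgenerator (T : ModuleProp R) (U : Type) [AddCommGroup U] [Module R U] :
    Prop where
  mem : T U
  isExtProjective : IsExtProjective T U
  exists_cover {Y : Type} [AddCommGroup Y] [Module R Y] : T Y →
    ∃ U₀ : ModCat R, MemAdd R U₀ U ∧ ∃ q : U₀ →ₗ[R] Y, Surjective q ∧ T (LinearMap.ker q)

/-- The intersection of `T` with the left perpendicular category of `X`. -/
def leftPerpIn (T : ModuleProp R) (X : Type) [AddCommGroup X] [Module R X] : ModuleProp R :=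
  fun Y _ _ ↦ T Y ∧ ∀ g : Y →ₗ[R] X, g = 0

variable {M N X : Type} [AddCommGroup M] [Module R M] [AddCommGroup N] [Module R N]
  [AddCommGroup X] [Module R X] {T : ModuleProp R}

lemma exists_projection_ker {M N : Type*} [AddCommGroup M] [Module R M] [AddCommGroup N]
    [Module R N] {s : N →ₗ[R] M} {r : M →ₗ[R] N} (h : r ∘ₗ s = LinearMap.id) :
    ∃ p : M →ₗ[R] LinearMap.ker r, p ∘ₗ (LinearMap.ker r).subtype = LinearMap.id ∧
      ∀ x, (p x : M) = x - s (r x) := by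
  have hrs : ∀ x, r (s x) = x := LinearMap.congr_fun h
  refine ⟨(LinearMap.id - s ∘ₗ r).codRestrict _ fun x ↦ by simp [hrs], ?_, fun x ↦ rfl⟩
  ext x
  simp

namespace IsTorsionClass

lemma of_linearEquiv (hT : IsTorsionClass T) (e : M ≃ₗ[R] N) (h : T M) : T N :=
  hT.quotient e.toLinearMap e.surjective h

lemma of_subsingleton (hT : IsTorsionClass T) (h : T M) [Subsingleton N] : T N :=
  hT.quotient (0 : M →ₗ[R] N) (fun _ ↦ ⟨0, Subsingleton.elim _ _⟩) h

lemma of_exact (hT : IsTorsionClass T) {f : X →ₗ[R] M} {g : M →ₗ[R] N} (hfg : Exact f g)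
    (hg : Surjective g) (hX : T X) (hN : T N) : T M := by
  refine hT.extension g hg ?_ hN
  rw [LinearMap.exact_iff.1 hfg]
  exact hT.quotient f.rangeRestrict f.surjective_rangeRestrict hX

lemma prod (hT : IsTorsionClass T) (hM : T M) (hN : T N) : T (M × N) :=
  hT.of_exact .inl_snd LinearMap.snd_surjective hM hN

lemma pi (hT : IsTorsionClass T) (n : ℕ) (h : T M) : T (Fin n → M) := by
  induction n with
  | zero => exact hT.of_subsingleton h
  | succ n ih => exact hT.of_linearEquiv (Fin.consLinearEquiv R fun _ ↦ M) (hT.prod h ih)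

lemma of_memAdd (hT : IsTorsionClass T) (h : MemAdd R N M) (hM : T M) : T N := by
  classical
  obtain ⟨ι, _, s, r, h⟩ := h
  have e := LinearEquiv.funCongrLeft R M (Fintype.equivFin ι)
  refine hT.quotient (LinearMap.lsum R (fun _ : ι ↦ M) ℕ r) (fun n ↦ ⟨fun i ↦ s i n, ?_⟩)
    (hT.of_linearEquiv e (hT.pi _ hM))
  simpa [LinearMap.sum_apply] using LinearMap.congr_fun h n

lemma leftPerpIn (hT : IsTorsionClass T) : IsTorsionClass (leftPerpIn T X) where
  finite h := hT.finite h.1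
  quotient g hg h := ⟨hT.quotient g hg h.1, fun k ↦
    (LinearMap.cancel_right hg).1 (h.2 (k ∘ₗ g))⟩
  extension g hg h h' := ⟨hT.extension g hg h.1 h'.1, fun k ↦ by
    obtain ⟨s, rfl⟩ := exists_comp_eq_of_ker_le hg (r := k) fun m hm ↦
      LinearMap.congr_fun (h.2 (k ∘ₗ (LinearMap.ker g).subtype)) ⟨m, hm⟩
    rw [h'.2 s, LinearMap.zero_comp]⟩

end IsTorsionClass

namespace IsExtProjective

lemma of_memAdd (h : IsExtProjective T M) (ha : MemAdd R N M) : IsExtProjective T N := by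
  intro E B _ _ _ _ p hp hk g
  obtain ⟨ι, _, s, r, hrs⟩ := ha
  choose f hf using fun i ↦ h p hp hk (g ∘ₗ r i)
  refine ⟨∑ i, f i ∘ₗ s i, ?_⟩
  simp_rw [comp_sum, ← LinearMap.comp_assoc, hf, LinearMap.comp_assoc, ← comp_sum, hrs,
    LinearMap.comp_id]

lemma prod (hM : IsExtProjective T M) (hN : IsExtProjective T N) : IsExtProjective T (M × N) := by
  intro E B _ _ _ _ p hp hk g
  obtain ⟨f, hf⟩ := hM p hp hk (g ∘ₗ LinearMap.inl R M N)
  obtain ⟨f', hf'⟩ := hN p hp hk (g ∘ₗ LinearMap.inr R M N)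
  exact ⟨f.coprod f', by rw [LinearMap.comp_coprod, hf, hf', LinearMap.coprod_comp_inl_inr]⟩

lemma mono {T' : ModuleProp R} (h : IsExtProjective T M)
    (hT' : ∀ {Y : Type} [AddCommGroup Y] [Module R Y], T' Y → T Y) : IsExtProjective T' M :=
  fun _ _ _ _ _ _ p hp hk ↦ h p hp (hT' hk)

end IsExtProjective

end TorsionClasses

section Exchange

variable {T : ModuleProp R} {X U V V' : Type} [AddCommGroup X] [Module R X] [AddCommGroup U]
  [Module R U] [AddCommGroup V] [Module R V] [AddCommGroup V'] [Module R V']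

/-- `u : X → V'` is a minimal left `add V`-approximation of `X`. -/
structure IsMinimalLeftApproximation (V : Type) [AddCommGroup V] [Module R V] (u : X →ₗ[R] V') :
    Prop where
  memAdd : MemAdd R V' V
  exists_comp_eq {V₀ : Type} [AddCommGroup V₀] [Module R V₀] : MemAdd R V₀ V →
    ∀ g : X →ₗ[R] V₀, ∃ h : V' →ₗ[R] V₀, h ∘ₗ u = g
  bijective_of_comp_eq {v : Module.End R V'} : v ∘ₗ u = u → Bijective v

lemma exists_isMinimalLeftApproximation (K : Type*) [Field K] [Algebra K R] [FiniteDimensional K R]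
    (X V : Type) [AddCommGroup X] [Module R X] [AddCommGroup V] [Module R V]
    [Module.Finite R X] [Module.Finite R V] :
    ∃ (V' : ModCat R) (u : X →ₗ[R] V'), IsMinimalLeftApproximation V u := by
  have := IsArtinianRing.of_finite K R
  let S : Set (ModCat R) := {V' | MemAdd R V' V ∧ ∃ u : X →ₗ[R] V',
    ∀ φ : X →ₗ[R] V, ∃ ψ : V' →ₗ[R] V, ψ ∘ₗ u = φ}
  have hS : S.Nonempty := by
    obtain ⟨n, g, hg⟩ := exists_left_approximation R X V K
    exact ⟨.of R (Fin n → V), .pi fun _ ↦ .refl R V, g, hg⟩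
  obtain ⟨V', ⟨hV', u, hu⟩, hmin⟩ :=
    (InvImage.wf (fun V' : ModCat R ↦ Module.length R V') wellFounded_lt).has_min S hS
  have := hV'.finite
  refine ⟨V', u, hV', fun {V₀} _ _ hV₀ g ↦ ?_, fun {v} hv ↦ ?_⟩
  · obtain ⟨ι, _, s, r, hrs⟩ := hV₀
    choose l hl using fun i ↦ hu (s i ∘ₗ g)
    refine ⟨∑ i, r i ∘ₗ l i, ?_⟩
    simp_rw [sum_comp, LinearMap.comp_assoc, hl, ← LinearMap.comp_assoc, ← sum_comp, hrs,
      LinearMap.id_comp]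
  · by_contra hbij
    obtain ⟨n, r, hne, hr⟩ := exists_proper_retract_of_not_bijective hbij
    have hvn : ∀ x, (v ^ n) (u x) = u x := fun x ↦ by
      rw [Module.End.pow_apply]
      exact iterate_fixed (LinearMap.congr_fun hv x) n
    refine hmin (.of R (LinearMap.range (v ^ n))) ⟨(MemAdd.of_retract hr).trans hV',
      u.codRestrict _ fun x ↦ ⟨u x, hvn x⟩, fun φ ↦ ?_⟩ (Submodule.length_lt hne)
    obtain ⟨ψ, rfl⟩ := hu φ
    exact ⟨ψ ∘ₗ (LinearMap.range (v ^ n)).subtype, rfl⟩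

lemma exists_pullback {X V M Y : Type} [AddCommGroup X] [Module R X] [AddCommGroup V] [Module R V]
    [AddCommGroup M] [Module R M] [AddCommGroup Y] [Module R Y] {u : X →ₗ[R] V} {π : V →ₗ[R] M}
    (hπ : Surjective π) (huπ : Exact u π) (g : Y →ₗ[R] M) :
    ∃ (W : ModCat R) (κ : X →ₗ[R] W) (p₁ : W →ₗ[R] V) (p₂ : W →ₗ[R] Y),
      Surjective p₂ ∧ Exact κ p₂ ∧ p₁ ∘ₗ κ = u ∧ π ∘ₗ p₁ = g ∘ₗ p₂ := by
  let W := LinearMap.eqLocus (π ∘ₗ LinearMap.fst R V Y) (g ∘ₗ LinearMap.snd R V Y)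
  refine ⟨.of R W, (LinearMap.inl R V Y ∘ₗ u).codRestrict W fun x ↦ ?_,
    LinearMap.fst R V Y ∘ₗ W.subtype, LinearMap.snd R V Y ∘ₗ W.subtype, fun y ↦ ?_, ?_, rfl,
    LinearMap.ext fun w ↦ w.2⟩
  · simpa [W] using huπ.apply_apply_eq_zero x
  · obtain ⟨v, hv⟩ := hπ (g y)
    exact ⟨⟨(v, y), hv⟩, rfl⟩
  · rintro ⟨⟨v, y⟩, hw⟩
    refine ⟨fun (h : y = 0) ↦ ?_, fun ⟨x, hx⟩ ↦ hx ▸ rfl⟩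
    subst h
    obtain ⟨x, rfl⟩ := (huπ v).1 (hw.trans (map_zero g))
    exact ⟨x, rfl⟩

namespace IsSimpleProjectiveIn

lemma memAdd_of_isExtProgenerator (hX : IsSimpleProjectiveIn T X) (hT : IsTorsionClass T)
    (hU : IsExtProgenerator T U) : MemAdd R X U := by
  obtain ⟨U₀, hU₀, q, hq, -⟩ := hU.exists_cover hX.mem
  have := hX.nontrivial
  obtain ⟨s, hs⟩ := hX.exists_section (hT.of_memAdd hU₀ hU.mem) q
    (LinearMap.ne_zero_of_surjective hq)
  exact (MemAdd.of_retract hs).trans hU₀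

lemma bijective_of_ne_zero [IsNoetherian R X] (hX : IsSimpleProjectiveIn T X) {f : Module.End R X}
    (hf : f ≠ 0) : Bijective f := by
  obtain ⟨s, hs⟩ := hX.exists_section hX.mem f hf
  exact IsNoetherian.bijective_of_surjective_endomorphism f
    (LinearMap.surjective_of_comp_eq_id _ _ hs)

variable [IsArtinianRing R]

lemma exists_linearEquiv_pi_prod (hX : IsSimpleProjectiveIn T X) (hT : IsTorsionClass T) {Y : Type}
    [AddCommGroup Y] [Module R Y] (hY : T Y) :
    ∃ (n : ℕ) (V : ModCat R), (∀ g : V →ₗ[R] X, g = 0) ∧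
      Nonempty (Y ≃ₗ[R] (Fin n → X) × V) := by
  have := hT.finite hY
  induction hn : Module.length R Y using WellFoundedLT.induction generalizing Y with
  | ind n ih =>
  subst hn
  by_cases h0 : ∀ g : Y →ₗ[R] X, g = 0
  · exact ⟨0, .of R Y, h0, ⟨(LinearEquiv.uniqueProd (M₂ := Fin 0 → X)).symm⟩⟩
  push Not at h0
  obtain ⟨g, hg⟩ := h0
  obtain ⟨s, hs⟩ := hX.exists_section hY g hg
  let e := ((LinearMap.exact_subtype_ker_map g).splitSurjectiveEquiv
    (Submodule.subtype_injective _) ⟨s, hs⟩).1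
  have hker : T (LinearMap.ker g) :=
    hT.quotient (LinearMap.fst R (LinearMap.ker g) X) LinearMap.fst_surjective
      (hT.of_linearEquiv e hY)
  obtain ⟨n, V, hV, ⟨e'⟩⟩ := ih _
    (Submodule.length_lt fun h ↦ hg (LinearMap.ker_eq_top.1 h)) hker inferInstance rfl
  exact ⟨n + 1, V, hV, ⟨e ≪≫ₗ .prodComm R _ _ ≪≫ₗ (LinearEquiv.refl R X).prodCongr e' ≪≫ₗ
    (LinearEquiv.prodAssoc R _ _ _).symm ≪≫ₗ
    (Fin.consLinearEquiv R fun _ ↦ X).prodCongr (.refl R V)⟩⟩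

lemma exists_cover_hom_eq_zero (hX : IsSimpleProjectiveIn T X) (hT : IsTorsionClass T) {Y U₀ : Type}
    [AddCommGroup Y] [Module R Y] [AddCommGroup U₀] [Module R U₀] (hY : leftPerpIn T X Y)
    (hU₀ : T U₀) {q : U₀ →ₗ[R] Y} (hq : Surjective q) (hk : T (LinearMap.ker q)) :
    ∃ V₀ : ModCat R, MemAdd R V₀ U₀ ∧ (∀ g : V₀ →ₗ[R] X, g = 0) ∧
      ∃ q' : V₀ →ₗ[R] Y, Surjective q' ∧ T (LinearMap.ker q') := by
  have := hT.finite hU₀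
  induction hn : Module.length R U₀ using WellFoundedLT.induction generalizing U₀ with
  | ind n ih =>
  subst hn
  by_cases hz : ∀ g : U₀ →ₗ[R] X, g = 0
  · exact ⟨.of R U₀, .refl R U₀, hz, q, hq, hk⟩
  push Not at hz
  obtain ⟨c, hc⟩ := hz
  have hcq : c ∘ₗ (LinearMap.ker q).subtype ≠ 0 := fun h0 ↦ by
    obtain ⟨s, rfl⟩ := exists_comp_eq_of_ker_le hq (r := c)
      fun m hm ↦ LinearMap.congr_fun h0 ⟨m, hm⟩
    exact hc (by rw [hY.2 s, LinearMap.zero_comp])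
  obtain ⟨s, hs⟩ := hX.exists_section hk _ hcq
  obtain ⟨p, hpid, hp⟩ := exists_projection_ker (r := c) (s := (LinearMap.ker q).subtype ∘ₗ s) hs
  have hqp : ∀ x, q (p x) = q x := fun x ↦ by
    rw [hp, map_sub, sub_eq_self]
    exact (s (c x)).2
  have hcU : MemAdd R (LinearMap.ker c) U₀ := .of_retract hpid
  have hsurj : Surjective (q ∘ₗ (LinearMap.ker c).subtype) := fun y ↦ by
    obtain ⟨x, rfl⟩ := hq y
    exact ⟨p x, hqp x⟩
  have hker : T (LinearMap.ker (q ∘ₗ (LinearMap.ker c).subtype)) := by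
    refine hT.quotient ((p ∘ₗ (LinearMap.ker q).subtype).codRestrict _ fun x ↦ (hqp x).trans x.2)
      (fun x ↦ ⟨⟨x, x.2⟩, Subtype.ext (LinearMap.congr_fun hpid x)⟩) hk
  obtain ⟨V₀, hV₀, h⟩ := ih _ (Submodule.length_lt fun h ↦ hc (LinearMap.ker_eq_top.1 h))
    (hT.of_memAdd hcU hU₀) hsurj hker inferInstance rfl
  exact ⟨V₀, hV₀.trans hcU, h⟩

end IsSimpleProjectiveIn

end Exchange

section Mutation

variable {T : ModuleProp R} {X U V V' : Type} [AddCommGroup X] [Module R X] [AddCommGroup U]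
  [Module R U] [AddCommGroup V] [Module R V] [AddCommGroup V'] [Module R V'] {u : X →ₗ[R] V'}

lemma exists_prod_cover_of_exact {A B C L V₀ Y : Type*} [AddCommGroup A] [Module R A]
    [AddCommGroup B] [Module R B] [AddCommGroup C] [Module R C] [AddCommGroup L] [Module R L]
    [AddCommGroup V₀] [Module R V₀] [AddCommGroup Y] [Module R Y] {q : V₀ →ₗ[R] Y}
    (hq : Surjective q) {f : A × L →ₗ[R] LinearMap.ker q} (hf : Surjective f) {u : A →ₗ[R] B}
    {π : B →ₗ[R] C} (hπ : Surjective π) (huπ : Exact u π) {e : B →ₗ[R] V₀}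
    (he : ∀ a, e (u a) = f (a, 0)) :
    ∃ (ρ : V₀ × C →ₗ[R] Y) (σ : L × B →ₗ[R] LinearMap.ker ρ), Surjective ρ ∧ Surjective σ := by
  obtain ⟨q', hq'⟩ := exists_comp_eq_of_ker_le hπ (r := q ∘ₗ e) fun b hb ↦ by
    obtain ⟨a, rfl⟩ := (huπ b).1 hb
    rw [LinearMap.mem_ker, LinearMap.comp_apply, he]
    exact (f (a, 0)).2
  have hq'π : ∀ b, q' (π b) = q (e b) := LinearMap.congr_fun hq'
  have hqf : ∀ z, q (f z) = 0 := fun z ↦ (f z).2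
  let ρ := q.coprod q'
  let σ : L × B →ₗ[R] V₀ × C := ((LinearMap.ker q).subtype ∘ₗ f ∘ₗ LinearMap.inr R A L ∘ₗ
    LinearMap.fst R L B - e ∘ₗ LinearMap.snd R L B).prod (π ∘ₗ LinearMap.snd R L B)
  refine ⟨ρ, σ.codRestrict (LinearMap.ker ρ) fun ⟨l, b⟩ ↦ by simp [ρ, σ, hq'π, hqf], fun y ↦ ?_, ?_⟩
  · obtain ⟨v, rfl⟩ := hq y
    exact ⟨(v, 0), by simp [ρ]⟩
  · rintro ⟨⟨v, c⟩, hvc⟩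
    obtain ⟨b, rfl⟩ := hπ c
    have hv : v + e b ∈ LinearMap.ker q := by simpa [ρ, hq'π] using hvc
    obtain ⟨⟨a, l⟩, hal⟩ := hf ⟨_, hv⟩
    have hsplit : v + e b = e (u a) + f (0, l) := by
      rw [he, ← Submodule.coe_add, ← map_add, Prod.mk_add_mk, add_zero, zero_add, hal]
    refine ⟨(l, b - u a), Subtype.ext (Prod.ext ?_ ?_)⟩
    · change (f (0, l) : V₀) - e (b - u a) = v
      rw [eq_sub_of_add_eq hsplit, map_sub]
      abel
    · simp [σ, huπ.apply_apply_eq_zero]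

/-- The data for mutating the Ext-progenerator `U` of `T` at its summand `X`: a complement `V` of
the copies of `X` in `U`, and a minimal left `add V`-approximation `u : X → V'`. The mutation is
`V × coker u`. -/
structure IsMutationDatum (T : ModuleProp R) (X U V : Type) {V' : Type} [AddCommGroup X]
    [Module R X] [AddCommGroup U] [Module R U] [AddCommGroup V] [Module R V] [AddCommGroup V']
    [Module R V'] (u : X →ₗ[R] V') : Prop where
  isTorsionClass : IsTorsionClass T
  isSimpleProjectiveIn : IsSimpleProjectiveIn T X
  isExtProgenerator : IsExtProgenerator T U
  exists_linearEquiv : ∃ n : ℕ, Nonempty (U ≃ₗ[R] (Fin n → X) × V)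
  hom_eq_zero (g : V →ₗ[R] X) : g = 0
  isMinimalLeftApproximation : IsMinimalLeftApproximation V u

namespace IsMutationDatum

lemma memAdd (h : IsMutationDatum T X U V u) : MemAdd R V U := by
  obtain ⟨n, ⟨e⟩⟩ := h.exists_linearEquiv
  refine .of_retract (s := e.symm.toLinearMap ∘ₗ LinearMap.inr R (Fin n → X) V)
    (r := LinearMap.snd R (Fin n → X) V ∘ₗ e.toLinearMap) ?_
  ext
  simp

lemma memAdd_of_hom_eq_zero (h : IsMutationDatum T X U V u) {V₀ : Type} [AddCommGroup V₀]
    [Module R V₀] (hV₀ : MemAdd R V₀ U) (hX : ∀ g : V₀ →ₗ[R] X, g = 0) : MemAdd R V₀ V := by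
  obtain ⟨n, ⟨e⟩⟩ := h.exists_linearEquiv
  obtain ⟨ι, hι, s, r, hrs⟩ := hV₀
  refine ⟨ι, hι, fun i ↦ LinearMap.snd R (Fin n → X) V ∘ₗ e.toLinearMap ∘ₗ s i,
    fun i ↦ r i ∘ₗ e.symm.toLinearMap ∘ₗ LinearMap.inr R (Fin n → X) V, ?_⟩
  rw [← hrs]
  refine Finset.sum_congr rfl fun i _ ↦ LinearMap.ext fun x ↦ congrArg (r i) ?_
  have hfst : (e (s i x)).1 = 0 := funext fun j ↦ LinearMap.congr_fun
    (hX (LinearMap.proj j ∘ₗ LinearMap.fst R (Fin n → X) V ∘ₗ e.toLinearMap ∘ₗ s i)) x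
  refine e.symm_apply_eq.2 (Prod.ext hfst.symm rfl)

lemma mem_leftPerpIn (h : IsMutationDatum T X U V u) : leftPerpIn T X V :=
  ⟨h.isTorsionClass.of_memAdd h.memAdd h.isExtProgenerator.mem, h.hom_eq_zero⟩

lemma mem_leftPerpIn_target (h : IsMutationDatum T X U V u) : leftPerpIn T X V' :=
  h.isTorsionClass.leftPerpIn.of_memAdd h.isMinimalLeftApproximation.memAdd h.mem_leftPerpIn

lemma exists_cover [IsArtinianRing R] (h : IsMutationDatum T X U V u) {Y : Type} [AddCommGroup Y]
    [Module R Y] (hY : leftPerpIn T X Y) : ∃ V₀ : ModCat R, MemAdd R V₀ V ∧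
      ∃ q : V₀ →ₗ[R] Y, Surjective q ∧ T (LinearMap.ker q) := by
  obtain ⟨U₀, hU₀, q, hq, hk⟩ := h.isExtProgenerator.exists_cover hY.1
  obtain ⟨V₀, hV₀, hX, h'⟩ := h.isSimpleProjectiveIn.exists_cover_hom_eq_zero h.isTorsionClass hY
    (h.isTorsionClass.of_memAdd hU₀ h.isExtProgenerator.mem) hq hk
  exact ⟨V₀, h.memAdd_of_hom_eq_zero (hV₀.trans hU₀) hX, h'⟩

lemma exists_comp_eq [IsArtinianRing R] (h : IsMutationDatum T X U V u) {Y : Type}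
    [AddCommGroup Y] [Module R Y] (hY : leftPerpIn T X Y) (g : X →ₗ[R] Y) :
    ∃ g' : V' →ₗ[R] Y, g' ∘ₗ u = g := by
  obtain ⟨V₀, hV₀, q, hq, hk⟩ := h.exists_cover hY
  have hXU := h.isSimpleProjectiveIn.memAdd_of_isExtProgenerator h.isTorsionClass
    h.isExtProgenerator
  obtain ⟨k, rfl⟩ := (h.isExtProgenerator.isExtProjective.of_memAdd hXU) q hq hk g
  obtain ⟨k', rfl⟩ := h.isMinimalLeftApproximation.exists_comp_eq hV₀ k
  exact ⟨q ∘ₗ k', rfl⟩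

variable [IsArtinianRing R] {M W Y : Type} [AddCommGroup M] [Module R M] [AddCommGroup W]
  [Module R W] [AddCommGroup Y] [Module R Y] {π : V' →ₗ[R] M}

lemma isExtProjective (h : IsMutationDatum T X U V u) (hπ : Surjective π) (huπ : Exact u π) :
    IsExtProjective (leftPerpIn T X) M := by
  intro E B _ _ _ _ p hp hk g
  obtain ⟨f, hf⟩ := (h.isExtProgenerator.isExtProjective.of_memAdd
    (h.isMinimalLeftApproximation.memAdd.trans h.memAdd)) p hp hk.1 (g ∘ₗ π)
  have hfπ : ∀ x, p (f x) = g (π x) := LinearMap.congr_fun hf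
  obtain ⟨n, hn⟩ := h.exists_comp_eq hk ((f ∘ₗ u).codRestrict (LinearMap.ker p) fun x ↦ by
    simp [hfπ, huπ.apply_apply_eq_zero])
  obtain ⟨l, hl⟩ := exists_comp_eq_of_ker_le hπ (r := f - (LinearMap.ker p).subtype ∘ₗ n)
    fun v hv ↦ by
      obtain ⟨x, rfl⟩ := (huπ v).1 hv
      simpa [sub_eq_zero] using (congrArg Subtype.val (LinearMap.congr_fun hn x)).symm
  refine ⟨l, (LinearMap.cancel_right hπ).1 ?_⟩
  rw [LinearMap.comp_assoc, hl, LinearMap.comp_sub, hf, ← LinearMap.comp_assoc,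
    LinearMap.comp_ker_subtype, LinearMap.zero_comp, sub_zero]

lemma exists_section_of_hom_eq_zero (h : IsMutationDatum T X U V u) (hπ : Surjective π)
    (huπ : Exact u π) {g : Y →ₗ[R] M} {κ : X →ₗ[R] W} {p₁ : W →ₗ[R] V'} {p₂ : W →ₗ[R] Y}
    (hκ : Exact κ p₂) (h₁ : p₁ ∘ₗ κ = u) (h₂ : π ∘ₗ p₁ = g ∘ₗ p₂) (hW : leftPerpIn T X W) :
    ∃ s : M →ₗ[R] Y, g ∘ₗ s = LinearMap.id := by
  have := h.isTorsionClass.finite h.mem_leftPerpIn_target.1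
  have : Module.Finite R M := .of_surjective π hπ
  obtain ⟨w, hw⟩ := h.exists_comp_eq hW κ
  have hv : Bijective (p₁ ∘ₗ w) := h.isMinimalLeftApproximation.bijective_of_comp_eq (by
    rw [LinearMap.comp_assoc, hw, h₁])
  obtain ⟨t, ht⟩ := exists_comp_eq_of_ker_le hπ (r := p₂ ∘ₗ w) fun m hm ↦ by
    obtain ⟨x, rfl⟩ := (huπ m).1 hm
    have hwx : w (u x) = κ x := LinearMap.congr_fun hw x
    simp [hwx, hκ.apply_apply_eq_zero]
  have hgt : (g ∘ₗ t) ∘ₗ π = π ∘ₗ p₁ ∘ₗ w := by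
    rw [LinearMap.comp_assoc, ht, ← LinearMap.comp_assoc, ← h₂, LinearMap.comp_assoc]
  have hs : Surjective (g ∘ₗ t) := by
    refine Surjective.of_comp (g := π) ?_
    rw [← LinearMap.coe_comp, hgt]
    exact hπ.comp hv.2
  let e := LinearEquiv.ofBijective _ (IsNoetherian.bijective_of_surjective_endomorphism _ hs)
  exact ⟨t ∘ₗ e.symm.toLinearMap, LinearMap.ext fun m ↦ e.apply_symm_apply m⟩

lemma exists_lift_of_hom_ne_zero (h : IsMutationDatum T X U V u) (huπ : Exact u π)
    {g : Y →ₗ[R] M} {κ : X →ₗ[R] W} {p₁ : W →ₗ[R] V'} {p₂ : W →ₗ[R] Y} (hp₂ : Surjective p₂)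
    (hκ : Exact κ p₂) (h₁ : p₁ ∘ₗ κ = u) (h₂ : π ∘ₗ p₁ = g ∘ₗ p₂) (hY : leftPerpIn T X Y)
    {r : W →ₗ[R] X} (hr : r ≠ 0) : ∃ l : Y →ₗ[R] V', π ∘ₗ l = g := by
  have := h.isTorsionClass.finite h.isSimpleProjectiveIn.mem
  have hrκ : r ∘ₗ κ ≠ 0 := fun h0 ↦ by
    obtain ⟨t, rfl⟩ := exists_comp_eq_of_ker_le hp₂ (r := r) fun w hw ↦ by
      obtain ⟨x, rfl⟩ := (hκ w).1 hw
      exact LinearMap.congr_fun h0 x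
    exact hr (by rw [hY.2 t, LinearMap.zero_comp])
  let e := LinearEquiv.ofBijective _ (h.isSimpleProjectiveIn.bijective_of_ne_zero hrκ)
  obtain ⟨l, hl⟩ := exists_comp_eq_of_ker_le hp₂ (r := p₁ - u ∘ₗ e.symm.toLinearMap ∘ₗ r)
    fun w hw ↦ by
      obtain ⟨x, rfl⟩ := (hκ w).1 hw
      have hex : e.symm (r (κ x)) = x := e.symm_apply_apply x
      have hx : p₁ (κ x) = u x := LinearMap.congr_fun h₁ x
      simp [hex, hx]
  refine ⟨l, (LinearMap.cancel_right hp₂).1 ?_⟩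
  rw [LinearMap.comp_assoc, hl, LinearMap.comp_sub, h₂, ← LinearMap.comp_assoc,
    huπ.linearMap_comp_eq_zero, LinearMap.zero_comp, sub_zero]

lemma exists_lift_or_exists_section (h : IsMutationDatum T X U V u) (hπ : Surjective π)
    (huπ : Exact u π) (hY : leftPerpIn T X Y) (g : Y →ₗ[R] M) :
    (∃ l : Y →ₗ[R] V', π ∘ₗ l = g) ∨ ∃ s : M →ₗ[R] Y, g ∘ₗ s = LinearMap.id := by
  obtain ⟨W, κ, p₁, p₂, hp₂, hκ, h₁, h₂⟩ := exists_pullback hπ huπ g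
  have hW : T W := h.isTorsionClass.of_exact hκ hp₂ h.isSimpleProjectiveIn.mem hY.1
  by_cases hr : ∀ r : W →ₗ[R] X, r = 0
  · exact .inr (h.exists_section_of_hom_eq_zero hπ huπ hκ h₁ h₂ ⟨hW, hr⟩)
  · push Not at hr
    exact .inl (h.exists_lift_of_hom_ne_zero huπ hp₂ hκ h₁ h₂ hY hr.choose_spec)

lemma exists_prod_cover (h : IsMutationDatum T X U V u) (hπ : Surjective π)
    (huπ : Exact u π) (hY : leftPerpIn T X Y) :
    ∃ U₀ : ModCat R, MemAdd R U₀ (V × M) ∧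
      ∃ q : U₀ →ₗ[R] Y, Surjective q ∧ leftPerpIn T X (LinearMap.ker q) := by
  have hT := h.isTorsionClass
  have hT' := hT.leftPerpIn (X := X)
  obtain ⟨V₀, hV₀, q, hq, hk⟩ := h.exists_cover hY
  obtain ⟨n, L, hL, ⟨f⟩⟩ := h.isSimpleProjectiveIn.exists_linearEquiv_pi_prod hT hk
  choose e he using fun j ↦ h.isMinimalLeftApproximation.exists_comp_eq hV₀
    ((LinearMap.ker q).subtype ∘ₗ f.symm.toLinearMap ∘ₗ LinearMap.inl R (Fin n → X) L ∘ₗ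
      LinearMap.single R (fun _ ↦ X) j)
  have hexact : Exact (u.compLeft (Fin n)) (π.compLeft (Fin n)) := fun b ↦ by
    simp only [funext_iff, LinearMap.compLeft_apply, comp_apply, Pi.zero_apply, huπ _,
      Set.mem_range]
    exact Classical.skolem
  have hext (a : Fin n → X) : (∑ j, e j ∘ₗ LinearMap.proj j) (u.compLeft (Fin n) a) =
      f.symm (a, 0) := by
    have hej (j) (x : X) : e j (u x) = f.symm (Pi.single j x, 0) := LinearMap.congr_fun (he j) x
    simp only [LinearMap.sum_apply, LinearMap.comp_apply, LinearMap.proj_apply,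
      LinearMap.compLeft_apply, comp_apply, hej]
    rw [← Submodule.coe_sum, ← map_sum, ← prod_mk_sum, Finset.univ_sum_single,
      Finset.sum_const_zero]
  obtain ⟨ρ, σ, hρ, hσ⟩ := exists_prod_cover_of_exact hq (f := f.symm.toLinearMap)
    f.symm.surjective hπ.comp_left hexact hext
  have hLT : leftPerpIn T X L :=
    ⟨hT.quotient (LinearMap.snd R (Fin n → X) L) LinearMap.snd_surjective
      (hT.of_linearEquiv f hk), hL⟩
  refine ⟨.of R (V₀ × (Fin n → M)), ?_, ρ, hρ,
    hT'.quotient σ hσ (hT'.prod hLT (hT'.pi n h.mem_leftPerpIn_target))⟩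
  exact (hV₀.trans (.of_retract (LinearMap.fst_comp_inl R V M))).prod
    (.pi fun _ ↦ .of_retract (LinearMap.snd_comp_inr R V M))

lemma isExtProgenerator_prod (h : IsMutationDatum T X U V u) (hπ : Surjective π)
    (huπ : Exact u π) : IsExtProgenerator (leftPerpIn T X) (V × M) where
  mem := h.isTorsionClass.leftPerpIn.prod h.mem_leftPerpIn
    (h.isTorsionClass.leftPerpIn.quotient π hπ h.mem_leftPerpIn_target)
  isExtProjective := ((h.isExtProgenerator.isExtProjective.of_memAdd h.memAdd).mono
    fun hY ↦ hY.1).prod (h.isExtProjective hπ huπ)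
  exists_cover hY := h.exists_prod_cover hπ huπ hY

lemma exists_isSimpleProjectiveIn_or (h : IsMutationDatum T X U V u) (hπ : Surjective π)
    (huπ : Exact u π) {T' : ModuleProp R}
    (hle : ∀ {Y : Type} [AddCommGroup Y] [Module R Y], T' Y → leftPerpIn T X Y)
    (hq : ∀ {Y Z : Type} [AddCommGroup Y] [Module R Y] [AddCommGroup Z] [Module R Z]
      (g : Y →ₗ[R] Z), Surjective g → T' Y → T' Z) (hY : T' Y) {g : Y →ₗ[R] V × M} (hg : g ≠ 0) :
    (∃ X' : ModCat R, IsSimpleProjectiveIn T' X') ∨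
      ∃ (Z : ModCat R) (f : Z →ₗ[R] U), T' Z ∧ f ≠ 0 := by
  by_cases hU : ∃ (Z : ModCat R) (f : Z →ₗ[R] U), T' Z ∧ f ≠ 0
  · exact .inr hU
  push Not at hU
  have hV (Z : Type) [AddCommGroup Z] [Module R Z] (hZ : T' Z) {N : Type} [AddCommGroup N]
      [Module R N] (hN : MemAdd R N V) (f : Z →ₗ[R] N) : f = 0 :=
    (hN.trans h.memAdd).eq_zero_of_target (fun k ↦ hU (.of R Z) k hZ) f
  have hsec (Z : Type) [AddCommGroup Z] [Module R Z] (hZ : T' Z) (f : Z →ₗ[R] M) (hf : f ≠ 0) :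
      ∃ s : M →ₗ[R] Z, f ∘ₗ s = LinearMap.id :=
    (h.exists_lift_or_exists_section hπ huπ (hle hZ) f).resolve_left fun ⟨l, hl⟩ ↦
      hf (by rw [← hl, hV Z hZ h.isMinimalLeftApproximation.memAdd l, LinearMap.comp_zero])
  have hg₂ : LinearMap.snd R V M ∘ₗ g ≠ 0 := fun h₂ ↦ hg <| LinearMap.ext fun y ↦
    Prod.ext (LinearMap.congr_fun (hV Y hY (.refl R V) (LinearMap.fst R V M ∘ₗ g)) y)
      (LinearMap.congr_fun h₂ y)
  obtain ⟨s, hs⟩ := hsec Y hY _ hg₂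
  refine .inl ⟨.of R M, ?_, hq _ (LinearMap.surjective_of_comp_eq_id _ _ hs) hY,
    fun hZ f hf ↦ hsec _ hZ f hf⟩
  obtain ⟨y, hy⟩ := DFunLike.ne_iff.1 hg₂
  exact ⟨_, _, hy⟩

end IsMutationDatum

lemma exists_mutation (K : Type*) [Field K] [Algebra K R] [FiniteDimensional K R]
    (hT : IsTorsionClass T) (hX : IsSimpleProjectiveIn T X) (hU : IsExtProgenerator T U) :
    ∃ U' : ModCat R, IsExtProgenerator (leftPerpIn T X) U' ∧ ∀ T' : ModuleProp R,
      (∀ {Y : Type} [AddCommGroup Y] [Module R Y], T' Y → leftPerpIn T X Y) →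
      (∀ {Y Z : Type} [AddCommGroup Y] [Module R Y] [AddCommGroup Z] [Module R Z]
        (g : Y →ₗ[R] Z), Surjective g → T' Y → T' Z) →
      ∀ (Y : ModCat R) (g : Y →ₗ[R] U'), T' Y → g ≠ 0 →
        (∃ X' : ModCat R, IsSimpleProjectiveIn T' X') ∨
          ∃ (Z : ModCat R) (f : Z →ₗ[R] U), T' Z ∧ f ≠ 0 := by
  have := IsArtinianRing.of_finite K R
  obtain ⟨n, V, hV, ⟨e⟩⟩ := hX.exists_linearEquiv_pi_prod hT hU.mem
  have := hT.finite hX.mem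
  have : Module.Finite R V := hT.finite <| hT.quotient (LinearMap.snd R (Fin n → X) V)
    LinearMap.snd_surjective (hT.of_linearEquiv e hU.mem)
  obtain ⟨V', u, hu⟩ := exists_isMinimalLeftApproximation (R := R) K X V
  have h : IsMutationDatum T X U V u := ⟨hT, hX, hU, ⟨n, ⟨e⟩⟩, hV, hu⟩
  have hπ := (LinearMap.range u).mkQ_surjective
  have huπ : Exact u (LinearMap.range u).mkQ := LinearMap.exact_map_mkQ_range u
  exact ⟨.of R (V × (V' ⧸ LinearMap.range u)), h.isExtProgenerator_prod hπ huπ,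
    fun T' hle hq Y g hY hg ↦ h.exists_isSimpleProjectiveIn_or hπ huπ hle hq hY hg⟩

end Mutation

section Rigidity

variable {M N L V P Q : Type} [AddCommGroup M] [Module R M] [AddCommGroup N] [Module R N]
  [AddCommGroup L] [Module R L] [AddCommGroup V] [Module R V] [AddCommGroup P] [Module R P]
  [AddCommGroup Q] [Module R Q] {f : P →ₗ[R] Q} {g : Q →ₗ[R] M}

/-- `Fac M`: the quotients of finite direct powers of `M`. -/
def Fac (M : Type) [AddCommGroup M] [Module R M] : ModuleProp R :=
  fun Y _ _ ↦ ∃ (ι : Type) (_ : Fintype ι) (t : (ι → M) →ₗ[R] Y), Surjective t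

/-- `P → Q → M → 0` is a presentation of `M` by finitely generated projective modules. -/
structure IsProjectivePresentation (f : P →ₗ[R] Q) (g : Q →ₗ[R] M) : Prop where
  projective₁ : Module.Projective R P
  projective₀ : Module.Projective R Q
  finite₁ : Module.Finite R P
  finite₀ : Module.Finite R Q
  surjective : Surjective g
  exact : Exact f g

/-- The class of modules `Y` such that every map `P → Y` extends along `f : P → Q`. When `f` is the
minimal projective presentation of `M`, this is the class `Hom(Y, τM) = 0`. -/
def ExtendsAlong (f : P →ₗ[R] Q) : ModuleProp R :=
  fun Y _ _ ↦ ∀ φ : P →ₗ[R] Y, ∃ k : Q →ₗ[R] Y, k ∘ₗ f = φ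

variable (R) in
/-- `M` is τ-rigid: the unbundled form of `IsTauRigidMod`. -/
def IsTauRigid (M : Type) [AddCommGroup M] [Module R M] : Prop :=
  ∃ (P₁ P₀ : ModCat R) (f : P₁ →ₗ[R] P₀) (g : P₀ →ₗ[R] M),
    IsProjectivePresentation f g ∧ ExtendsAlong f M

namespace Fac

lemma of_surjective {t : M →ₗ[R] N} (ht : Surjective t) : Fac (R := R) M N :=
  ⟨Unit, inferInstance, t ∘ₗ LinearMap.proj (), ht.comp fun x ↦ ⟨fun _ ↦ x, rfl⟩⟩

lemma trans (h : Fac (R := R) M N) (h' : Fac (R := R) N L) : Fac (R := R) M L := by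
  obtain ⟨ι, _, t, ht⟩ := h
  obtain ⟨κ, _, s, hs⟩ := h'
  refine ⟨κ × ι, inferInstance, s ∘ₗ t.compLeft κ ∘ₗ (LinearEquiv.curry R M κ ι).toLinearMap, ?_⟩
  exact hs.comp (ht.comp_left.comp (LinearEquiv.curry R M κ ι).surjective)

lemma quotient (h : Fac (R := R) M N) {t : N →ₗ[R] L} (ht : Surjective t) : Fac (R := R) M L :=
  h.trans (of_surjective ht)

lemma of_memAdd (h : MemAdd R N V) : Fac (R := R) V N := by
  classical
  obtain ⟨ι, _, s, r, h⟩ := h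
  refine ⟨ι, inferInstance, LinearMap.lsum R (fun _ : ι ↦ V) ℕ r, fun n ↦ ⟨fun i ↦ s i n, ?_⟩⟩
  simpa [LinearMap.sum_apply] using LinearMap.congr_fun h n

end Fac

namespace ExtendsAlong

lemma of_surjective [Module.Projective R P] (h : ExtendsAlong f M) {t : M →ₗ[R] N}
    (ht : Surjective t) : ExtendsAlong f N := fun φ ↦ by
  obtain ⟨φ, rfl⟩ := Module.projective_lifting_property t φ ht
  obtain ⟨k, rfl⟩ := h φ
  exact ⟨t ∘ₗ k, LinearMap.comp_assoc ..⟩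

lemma of_ker [Module.Projective R Q] {t : M →ₗ[R] N} (ht : Surjective t)
    (h : ExtendsAlong f (LinearMap.ker t)) (h' : ExtendsAlong f N) : ExtendsAlong f M := fun φ ↦ by
  obtain ⟨k, hk⟩ := h' (t ∘ₗ φ)
  obtain ⟨k, rfl⟩ := Module.projective_lifting_property t k ht
  obtain ⟨l, hl⟩ := h ((φ - k ∘ₗ f).codRestrict _ fun x ↦ by
    simpa [sub_eq_zero] using (LinearMap.congr_fun hk x).symm)
  refine ⟨k + (LinearMap.ker t).subtype ∘ₗ l, ?_⟩
  rw [LinearMap.add_comp, LinearMap.comp_assoc, hl, LinearMap.subtype_comp_codRestrict,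
    add_sub_cancel]

lemma pi {ι : Type} (h : ExtendsAlong f M) : ExtendsAlong f (ι → M) := fun φ ↦ by
  choose k hk using fun i ↦ h (LinearMap.proj i ∘ₗ φ)
  exact ⟨LinearMap.pi k, LinearMap.ext fun x ↦ funext fun i ↦ LinearMap.congr_fun (hk i) x⟩

lemma of_fac [Module.Projective R P] (h : ExtendsAlong f M) (hN : Fac (R := R) M N) :
    ExtendsAlong f N := by
  obtain ⟨ι, _, t, ht⟩ := hN
  exact h.pi.of_surjective ht

lemma isTorsionClass [Module.Projective R P] [Module.Projective R Q] (f : P →ₗ[R] Q) :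
    IsTorsionClass (R := R) fun Y _ _ ↦ Module.Finite R Y ∧ ExtendsAlong f Y where
  finite h := h.1
  quotient t ht h := by
    have := h.1
    exact ⟨Module.Finite.of_surjective t ht, h.2.of_surjective ht⟩
  extension t ht h h' := by
    have := h.1
    have := h'.1
    have := Module.Finite.equiv (t.quotKerEquivOfSurjective ht).symm
    exact ⟨.of_submodule_quotient (LinearMap.ker t), of_ker ht h.2 h'.2⟩

end ExtendsAlong

lemma IsProjectivePresentation.isExtProjective (h : IsProjectivePresentation f g)
    {T : ModuleProp R}
    (hT : ∀ {Y : Type} [AddCommGroup Y] [Module R Y], T Y → ExtendsAlong f Y) :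
    IsExtProjective T M := by
  have := h.projective₀
  intro E B _ _ _ _ p hp hk φ
  obtain ⟨l, hl⟩ := Module.projective_lifting_property p (φ ∘ₗ g) hp
  have hlf : ∀ x, p (l (f x)) = 0 := fun x ↦ by
    rw [← LinearMap.comp_apply, hl, LinearMap.comp_apply, h.exact.apply_apply_eq_zero, map_zero]
  obtain ⟨k, hk⟩ := hT hk ((l ∘ₗ f).codRestrict _ hlf)
  obtain ⟨s, hs⟩ := exists_comp_eq_of_ker_le h.surjective
    (r := l - (LinearMap.ker p).subtype ∘ₗ k) fun x hx ↦ by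
      obtain ⟨y, rfl⟩ := (h.exact x).1 hx
      have hky : (k (f y) : E) = l (f y) := congrArg Subtype.val (LinearMap.congr_fun hk y)
      simp [hky]
  refine ⟨s, (LinearMap.cancel_right h.surjective).1 ?_⟩
  rw [LinearMap.comp_assoc, hs, LinearMap.comp_sub, hl, ← LinearMap.comp_assoc,
    LinearMap.comp_ker_subtype, LinearMap.zero_comp]
  exact sub_zero (φ ∘ₗ g)

lemma IsTauRigid.isExtProjective (h : IsTauRigid R M) : IsExtProjective (Fac (R := R) M) M := by
  obtain ⟨P₁, P₀, f, g, hfg, hM⟩ := h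
  have := hfg.projective₁
  exact hfg.isExtProjective hM.of_fac

lemma exists_pushout (hg : Surjective g) (hfg : Exact f g) {ψ : P →ₗ[R] N}
    (hψ : LinearMap.ker f ≤ LinearMap.ker ψ) :
    ∃ (E : ModCat R) (j : N →ₗ[R] E) (c : Q →ₗ[R] E) (p : E →ₗ[R] M), Injective j ∧
      Surjective p ∧ Exact j p ∧ c ∘ₗ f = j ∘ₗ ψ ∧ p ∘ₗ c = g := by
  let G : Submodule R (Q × N) := LinearMap.range (f.prod (-ψ))
  have hG : ∀ x : P, ((f x, -ψ x) : Q × N) ∈ G := fun x ↦ ⟨x, rfl⟩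
  let p : ((Q × N) ⧸ G) →ₗ[R] M := G.liftQ (g ∘ₗ LinearMap.fst R Q N) <| by
    rintro _ ⟨x, rfl⟩
    simpa using hfg.apply_apply_eq_zero x
  refine ⟨.of R ((Q × N) ⧸ G), G.mkQ ∘ₗ LinearMap.inr R Q N, G.mkQ ∘ₗ LinearMap.inl R Q N, p,
    ?_, fun m ↦ ?_, ?_, ?_, LinearMap.ext fun x ↦ rfl⟩
  · rw [injective_iff_map_eq_zero]
    intro n hn
    obtain ⟨x, hx⟩ := (Submodule.Quotient.mk_eq_zero G).1 hn
    have hfx : f x = 0 := congrArg Prod.fst hx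
    rw [← show -ψ x = n from congrArg Prod.snd hx, show ψ x = 0 from hψ hfx, neg_zero]
  · obtain ⟨x, rfl⟩ := hg m
    exact ⟨G.mkQ (x, 0), rfl⟩
  · intro e
    obtain ⟨⟨x, n⟩, rfl⟩ := G.mkQ_surjective e
    refine ⟨fun hx ↦ ?_, ?_⟩
    · obtain ⟨y, rfl⟩ := (hfg x).1 hx
      exact ⟨n + ψ y, (Submodule.Quotient.eq G).2 (by simpa using hG (-y))⟩
    · rintro ⟨n', hn'⟩
      rw [← hn']
      exact map_zero g
  · ext x
    exact (Submodule.Quotient.eq G).2 (by simpa using hG x)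

lemma IsExtProjective.exists_extension {T : ModuleProp R} (h : IsExtProjective T M)
    (hT : ∀ {Y Z : Type} [AddCommGroup Y] [Module R Y] [AddCommGroup Z] [Module R Z]
      (_ : Y ≃ₗ[R] Z), T Y → T Z) (hN : T N) (hg : Surjective g) (hfg : Exact f g)
    {ψ : P →ₗ[R] N} (hψ : LinearMap.ker f ≤ LinearMap.ker ψ) : ∃ k : Q →ₗ[R] N, k ∘ₗ f = ψ := by
  obtain ⟨E, j, c, p, hj, hp, hjp, hcf, hpc⟩ := exists_pushout hg hfg hψ
  have hker : T (LinearMap.ker p) := by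
    rw [hjp.linearMap_ker_eq]
    exact hT (LinearEquiv.ofInjective j hj) hN
  obtain ⟨s, hs⟩ := h p hp hker LinearMap.id
  have hd : ∀ x, (c - s ∘ₗ g) x ∈ LinearMap.range j := fun x ↦ (hjp _).1 <| by
    have hpcx : p (c x) = g x := LinearMap.congr_fun hpc x
    have hpsx : p (s (g x)) = g x := LinearMap.congr_fun hs (g x)
    rw [LinearMap.sub_apply, map_sub, LinearMap.comp_apply, hpcx, hpsx, sub_self]
  let e := LinearEquiv.ofInjective j hj
  refine ⟨e.symm.toLinearMap ∘ₗ (c - s ∘ₗ g).codRestrict _ hd, LinearMap.ext fun x ↦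
    e.symm_apply_eq.2 (Subtype.ext ?_)⟩
  simpa [e, hfg.apply_apply_eq_zero] using LinearMap.congr_fun hcf x

/-- For a minimal presentation of `M`, `Ext¹(M, Fac N) = 0` forces `Hom(N, τM) = 0`. -/
lemma IsProjectivePresentation.extendsAlong_of_isExtProjective [IsArtinian R N] [IsNoetherian R N]
    (h : IsProjectivePresentation f g)
    (hmin : ∀ L : Submodule R P, L ⊔ LinearMap.ker f = ⊤ → L = ⊤)
    (hN : IsExtProjective (Fac (R := R) N) M) : ExtendsAlong f N := by
  have := h.projective₀
  intro φ
  induction hn : Module.length R (LinearMap.range φ) using WellFoundedLT.induction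
    generalizing φ with | ind n ih
  subst hn
  let D := (LinearMap.ker f).map φ
  have hD : D ≤ LinearMap.range φ := LinearMap.map_le_range
  obtain ⟨k, hk⟩ := hN.exists_extension (fun e h ↦ h.quotient e.surjective)
    (Fac.of_surjective D.mkQ_surjective) h.surjective h.exact (ψ := D.mkQ ∘ₗ φ) fun x hx ↦
      (Submodule.Quotient.mk_eq_zero D).2 ⟨x, hx, rfl⟩
  obtain ⟨k, rfl⟩ := Module.projective_lifting_property D.mkQ k D.mkQ_surjective
  by_cases hDr : D = LinearMap.range φ
  · have htop : LinearMap.ker φ = ⊤ := by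
      refine hmin _ (eq_top_iff.2 fun x _ ↦ ?_)
      obtain ⟨y, hy, hyx⟩ : φ x ∈ D := hDr ▸ ⟨x, rfl⟩
      rw [← sub_add_cancel x y]
      exact Submodule.add_mem_sup (by simp [hyx]) hy
    exact ⟨0, by rw [LinearMap.ker_eq_top.1 htop, LinearMap.zero_comp]⟩
  · have hr : LinearMap.range (φ - k ∘ₗ f) ≤ D := by
      rintro _ ⟨x, rfl⟩
      rw [← Submodule.ker_mkQ D, LinearMap.mem_ker, LinearMap.sub_apply, map_sub, sub_eq_zero]
      exact (LinearMap.congr_fun hk x).symm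
    have hlt : Module.length R (LinearMap.range (φ - k ∘ₗ f)) <
        Module.length R (LinearMap.range φ) :=
      by simpa only [Module.length_submodule] using
        Submodule.height_strictMono (hr.trans_lt (lt_of_le_of_ne hD hDr))
    obtain ⟨l, hl⟩ := ih _ hlt _ rfl
    exact ⟨k + l, by rw [LinearMap.add_comp, hl, add_sub_cancel]⟩

variable [IsArtinianRing R]

variable (R M) in
lemma exists_projectiveCover [Module.Finite R M] :
    ∃ (P : ModCat R) (g : P →ₗ[R] M), Module.Projective R P ∧ Module.Finite R P ∧ Surjective g ∧
      ∀ L : Submodule R P, L ⊔ LinearMap.ker g = ⊤ → L = ⊤ := by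
  let S : Set (ModCat R) := {P | Module.Projective R P ∧ Module.Finite R P ∧
    ∃ g : P →ₗ[R] M, Surjective g}
  have hS : S.Nonempty := by
    obtain ⟨n, g, hg⟩ := Module.Finite.exists_fin' R M
    exact ⟨.of R (Fin n → R), inferInstance, inferInstance, g, hg⟩
  obtain ⟨P, ⟨hP, hPf, g, hg⟩, hmin⟩ :=
    (InvImage.wf (fun P : ModCat R ↦ Module.length R P) wellFounded_lt).has_min S hS
  refine ⟨P, g, hP, hPf, hg, fun L hL ↦ ?_⟩
  have hgL : Surjective (g ∘ₗ L.subtype) := fun m ↦ by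
    obtain ⟨x, rfl⟩ := hg m
    obtain ⟨l, hl, z, hz, rfl⟩ := Submodule.mem_sup.1 (hL ▸ Submodule.mem_top (x := x))
    exact ⟨⟨l, hl⟩, by simp [LinearMap.mem_ker.1 hz]⟩
  obtain ⟨s, hs⟩ := Module.projective_lifting_property _ g hgL
  let v : Module.End R P := L.subtype ∘ₗ s
  have hvn : ∀ n, g ∘ₗ (v ^ n) = g := fun n ↦ by
    induction n with
    | zero => rfl
    | succ n ih => rw [pow_succ, Module.End.mul_eq_comp, ← LinearMap.comp_assoc, ih,
        ← LinearMap.comp_assoc, hs]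
  suffices hv : Bijective v by
    refine eq_top_iff.2 fun x _ ↦ ?_
    obtain ⟨y, rfl⟩ := hv.2 x
    exact (s y).2
  by_contra hv
  obtain ⟨n, r, hne, hr⟩ := exists_proper_retract_of_not_bijective hv
  refine hmin (.of R (LinearMap.range (v ^ n))) ⟨.of_split _ r hr, inferInstance,
    g ∘ₗ (LinearMap.range (v ^ n)).subtype, fun m ↦ ?_⟩ (Submodule.length_lt hne)
  obtain ⟨x, rfl⟩ := hg m
  exact ⟨⟨_, x, rfl⟩, LinearMap.congr_fun (hvn n) x⟩

variable (R M) in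
lemma exists_minimal_projectivePresentation [Module.Finite R M] :
    ∃ (P₁ P₀ : ModCat R) (f : P₁ →ₗ[R] P₀) (g : P₀ →ₗ[R] M), IsProjectivePresentation f g ∧
      ∀ L : Submodule R P₁, L ⊔ LinearMap.ker f = ⊤ → L = ⊤ := by
  obtain ⟨P₀, g, hP₀, hP₀f, hg, -⟩ := exists_projectiveCover R M
  obtain ⟨P₁, f, hP₁, hP₁f, hf, hmin⟩ := exists_projectiveCover R (LinearMap.ker g)
  refine ⟨P₁, P₀, (LinearMap.ker g).subtype ∘ₗ f, g, ⟨hP₁, hP₀, hP₁f, hP₀f, hg, ?_⟩, ?_⟩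
  · rw [LinearMap.exact_iff, LinearMap.range_comp_of_range_eq_top _ (LinearMap.range_eq_top.2 hf),
      Submodule.range_subtype]
  · rwa [LinearMap.ker_comp_of_ker_eq_bot _ (Submodule.ker_subtype _)]

lemma IsTauRigid.of_isExtProjective [Module.Finite R M]
    (h : IsExtProjective (Fac (R := R) M) M) : IsTauRigid R M := by
  obtain ⟨P₁, P₀, f, g, hfg, hmin⟩ := exists_minimal_projectivePresentation R M
  exact ⟨P₁, P₀, f, g, hfg, hfg.extendsAlong_of_isExtProjective hmin h⟩

lemma IsTauRigid.of_memAdd [Module.Finite R V] (h : IsTauRigid R V) (ha : MemAdd R N V) :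
    IsTauRigid R N :=
  have := ha.finite
  .of_isExtProjective <| (h.isExtProjective.of_memAdd ha).mono fun hY ↦ (Fac.of_memAdd ha).trans hY

end Rigidity

section Translation

lemma projective_iff (P : ModCat R) : Projective P ↔ Module.Projective R P :=
  (IsProjective.iff_projective (R := R) P).symm

lemma isTauRigidMod_iff (M : ModCat R) : IsTauRigidMod M ↔ IsTauRigid R M := by
  constructor
  · rintro ⟨P₁, P₀, f, g, h₁, h₀, hf₁, hf₀, hg, hfg, hM⟩
    refine ⟨P₁, P₀, f.hom, g.hom, ⟨(projective_iff _).1 h₁, (projective_iff _).1 h₀, hf₁, hf₀, hg,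
      hfg⟩, fun φ ↦ ?_⟩
    obtain ⟨k, hk⟩ := hM (ModuleCat.ofHom φ)
    exact ⟨k.hom, congrArg ModuleCat.Hom.hom hk⟩
  · rintro ⟨P₁, P₀, f, g, ⟨h₁, h₀, hf₁, hf₀, hg, hfg⟩, hM⟩
    refine ⟨P₁, P₀, ModuleCat.ofHom f, ModuleCat.ofHom g, (projective_iff _).2 h₁,
      (projective_iff _).2 h₀, hf₁, hf₀, hg, hfg, fun φ ↦ ?_⟩
    obtain ⟨k, hk⟩ := hM φ.hom
    exact ⟨ModuleCat.ofHom k, ModuleCat.hom_ext hk⟩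

lemma isZero_iff_subsingleton (M : ModCat R) : IsZero M ↔ Subsingleton M :=
  ⟨fun h ↦ ModuleCat.subsingleton_of_isZero h, fun _ ↦ ModuleCat.isZero_of_subsingleton M⟩

lemma nonempty_iso_iff (M N : ModCat R) : Nonempty (M ≅ N) ↔ Nonempty (M ≃ₗ[R] N) :=
  ⟨fun ⟨e⟩ ↦ ⟨e.toLinearEquiv⟩, fun ⟨e⟩ ↦ ⟨e.toModuleIso⟩⟩

lemma nonempty_iso_biprod_iff (M A B : ModCat R) :
    Nonempty (M ≅ A ⊞ B) ↔ Nonempty (M ≃ₗ[R] A × B) := by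
  let e := (ModuleCat.biprodIsoProd A B).toLinearEquiv
  rw [nonempty_iso_iff]
  exact ⟨fun ⟨i⟩ ↦ ⟨i.trans e⟩, fun ⟨i⟩ ↦ ⟨i.trans e.symm⟩⟩

lemma isIndecMod_iff (M : ModCat R) : IsIndecMod M ↔ IsIndecomposable R M := by
  simp_rw [IsIndecMod, IsIndecomposable, isZero_iff_subsingleton, not_subsingleton_iff_nontrivial,
    nonempty_iso_biprod_iff]
  refine and_congr Iff.rfl ⟨fun h e he ↦ ?_, fun h A B ⟨i⟩ ↦ ?_⟩
  · have hc : IsCompl (LinearMap.range e) (LinearMap.ker e) := LinearMap.IsIdempotentElem.isCompl he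
    refine (h (.of R (LinearMap.range e)) (.of R (LinearMap.ker e))
      ⟨(Submodule.prodEquivOfIsCompl _ _ hc).symm⟩).imp (fun h₀ ↦ ?_) fun h₀ ↦ ?_
    · exact LinearMap.range_eq_bot.1 (Submodule.subsingleton_iff_eq_bot.1 h₀)
    · have hker : LinearMap.ker e = ⊥ := Submodule.subsingleton_iff_eq_bot.1 h₀
      exact LinearMap.ext fun x ↦ LinearMap.ker_eq_bot.1 hker (LinearMap.congr_fun he x)
  · let e : Module.End R M := i.symm.toLinearMap ∘ₗ LinearMap.inl R A B ∘ₗ LinearMap.fst R A B ∘ₗ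
      i.toLinearMap
    refine (h e (LinearMap.ext fun x ↦ by simp [e])).imp (fun he ↦ ?_) fun he ↦ ?_ <;>
      refine subsingleton_of_forall_eq 0 fun a ↦ ?_
    · simpa [e] using congrArg (fun z ↦ (i z).1) (LinearMap.congr_fun he (i.symm (a, 0)))
    · simpa [e] using congrArg (fun z ↦ (i z).2) (LinearMap.congr_fun he (i.symm (0, a))).symm

lemma memAddMod_iff (N M : ModCat R) : MemAddMod N M ↔ MemAdd R N M := by
  classical
  constructor
  · rintro ⟨k, g, h, hgh⟩
    let e := (ModuleCat.biproductIsoPi (fun _ : Fin k ↦ M)).toLinearEquiv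
    refine .trans (.of_retract (s := e.toLinearMap ∘ₗ g.hom) (r := h.hom ∘ₗ e.symm.toLinearMap) ?_)
      (.pi (W := fun _ : Fin k ↦ M) fun _ ↦ .refl R M)
    ext x
    simpa using congrArg (fun t ↦ t.hom x) hgh
  · rintro ⟨ι, _, s, r, hrs⟩
    let σ := (Fintype.equivFin ι).symm
    let e := ModuleCat.biproductIsoPi (fun _ : Fin (Fintype.card ι) ↦ M)
    refine ⟨Fintype.card ι, ModuleCat.ofHom (LinearMap.pi fun i ↦ s (σ i)) ≫ e.inv,
      e.hom ≫ ModuleCat.ofHom (LinearMap.lsum R (fun _ ↦ (M : Type)) ℕ fun i ↦ r (σ i)), ?_⟩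
    rw [Category.assoc, e.inv_hom_id_assoc]
    ext x
    rw [← Equiv.sum_comp σ] at hrs
    simpa [LinearMap.sum_apply] using LinearMap.congr_fun hrs x

end Translation

section KrullSchmidt

variable {M N V P : Type*} [AddCommGroup M] [Module R M] [AddCommGroup N] [Module R N]
  [AddCommGroup V] [Module R V] [AddCommGroup P] [Module R P]

variable (R M N) in
lemma MemAdd.prod_left : MemAdd R M (M × N) :=
  .of_retract (LinearMap.fst_comp_inl R M N)

variable (R M N) in
lemma MemAdd.prod_right : MemAdd R N (M × N) :=
  .of_retract (LinearMap.snd_comp_inr R M N)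

lemma MemAdd.of_projective [Module.Finite R P] [Module.Projective R P] : MemAdd R P R := by
  obtain ⟨n, g, hg⟩ := Module.Finite.exists_fin' R P
  obtain ⟨h, hh⟩ := Module.projective_lifting_property g LinearMap.id hg
  exact .trans (.of_retract hh) (.pi fun _ ↦ .refl R R)

lemma MemAdd.proj {ι : Type*} {W : ι → Type*} [∀ i, AddCommGroup (W i)] [∀ i, Module R (W i)]
    (i : ι) : MemAdd R (W i) (∀ i, W i) := by
  classical
  exact .of_retract (LinearMap.proj_comp_single_same R W i)

lemma projective_pi {ι : Type*} [Finite ι] {W : ι → Type*} [∀ i, AddCommGroup (W i)]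
    [∀ i, Module R (W i)] [∀ i, Module.Projective R (W i)] : Module.Projective R (∀ i, W i) := by
  classical
  have := Fintype.ofFinite ι
  exact .of_equiv (DFinsupp.linearEquivFunOnFintype (R := R) (M := W))

lemma MemAdd.projective [Module.Projective R N] (h : MemAdd R P N) : Module.Projective R P := by
  obtain ⟨ι, _, s, r, h⟩ := h
  have : Module.Projective R (ι → N) := projective_pi
  refine .of_split (LinearMap.pi s) (∑ i, r i ∘ₗ (LinearMap.proj i : (ι → N) →ₗ[R] N)) ?_
  ext x
  simpa [LinearMap.sum_apply] using LinearMap.congr_fun h x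

/-- The Krull–Schmidt theorem. -/
lemma IsIndecomposable.exists_linearEquiv_of_memAdd_pi [IsArtinian R P] [IsNoetherian R P]
    (hP : IsIndecomposable R P) {ι : Type*} [Finite ι] {W : ι → Type*} [∀ i, AddCommGroup (W i)]
    [∀ i, Module R (W i)] (hW : ∀ i, IsIndecomposable R (W i)) (h : MemAdd R P (∀ i, W i)) :
    ∃ i, Nonempty (P ≃ₗ[R] W i) := by
  classical
  have := Fintype.ofFinite ι
  obtain ⟨s, r, hrs⟩ := h.exists_retract hP
  have hsum : ∑ i, (r ∘ₗ LinearMap.single R W i) ∘ₗ (LinearMap.proj i ∘ₗ s) = LinearMap.id := by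
    ext x
    simpa [LinearMap.sum_apply, ← map_sum, Finset.univ_sum_single] using LinearMap.congr_fun hrs x
  obtain ⟨i, -, hi⟩ := hP.exists_bijective_of_sum (by rw [hsum]; exact bijective_id)
  let e := LinearEquiv.ofBijective _ hi
  have := hP.1
  obtain ⟨hbij, -⟩ := (hW i).bijective_of_retract (s := LinearMap.proj i ∘ₗ s)
    (r := e.symm.toLinearMap ∘ₗ r ∘ₗ LinearMap.single R W i) (LinearMap.ext e.symm_apply_apply)
  exact ⟨i, ⟨.ofBijective _ hbij⟩⟩

end KrullSchmidt

section Bongartz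

variable {M N P Q P' Q' Y Z : Type} [AddCommGroup M] [Module R M] [AddCommGroup N] [Module R N]
  [AddCommGroup P] [Module R P] [AddCommGroup Q] [Module R Q] [AddCommGroup P'] [Module R P']
  [AddCommGroup Q'] [Module R Q'] [AddCommGroup Y] [Module R Y] [AddCommGroup Z] [Module R Z]
  {f : P →ₗ[R] Q} {g : Q →ₗ[R] M} {f' : P' →ₗ[R] Q'} {g' : Q' →ₗ[R] N}

/-- Every map `P → Q'` is null-homotopic as a map from the two-term complex `f : P → Q` to the shift
of the two-term complex `f' : P' → Q'`, that is `Hom(f, f'[1]) = 0` in the homotopy category. -/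
def HomShiftVanishes (f : P →ₗ[R] Q) (f' : P' →ₗ[R] Q') : Prop :=
  ∀ φ : P →ₗ[R] Q', ∃ (α : Q →ₗ[R] Q') (β : P →ₗ[R] P'), α ∘ₗ f + f' ∘ₗ β = φ

lemma HomShiftVanishes.extendsAlong [Module.Projective R P] (h : HomShiftVanishes f f')
    (hg : Surjective g') (hfg : Exact f' g') : ExtendsAlong f N := fun φ ↦ by
  obtain ⟨φ, rfl⟩ := Module.projective_lifting_property g' φ hg
  obtain ⟨α, β, rfl⟩ := h φ
  refine ⟨g' ∘ₗ α, LinearMap.ext fun x ↦ ?_⟩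
  simp [hfg.apply_apply_eq_zero]

lemma ExtendsAlong.homShiftVanishes [Module.Projective R P] [Module.Projective R Q]
    (h : ExtendsAlong f N) (hg : Surjective g') (hfg : Exact f' g') :
    HomShiftVanishes f f' := fun φ ↦ by
  obtain ⟨k, hk⟩ := h (g' ∘ₗ φ)
  obtain ⟨α, rfl⟩ := Module.projective_lifting_property g' k hg
  obtain ⟨β, hβ⟩ := exists_comp_eq_of_comp_eq_zero (φ := φ - α ∘ₗ f) hfg <| by
    rw [LinearMap.comp_sub, ← hk, LinearMap.comp_assoc, sub_self]
  exact ⟨α, β, by rw [hβ, add_sub_cancel]⟩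

lemma Fac.of_factors (h : Fac (R := R) N Y)
    (hZ : ∀ ψ : N →ₗ[R] Y, ∃ (r : N →ₗ[R] Z) (s : Z →ₗ[R] Y), s ∘ₗ r = ψ) :
    Fac (R := R) Z Y := by
  classical
  obtain ⟨ι, _, t, ht⟩ := h
  choose r s hrs using fun i ↦ hZ (t ∘ₗ LinearMap.single R (fun _ : ι ↦ N) i)
  refine ⟨ι, inferInstance, LinearMap.lsum R (fun _ ↦ Z) ℕ s, fun y ↦ ?_⟩
  obtain ⟨v, rfl⟩ := ht y
  refine ⟨fun i ↦ r i (v i), ?_⟩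
  have hsr : ∀ i, s i (r i (v i)) = t (Pi.single i (v i)) := fun i ↦
    LinearMap.congr_fun (hrs i) (v i)
  rw [LinearMap.lsum_apply, LinearMap.sum_apply]
  simp_rw [LinearMap.comp_apply, LinearMap.proj_apply, hsr, ← map_sum, Finset.univ_sum_single]

lemma Fac.surjective_of_factors (h : Fac (R := R) N Y) {q : Z →ₗ[R] Y}
    (hq : ∀ ψ : N →ₗ[R] Y, ∃ s : N →ₗ[R] Z, q ∘ₗ s = ψ) : Surjective q := by
  classical
  obtain ⟨ι, _, t, ht⟩ := h
  choose s hs using fun i ↦ hq (t ∘ₗ LinearMap.single R (fun _ : ι ↦ N) i)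
  intro y
  obtain ⟨v, rfl⟩ := ht y
  refine ⟨∑ i, s i (v i), ?_⟩
  have hqs : ∀ i, q (s i (v i)) = t (Pi.single i (v i)) := fun i ↦ LinearMap.congr_fun (hs i) (v i)
  simp_rw [map_sum, hqs, ← map_sum, Finset.univ_sum_single]

namespace ExtendsAlong

lemma compLeft {ι : Type} [Finite ι] (h : ExtendsAlong f Y) :
    ExtendsAlong (f.compLeft ι) Y := fun φ ↦ by
  classical
  have := Fintype.ofFinite ι
  choose k hk using fun i ↦ h (φ ∘ₗ LinearMap.single R (fun _ : ι ↦ P) i)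
  refine ⟨LinearMap.lsum R (fun _ ↦ Q) ℕ k, LinearMap.pi_ext' fun i ↦ ?_⟩
  rw [← hk i]
  ext x
  rw [LinearMap.comp_assoc, LinearMap.comp_apply, LinearMap.comp_apply,
    show f.compLeft ι (LinearMap.single R (fun _ ↦ P) i x) = Pi.single i (f x) from
      funext fun j ↦ Pi.apply_single (fun _ ↦ f) (fun _ ↦ map_zero f) i x j,
    LinearMap.lsum_piSingle, LinearMap.comp_apply]

lemma prod (h : ExtendsAlong f Y) (f' : P →ₗ[R] Q') : ExtendsAlong (f.prod f') Y := fun φ ↦ by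
  obtain ⟨k, rfl⟩ := h φ
  exact ⟨k ∘ₗ LinearMap.fst R Q Q', rfl⟩

lemma exists_comp_inr_eq (h : ExtendsAlong f Y) {f' : P →ₗ[R] Q'} {π : Q × Q' →ₗ[R] Z}
    (hπ : Surjective π) (hfπ : Exact (f.prod f') π) (ψ : Q' →ₗ[R] Y) :
    ∃ s : Z →ₗ[R] Y, s ∘ₗ π ∘ₗ LinearMap.inr R Q Q' = ψ := by
  obtain ⟨k, hk⟩ := h (ψ ∘ₗ f')
  obtain ⟨s, hs⟩ := exists_comp_eq_of_ker_le hπ (r := (-k).coprod ψ) fun x hx ↦ by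
    obtain ⟨y, rfl⟩ := (hfπ x).1 hx
    simpa using neg_add_eq_zero.2 (LinearMap.congr_fun hk y)
  exact ⟨s, by rw [← LinearMap.comp_assoc, hs, LinearMap.coprod_inr]⟩

lemma ker (hY : ExtendsAlong f Z) (hg : Surjective g) (hfg : Exact f g) {q : Z →ₗ[R] Y}
    (hq : ∀ ψ : M →ₗ[R] Y, ∃ s : M →ₗ[R] Z, q ∘ₗ s = ψ) :
    ExtendsAlong f (LinearMap.ker q) := fun φ ↦ by
  obtain ⟨k, hk⟩ := hY ((LinearMap.ker q).subtype ∘ₗ φ)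
  obtain ⟨ψ, hψ⟩ := exists_comp_eq_of_ker_le hg (r := q ∘ₗ k) fun x hx ↦ by
    obtain ⟨y, rfl⟩ := (hfg x).1 hx
    have hky : k (f y) = φ y := LinearMap.congr_fun hk y
    simp [hky]
  obtain ⟨s, rfl⟩ := hq ψ
  refine ⟨(k - s ∘ₗ g).codRestrict _ fun x ↦ ?_, LinearMap.ext fun x ↦ Subtype.ext ?_⟩
  · simpa [sub_eq_zero] using (LinearMap.congr_fun hψ x).symm
  · simpa [hfg.apply_apply_eq_zero] using LinearMap.congr_fun hk x

end ExtendsAlong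

/-- The Bongartz complement: for a generating family `b` of `Hom(P, N)`, the cokernel of
`P ^ k → Q ^ k × N` again has no self-extensions relative to `f`. -/
lemma HomShiftVanishes.compLeft_prod (hf : HomShiftVanishes f f) {K : Type*} [CommRing K]
    [Algebra K R] [Module K P] [IsScalarTower K R P] [Module K Q] [IsScalarTower K R Q]
    [Module K N] [IsScalarTower K R N] {k : ℕ} {b : Fin k → P →ₗ[R] N}
    (hb : Submodule.span K (Set.range b) = ⊤) :
    HomShiftVanishes f ((f.compLeft (Fin k)).prod (LinearMap.lsum R (fun _ ↦ P) ℕ b)) := fun φ ↦ by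
  choose α β hαβ using fun i ↦ hf (LinearMap.proj i ∘ₗ LinearMap.fst R (Fin k → Q) N ∘ₗ φ)
  let B : (Fin k → P) →ₗ[R] N := LinearMap.lsum R (fun _ ↦ P) ℕ b
  obtain ⟨c, hc⟩ := (Submodule.mem_span_range_iff_exists_fun K).1 <| hb ▸ Submodule.mem_top
    (x := LinearMap.snd R (Fin k → Q) N ∘ₗ φ - B ∘ₗ LinearMap.pi β)
  refine ⟨LinearMap.inl R (Fin k → Q) N ∘ₗ LinearMap.pi fun i ↦ α i - c i • LinearMap.id,
    LinearMap.pi fun i ↦ β i + c i • LinearMap.id, LinearMap.ext fun x ↦ Prod.ext ?_ ?_⟩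
  · funext i
    have hx : α i (f x) + f (β i x) = (φ x).1 i := LinearMap.congr_fun (hαβ i) x
    have hfc : f (c i • x) = c i • f x := f.map_smul_of_tower (c i) x
    simp [← hx, hfc]
  · have hx : ∑ i, c i • b i x = (φ x).2 - ∑ i, b i (β i x) := by
      simpa [B, LinearMap.sum_apply] using LinearMap.congr_fun hc x
    have hbc : ∀ i, b i (c i • x) = c i • b i x := fun i ↦ (b i).map_smul_of_tower (c i) x
    simp [Finset.sum_add_distrib, hbc, hx]

variable (K : Type) [Field K] [Algebra K R] [FiniteDimensional K R]

include K in
lemma HomShiftVanishes.exists_complement [Module.Finite R P] [Module.Projective R P]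
    [Module.Finite R Q] [Module.Projective R Q] (hf : HomShiftVanishes f f) :
    ∃ E : ModCat R, Module.Finite R E ∧ ExtendsAlong f E ∧
      IsExtProjective (ExtendsAlong (R := R) f) E ∧
      ∀ {Y : Type} [AddCommGroup Y] [Module R Y], Module.Finite R Y → ExtendsAlong f Y →
        Fac (R := R) E Y := by
  let : Module K P := Module.restrictScalars K R P
  have : IsScalarTower K R P := .restrictScalars K R P
  let : Module K Q := Module.restrictScalars K R Q
  have : IsScalarTower K R Q := .restrictScalars K R Q
  have := finite_linearMap R P R K
  obtain ⟨k, b, hb⟩ := Module.Finite.exists_fin (R := K) (M := P →ₗ[R] R)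
  let B : (Fin k → P) →ₗ[R] R := LinearMap.lsum R (fun _ ↦ P) ℕ b
  let Φ := (f.compLeft (Fin k)).prod B
  have hΦ := LinearMap.exact_map_mkQ_range Φ
  have hπ := (LinearMap.range Φ).mkQ_surjective
  have : Module.Projective R (Fin k → P) := projective_pi
  have : Module.Projective R (Fin k → Q) := projective_pi
  refine ⟨.of R (((Fin k → Q) × R) ⧸ LinearMap.range Φ), inferInstance,
    (hf.compLeft_prod hb).extendsAlong hπ hΦ, ?_, fun {Y} _ _ hY hfY ↦ ?_⟩
  · exact IsProjectivePresentation.isExtProjective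
      ⟨inferInstance, inferInstance, inferInstance, inferInstance, hπ, hΦ⟩
      fun hY ↦ hY.compLeft.prod B
  · obtain ⟨n, t, ht⟩ := Module.Finite.exists_fin' R Y
    refine Fac.of_factors (N := R) ⟨Fin n, inferInstance, t, ht⟩ fun ψ ↦ ?_
    obtain ⟨s, hs⟩ := hfY.compLeft.exists_comp_inr_eq hπ hΦ ψ
    exact ⟨_, s, hs⟩

variable (R) in
/-- `M` is a maximal τ-rigid module: no τ-rigid `M × N` with `N` outside `add M`. -/
structure IsMaximalTauRigid (M : Type) [AddCommGroup M] [Module R M] : Prop where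
  finite : Module.Finite R M
  isTauRigid : IsTauRigid R M
  memAdd {N : Type} [AddCommGroup N] [Module R N] :
    Module.Finite R N → IsTauRigid R (M × N) → MemAdd R N M

include K in
/-- Bongartz completion. -/
lemma IsTauRigid.exists_isMaximalTauRigid [Module.Finite R M] (h : IsTauRigid R M) :
    ∃ T : ModCat R, IsMaximalTauRigid R T ∧ MemAdd R M T := by
  have := IsArtinianRing.of_finite K R
  obtain ⟨P₁, P₀, f, g, hfg, hmin⟩ := exists_minimal_projectivePresentation R M
  obtain ⟨_, _, _, _, hg, hex⟩ := id hfg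
  have hM : ExtendsAlong f M := hfg.extendsAlong_of_isExtProjective hmin h.isExtProjective
  obtain ⟨E, hE, hfE, hEext, hEfac⟩ := (hM.homShiftVanishes hg hex).exists_complement K
  have htors := ExtendsAlong.isTorsionClass f
  have hME := htors.prod ⟨‹_›, hM⟩ ⟨hE, hfE⟩
  have hMEext : IsExtProjective (ExtendsAlong (R := R) f) (M × E) :=
    (hfg.isExtProjective id).prod hEext
  refine ⟨.of R (M × E), ⟨hME.1, .of_isExtProjective (hMEext.mono hME.2.of_fac),
    fun {N} _ _ hN hMEN ↦ ?_⟩, .prod_left R M E⟩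
  have hMEN := hMEN.isExtProjective
  have hMfac := (MemAdd.prod_left R M E).trans (.prod_left R (M × E) N)
  have hEfac' := (MemAdd.prod_right R M E).trans (.prod_left R (M × E) N)
  have hNfac := MemAdd.prod_right R (M × E) N
  have hfN : ExtendsAlong f N := hfg.extendsAlong_of_isExtProjective hmin <|
    (hMEN.of_memAdd hMfac).mono (Fac.of_memAdd hNfac).trans
  obtain ⟨n, q, hq⟩ := exists_right_approximation R (M × E) N K
  have hqE : ∀ ψ : E →ₗ[R] N, ∃ s : E →ₗ[R] (Fin n → M × E), q ∘ₗ s = ψ := fun ψ ↦ by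
    obtain ⟨s, hs⟩ := hq (ψ ∘ₗ LinearMap.snd R M E)
    exact ⟨s ∘ₗ LinearMap.inr R M E, by
      rw [← LinearMap.comp_assoc, hs, LinearMap.comp_assoc, LinearMap.snd_comp_inr,
        LinearMap.comp_id]⟩
  have hqM : ∀ ψ : M →ₗ[R] N, ∃ s : M →ₗ[R] (Fin n → M × E), q ∘ₗ s = ψ := fun ψ ↦ by
    obtain ⟨s, hs⟩ := hq (ψ ∘ₗ LinearMap.fst R M E)
    exact ⟨s ∘ₗ LinearMap.inl R M E, by
      rw [← LinearMap.comp_assoc, hs, LinearMap.comp_assoc, LinearMap.fst_comp_inl,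
        LinearMap.comp_id]⟩
  have hker : Fac (R := R) E (LinearMap.ker q) := hEfac inferInstance (hME.2.pi.ker hg hex hqM)
  obtain ⟨s, hs⟩ := hMEN.of_memAdd hNfac q ((hEfac hN hfN).surjective_of_factors hqE)
    ((Fac.of_memAdd hEfac').trans hker) LinearMap.id
  exact .trans (.of_retract hs) (.pi fun _ ↦ .refl R _)

end Bongartz

section SupportTauTilting

lemma IsMaximalTauRigid.of_memAdd {T V : Type} [AddCommGroup T] [Module R T] [AddCommGroup V]
    [Module R V] [IsArtinianRing R] (hT : IsMaximalTauRigid R T) (hVT : MemAdd R V T)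
    (hTV : MemAdd R T V) : IsMaximalTauRigid R V := by
  have := hT.finite
  have := hVT.finite
  exact ⟨this, hT.isTauRigid.of_memAdd hVT, fun {N} _ _ hN hVN ↦ (hT.memAdd hN <| hVN.of_memAdd <|
    (hTV.trans (.prod_left R V N)).prod (.prod_right R V N)).trans hTV⟩

variable (V : ModCat R)

lemma exists_isBasicMod [IsArtinianRing R] [Module.Finite R V] :
    ∃ V' : ModCat R, MemAdd R V' V ∧ MemAdd R V V' ∧ IsBasicMod V' := by
  let S : Set (ModCat R) := {V' | MemAdd R V' V ∧ MemAdd R V V'}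
  obtain ⟨V', ⟨hV'V, hVV'⟩, hmin⟩ := (InvImage.wf (fun V' : ModCat R ↦ Module.length R V')
    wellFounded_lt).has_min S ⟨V, .refl R V, .refl R V⟩
  refine ⟨V', hV'V, hVV', fun N X hi ↦ ?_⟩
  obtain ⟨e⟩ := (nonempty_iso_biprod_iff V' (N ⊞ N) X).1 hi
  obtain ⟨e'⟩ := (nonempty_iso_biprod_iff (N ⊞ N) N N).1 ⟨Iso.refl _⟩
  let i : V' ≃ₗ[R] (N × N) × X := e.trans (e'.prodCongr (.refl R X))
  have hle : MemAdd R (N × X) ((N × N) × X) :=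
    ((MemAdd.prod_left R N N).trans (.prod_left R (N × N) X)).prod (.prod_right R (N × N) X)
  have hge : MemAdd R ((N × N) × X) (N × X) :=
    ((MemAdd.prod_left R N X).prod (.prod_left R N X)).prod (.prod_right R N X)
  have hnot := hmin (.of R (N × X)) ⟨(hle.trans (.of_linearEquiv i.symm)).trans hV'V,
    hVV'.trans ((MemAdd.of_linearEquiv i).trans hge)⟩
  have := hV'V.finite
  have : Module.Finite R ((N × N) × X) := .equiv i
  have := hle.finite
  rw [isZero_iff_subsingleton, ← Module.length_eq_zero_iff (R := R)]
  by_contra hN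
  have hlt := (ENat.add_lt_add_iff_right (Module.length_ne_top (R := R) (M := N × X))).2
    (pos_iff_ne_zero.2 hN)
  rw [zero_add] at hlt
  refine hnot (?_ : Module.length R (N × X) < Module.length R V')
  rwa [i.length_eq, Module.length_prod R (N × N), Module.length_prod R N N, add_assoc,
    ← Module.length_prod R N X]

lemma exists_projective_hom_eq_zero [IsArtinianRing R] :
    ∃ Q : ModCat R, Module.Finite R Q ∧ Module.Projective R Q ∧ (∀ φ : Q →ₗ[R] V, φ = 0) ∧
      ∀ {Q' : Type} [AddCommGroup Q'] [Module R Q'], Module.Finite R Q' → Module.Projective R Q' →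
        (∀ φ : Q' →ₗ[R] V, φ = 0) → MemAdd R Q' Q := by
  classical
  obtain ⟨ι, _, W, hW, ⟨e⟩⟩ := exists_linearEquiv_pi_isIndecomposable R R
  have hWR i : MemAdd R (W i) R :=
    (MemAdd.proj (W := fun i ↦ W i) i).trans (.of_linearEquiv e.symm)
  have hfin i : Module.Finite R (W i) := (hWR i).finite
  have hproj i : Module.Projective R (W i) := (hWR i).projective
  let J := {i : ι // ∀ φ : W i →ₗ[R] V, φ = 0}
  refine ⟨.of R (∀ j : J, W j.1), inferInstanceAs (Module.Finite R (∀ j : J, W j.1)),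
    projective_pi (W := fun j : J ↦ W j.1), fun φ ↦ LinearMap.pi_ext' fun j ↦ ?_,
    fun {Q'} _ _ hQ' hproj' hzero ↦ ?_⟩
  · rw [LinearMap.zero_comp]
    exact j.2 _
  obtain ⟨κ, _, W', hW', ⟨e'⟩⟩ := exists_linearEquiv_pi_isIndecomposable R Q'
  refine (MemAdd.of_linearEquiv e').trans (.pi fun k ↦ ?_)
  have hkQ : MemAdd R (W' k) Q' :=
    (MemAdd.proj (W := fun k ↦ W' k) k).trans (.of_linearEquiv e'.symm)
  have := hkQ.finite
  obtain ⟨i, ⟨a⟩⟩ := (hW' k).exists_linearEquiv_of_memAdd_pi hW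
    ((hkQ.trans .of_projective).trans (.of_linearEquiv e))
  let j : J := ⟨i, ((MemAdd.of_linearEquiv a.symm).trans hkQ).eq_zero_of_source hzero⟩
  exact (MemAdd.of_linearEquiv a).trans
    (.proj (W := fun j : J ↦ W j.1) j)

variable {V}

lemma IsMaximalTauRigid.isSupportTauTiltingMod [IsArtinianRing R] (hV : IsMaximalTauRigid R V) :
    IsSupportTauTiltingMod V := by
  obtain ⟨Q, hQ, hproj, hQV, hmax⟩ := exists_projective_hom_eq_zero V
  refine ⟨Q, ⟨hV.finite, (isTauRigidMod_iff V).2 hV.isTauRigid, hQ, (projective_iff Q).2 hproj,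
    fun φ ↦ ModuleCat.hom_ext (hQV φ.hom)⟩, fun N Q' ⟨hfVN, hVN, hfQ, hpQ, hzero⟩ ↦ ?_⟩
  obtain ⟨e⟩ := (nonempty_iso_biprod_iff (V ⊞ N) V N).1 ⟨Iso.refl _⟩
  obtain ⟨e'⟩ := (nonempty_iso_biprod_iff (Q ⊞ Q') Q Q').1 ⟨Iso.refl _⟩
  have hfVN : Module.Finite R (V ⊞ N : ModCat R) := hfVN
  have hfQ : Module.Finite R (Q ⊞ Q' : ModCat R) := hfQ
  have hpQ := (projective_iff _).1 hpQ
  have hQ'Q : MemAdd R Q' (Q ⊞ Q' : ModCat R) :=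
    (MemAdd.prod_right R Q Q').trans (.of_linearEquiv e'.symm)
  have hN := ((MemAdd.prod_right R V N).trans (.of_linearEquiv e.symm)).finite
  rw [memAddMod_iff, memAddMod_iff]
  refine ⟨hV.memAdd hN (((isTauRigidMod_iff _).1 hVN).of_memAdd (.of_linearEquiv e.symm)),
    hmax hQ'Q.finite hQ'Q.projective (hQ'Q.eq_zero_of_source fun φ ↦ ?_)⟩
  have hφ := hzero (ModuleCat.ofHom (e.symm.toLinearMap ∘ₗ LinearMap.inl R V N ∘ₗ φ))
  ext x
  simpa using congrArg (fun t ↦ (e (t.hom x)).1) hφ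

variable (K : Type) [Field K] [Algebra K R] [FiniteDimensional K R]

include K in
lemma IsTauTiltingFiniteRing.exists_finite_tauRigid (h : IsTauTiltingFiniteRing R) :
    ∃ (ι : Type) (_ : Finite ι) (F : ι → ModCat R),
      ∀ {M : Type} [AddCommGroup M] [Module R M], Module.Finite R M → IsIndecomposable R M →
        IsTauRigid R M → ∃ i, Nonempty (M ≃ₗ[R] F i) := by
  have := IsArtinianRing.of_finite K R
  obtain ⟨n, G, hG⟩ := h
  choose κ _ W hW e using fun i : {i // Module.Finite R (G i)} ↦
    have := i.2; exists_linearEquiv_pi_isIndecomposable R (G i)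
  refine ⟨Σ i, κ i, inferInstance, fun x ↦ W x.1 x.2, fun {M} _ _ hM hind hrigid ↦ ?_⟩
  obtain ⟨T, hT, hMT⟩ := hrigid.exists_isMaximalTauRigid K
  have := hT.finite
  obtain ⟨V, hVT, hTV, hbasic⟩ := exists_isBasicMod T
  have hV := hT.of_memAdd hVT hTV
  obtain ⟨i, hi⟩ := hG V hV.isSupportTauTiltingMod hbasic
  obtain ⟨a⟩ := (nonempty_iso_iff V (G i)).1 hi
  have := hV.finite
  let i' : {i // Module.Finite R (G i)} := ⟨i, .equiv a⟩
  obtain ⟨j, hj⟩ := hind.exists_linearEquiv_of_memAdd_pi (hW i') <|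
    ((hMT.trans hTV).trans (.of_linearEquiv a)).trans (.of_linearEquiv (e i').some)
  exact ⟨⟨i', j⟩, hj⟩

end SupportTauTilting

section Presentation

variable {P Q : Type} [AddCommGroup P] [Module R P] [AddCommGroup Q] [Module R Q] {f : P →ₗ[R] Q}

lemma IsIndecomposable.le_jacobson [IsArtinian R P] [IsNoetherian R P] [Module.Projective R P]
    (hP : IsIndecomposable R P) {A : Submodule R P} (hA : A ≠ ⊤) : A ≤ Module.jacobson R P := by
  refine le_sInf fun 𝔪 h𝔪 ↦ ?_
  by_contra hA𝔪
  have hsup : A ⊔ 𝔪 = ⊤ := h𝔪.2 _ (right_lt_sup.2 hA𝔪)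
  have hsurj : Surjective (A.subtype.coprod 𝔪.subtype) := by
    rw [← LinearMap.range_eq_top, LinearMap.range_coprod, A.range_subtype, 𝔪.range_subtype, hsup]
  obtain ⟨s, hs⟩ := Module.projective_lifting_property _ LinearMap.id hsurj
  let φ : Bool → P →ₗ[R] P := Bool.rec (𝔪.subtype ∘ₗ LinearMap.snd R A 𝔪 ∘ₗ s)
    (A.subtype ∘ₗ LinearMap.fst R A 𝔪 ∘ₗ s)
  have hφ : ∑ i, φ i = LinearMap.id := by
    rw [← hs, Fintype.sum_bool]
    ext x
    simp [φ]
  obtain ⟨i, -, hi⟩ := hP.exists_bijective_of_sum (by rw [hφ]; exact bijective_id)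
  cases i with
  | true => exact hA (eq_top_iff.2 fun x _ ↦ by obtain ⟨y, rfl⟩ := hi.2 x; exact (s y).1.2)
  | false => exact h𝔪.1 (eq_top_iff.2 fun x _ ↦ by obtain ⟨y, rfl⟩ := hi.2 x; exact (s y).2.2)

lemma HomShiftVanishes.isTauRigid_quotient_range [Module.Finite R P] [Module.Projective R P]
    [Module.Finite R Q] [Module.Projective R Q] (h : HomShiftVanishes f f) :
    IsTauRigid R (Q ⧸ LinearMap.range f) :=
  ⟨.of R P, .of R Q, f, (LinearMap.range f).mkQ,
    ⟨‹_›, ‹_›, ‹_›, ‹_›, Submodule.mkQ_surjective _, LinearMap.exact_map_mkQ_range f⟩,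
    h.extendsAlong (Submodule.mkQ_surjective _) (LinearMap.exact_map_mkQ_range f)⟩

lemma isIndecomposable_of_end_eq_smul (K : Type*) [Field K] {M : Type*} [AddCommGroup M]
    [Module R M] [Module K M] [SMulCommClass R K M] [Nontrivial M]
    (h : ∀ φ : M →ₗ[R] M, ∃ c : K, φ = c • LinearMap.id) : IsIndecomposable R M := by
  refine ⟨inferInstance, fun e he ↦ ?_⟩
  obtain ⟨c, rfl⟩ := h e
  obtain ⟨m, hm⟩ := exists_ne (0 : M)
  have hc : c * c = c := smul_left_injective K hm <| by
    simpa [mul_smul] using LinearMap.congr_fun he.eq m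
  obtain rfl | rfl := IsIdempotentElem.iff_eq_zero_or_one.1 hc
  · exact .inl (zero_smul _ _)
  · exact .inr (one_smul _ _)

/-- Every endomorphism of the two-term complex `f : P → Q` acts on `Q` as a scalar. When `P` and
`Q` are projective, this makes the cokernel of `f` a brick. -/
def HasScalarEnd (K : Type*) [CommRing K] [Algebra K R] [Module K Q] [IsScalarTower K R Q]
    (f : P →ₗ[R] Q) : Prop :=
  ∀ (α : Q →ₗ[R] Q) (β : P →ₗ[R] P), α ∘ₗ f = f ∘ₗ β → ∃ c : K, α = c • LinearMap.id

lemma HasScalarEnd.isIndecomposable_quotient_range {K : Type*} [Field K] [Algebra K R] [Module K Q]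
    [IsScalarTower K R Q] [Module.Projective R P] [Module.Projective R Q] (h : HasScalarEnd K f)
    [Nontrivial (Q ⧸ LinearMap.range f)] : IsIndecomposable R (Q ⧸ LinearMap.range f) := by
  refine isIndecomposable_of_end_eq_smul K fun e ↦ ?_
  let g := (LinearMap.range f).mkQ
  have hg : Surjective g := Submodule.mkQ_surjective _
  have hfg : Exact f g := LinearMap.exact_map_mkQ_range f
  obtain ⟨α, hα⟩ := Module.projective_lifting_property g (e ∘ₗ g) hg
  obtain ⟨β, hβ⟩ := exists_comp_eq_of_comp_eq_zero (φ := α ∘ₗ f) hfg <| by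
    rw [← LinearMap.comp_assoc, hα, LinearMap.comp_assoc, hfg.linearMap_comp_eq_zero,
      LinearMap.comp_zero]
  obtain ⟨c, rfl⟩ := h α β hβ.symm
  refine ⟨c, LinearMap.ext fun y ↦ ?_⟩
  obtain ⟨x, rfl⟩ := hg y
  exact (LinearMap.congr_fun hα x).symm.trans (g.map_smul_of_tower c x)

lemma card_le_length_quotient_range {ι : Type} [Fintype ι] {W : ι → Type}
    [∀ i, AddCommGroup (W i)] [∀ i, Module R (W i)] [∀ i, Module.Finite R (W i)]
    [∀ i, Nontrivial (W i)] {f : P →ₗ[R] ∀ i, W i} (hf : ∀ x i, f x i ∈ Module.jacobson R (W i)) :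
    Fintype.card ι ≤ Module.length R ((∀ i, W i) ⧸ LinearMap.range f) := by
  let q : (∀ i, W i) →ₗ[R] ∀ i, W i ⧸ Module.jacobson R (W i) :=
    LinearMap.pi fun i ↦ (Module.jacobson R (W i)).mkQ ∘ₗ LinearMap.proj i
  have hq : Surjective q := fun y ↦ by
    choose x hx using fun i ↦ (Module.jacobson R (W i)).mkQ_surjective (y i)
    exact ⟨x, funext hx⟩
  have hqf : LinearMap.range f ≤ LinearMap.ker q := by
    rintro _ ⟨x, rfl⟩
    exact funext fun i ↦ (Submodule.Quotient.mk_eq_zero _).2 (hf x i)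
  have hpos (i : ι) : 1 ≤ Module.length R (W i ⧸ Module.jacobson R (W i)) := by
    have := Submodule.Quotient.nontrivial_iff.2 (Module.jacobson_lt_top R (W i)).ne
    exact Order.one_le_iff_pos.2 Module.length_pos
  calc (Fintype.card ι : ℕ∞) = ∑ i : ι, 1 := by simp
    _ ≤ ∑ i, Module.length R (W i ⧸ Module.jacobson R (W i)) := Finset.sum_le_sum fun i _ ↦ hpos i
    _ = Module.length R (∀ i, W i ⧸ Module.jacobson R (W i)) :=
      (Module.length_pi_of_fintype ..).symm
    _ ≤ _ := Module.length_le_of_surjective ((LinearMap.range f).liftQ q hqf)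
      fun y ↦ (hq y).imp' _ fun _ hx ↦ ((LinearMap.range f).liftQ_apply q _).trans hx

variable (R) in
/-- The lengths of the finitely generated indecomposable `τ`-rigid modules are bounded. -/
def BoundedTauRigid : Prop :=
  ∃ B : ℕ, ∀ (M : Type) [AddCommGroup M] [Module R M], Module.Finite R M → IsIndecomposable R M →
    IsTauRigid R M → Module.length R M ≤ B

lemma IsTauTiltingFiniteRing.boundedTauRigid (K : Type) [Field K] [Algebra K R]
    [FiniteDimensional K R] [IsArtinianRing R] (h : IsTauTiltingFiniteRing R) :
    BoundedTauRigid R := by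
  obtain ⟨ι, _, F, hF⟩ := h.exists_finite_tauRigid K
  have := Fintype.ofFinite ι
  refine ⟨∑ i, (Module.length R (F i)).toNat, fun M _ _ _ hM hτ ↦ ?_⟩
  obtain ⟨i, ⟨e⟩⟩ := hF ‹_› hM hτ
  have hi : Module.length R (F i) ≠ ⊤ := e.length_eq ▸ Module.length_ne_top
  rw [e.length_eq, ← ENat.natCast_toNat hi]
  exact_mod_cast Finset.single_le_sum (f := fun i ↦ (Module.length R (F i)).toNat)
    (fun _ _ ↦ Nat.zero_le _) (Finset.mem_univ i)

lemma BoundedTauRigid.exists_card_le (K : Type) [Field K] [Algebra K R] (hB : BoundedTauRigid R) :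
    ∃ B : ℕ, ∀ {P : Type} [AddCommGroup P] [Module R P] [Module.Finite R P] [Module.Projective R P]
      {n : ℕ} {W : Fin n → ModCat R} [∀ i, Module.Finite R (W i)] [∀ i, Module.Projective R (W i)]
      [∀ i, Nontrivial (W i)] {f : P →ₗ[R] ∀ i, W i}, HomShiftVanishes f f → HasScalarEnd K f →
      (∀ x i, f x i ∈ Module.jacobson R (W i)) → n ≤ B := by
  obtain ⟨B, hB⟩ := hB
  refine ⟨B, fun {P} _ _ _ _ n W _ _ _ f hrig hend hf ↦ ?_⟩
  obtain rfl | hn := n.eq_zero_or_pos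
  · exact B.zero_le
  have hlen := card_le_length_quotient_range hf
  rw [Fintype.card_fin] at hlen
  have : Nontrivial ((∀ i, W i) ⧸ LinearMap.range f) :=
    Module.length_pos_iff.1 (lt_of_lt_of_le (by exact_mod_cast hn) hlen)
  have : Module.Projective R (∀ i, W i) := projective_pi
  exact_mod_cast hlen.trans <|
    hB _ inferInstance hend.isIndecomposable_quotient_range hrig.isTauRigid_quotient_range

end Presentation

section Kronecker

variable {K : Type} [Field K] {ι : Type*} {V W W' : Type*} [AddCommGroup V] [Module K V]
  [AddCommGroup W] [Module K W] [AddCommGroup W'] [Module K W']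

/-- The representation `F` of the generalized Kronecker quiver with arrow set `ι` is rigid, that is,
it has no self-extensions. -/
def IsRigidTuple (F : ι → V →ₗ[K] W) : Prop :=
  ∀ G : ι → V →ₗ[K] W, ∃ (α : W →ₗ[K] W) (β : V →ₗ[K] V), ∀ i, α ∘ₗ F i + F i ∘ₗ β = G i

/-- Every endomorphism `(β, α)` of the representation `F` of the generalized Kronecker quiver acts
on the sink `W` as a scalar. -/
def IsBrickTuple (F : ι → V →ₗ[K] W) : Prop :=
  ∀ (α : W →ₗ[K] W) (β : V →ₗ[K] V), (∀ i, α ∘ₗ F i = F i ∘ₗ β) →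
    ∃ c : K, α = c • LinearMap.id

lemma IsRigidTuple.injective_pi [Finite ι] [Nonempty ι] [FiniteDimensional K V]
    [FiniteDimensional K W] {F : ι → V →ₗ[K] W} (hF : IsRigidTuple F)
    (hVW : Module.finrank K V < Module.finrank K W) : Injective (LinearMap.pi F) := by
  have := Fintype.ofFinite ι
  refine (injective_iff_map_eq_zero _).2 fun v hv ↦ by_contra fun hv0 ↦ ?_
  obtain ⟨ξ, hξ⟩ := Module.Projective.exists_dual_eq_one K hv0
  have hsurj : Surjective (LinearMap.pi F) := fun y ↦ by
    obtain ⟨α, β, hαβ⟩ := hF fun i ↦ ξ.smulRight (y i)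
    refine ⟨β v, funext fun i ↦ ?_⟩
    have hvi : F i v = 0 := congrFun hv i
    simpa [hvi, hξ] using LinearMap.congr_fun (hαβ i) v
  have hle := LinearMap.finrank_le_finrank_of_surjective hsurj
  rw [Module.finrank_pi_fintype, Finset.sum_const, smul_eq_mul] at hle
  exact (hVW.trans_le (Nat.le_mul_of_pos_left _ Fintype.card_pos)).not_ge hle

section Reflection

variable [DecidableEq ι] {F : ι → V →ₗ[K] W} {q : (ι → W) →ₗ[K] W'}

lemma compLeft_comp_single (α : W →ₗ[K] W') (i : ι) :
    α.compLeft ι ∘ₗ LinearMap.single K (fun _ ↦ W) i =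
      LinearMap.single K (fun _ ↦ W') i ∘ₗ α :=
  LinearMap.ext fun w ↦ funext (Pi.apply_single (fun _ ↦ α) (fun _ ↦ map_zero α) i w)

/- The reflection functor replaces `V → W ^ ι` by its cokernel `W ^ ι → W'`. -/

lemma IsRigidTuple.comp_single [Finite ι] (hF : IsRigidTuple F) (hq : Surjective q)
    (hFq : Exact (LinearMap.pi F) q) :
    IsRigidTuple fun i ↦ q ∘ₗ LinearMap.single K (fun _ ↦ W) i := fun G ↦ by
  have := Fintype.ofFinite ι
  let g : (ι → W) →ₗ[K] W' := LinearMap.lsum K (fun _ ↦ W) K G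
  obtain ⟨φ, hφ⟩ := Module.projective_lifting_property q (g ∘ₗ LinearMap.pi F) hq
  obtain ⟨α, β, hαβ⟩ := hF fun i ↦ LinearMap.proj i ∘ₗ φ
  have hker : LinearMap.ker q ≤ LinearMap.ker (g - q ∘ₗ α.compLeft ι) := fun x hx ↦ by
    obtain ⟨v, rfl⟩ := (hFq x).1 hx
    have hv : φ v = α.compLeft ι (LinearMap.pi F v) + LinearMap.pi F (β v) :=
      funext fun i ↦ (LinearMap.congr_fun (hαβ i) v).symm
    have hgv : g (LinearMap.pi F v) = q (φ v) := (LinearMap.congr_fun hφ v).symm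
    rw [LinearMap.mem_ker, LinearMap.sub_apply, hgv, hv, map_add, hFq.apply_apply_eq_zero]
    simp
  obtain ⟨γ, hγ⟩ := exists_comp_eq_of_ker_le hq hker
  refine ⟨γ, α, fun i ↦ ?_⟩
  beta_reduce
  rw [← LinearMap.comp_assoc, hγ, LinearMap.comp_assoc α, ← compLeft_comp_single]
  ext w
  simp [g, -LinearMap.lsum_apply, LinearMap.lsum_piSingle]

lemma IsBrickTuple.comp_single [Finite ι] (hF : IsBrickTuple F) (hq : Surjective q)
    (hFq : Exact (LinearMap.pi F) q) :
    IsBrickTuple fun i ↦ q ∘ₗ LinearMap.single K (fun _ ↦ W) i := fun γ β hγβ ↦ by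
  have hβ : γ ∘ₗ q = q ∘ₗ β.compLeft ι := LinearMap.pi_ext' fun i ↦ by
    rw [LinearMap.comp_assoc, hγβ i, LinearMap.comp_assoc, LinearMap.comp_assoc,
      compLeft_comp_single]
  obtain ⟨δ, hδ⟩ := exists_comp_eq_of_comp_eq_zero (φ := β.compLeft ι ∘ₗ LinearMap.pi F) hFq <| by
    rw [← LinearMap.comp_assoc _ _ q, ← hβ, LinearMap.comp_assoc, hFq.linearMap_comp_eq_zero,
      LinearMap.comp_zero]
  obtain ⟨c, rfl⟩ := hF β δ fun i ↦ LinearMap.ext fun v ↦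
    (congrFun (LinearMap.congr_fun hδ v) i).symm
  refine ⟨c, LinearMap.ext fun y ↦ ?_⟩
  obtain ⟨x, rfl⟩ := hq y
  exact (LinearMap.congr_fun hβ x).trans (q.map_smul c x)

end Reflection

variable (K) in
lemma exists_isRigidTuple_isBrickTuple (ι : Type) [Finite ι] [Nontrivial ι] (m : ℕ) :
    ∃ (V W : ModuleCat.{0} K) (F : ι → V →ₗ[K] W), FiniteDimensional K V ∧ FiniteDimensional K W ∧
      m ≤ Module.finrank K W ∧ Module.finrank K V < Module.finrank K W ∧
        IsRigidTuple F ∧ IsBrickTuple F := by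
  classical
  have := Fintype.ofFinite ι
  induction m with
  | zero =>
    refine ⟨.of K PUnit, .of K K, 0, inferInstance, inferInstance, Nat.zero_le _, ?_,
      fun G ↦ ⟨0, 0, fun i ↦ LinearMap.ext fun v ↦ ?_⟩, fun α _ _ ↦ ⟨α (1 : K), ?_⟩⟩
    · simp [Module.finrank_zero_of_subsingleton]
    · rw [Subsingleton.elim v 0, map_zero, map_zero]
    · exact LinearMap.ext_ring (by simp)
  | succ m ih =>
    obtain ⟨V, W, F, _, _, hm, hVW, hrig, hbrick⟩ := ih
    have hq : Surjective (LinearMap.range (LinearMap.pi F)).mkQ := Submodule.mkQ_surjective _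
    have hFq := LinearMap.exact_map_mkQ_range (LinearMap.pi F)
    have hdim := Submodule.finrank_quotient_add_finrank (LinearMap.range (LinearMap.pi F))
    rw [LinearMap.finrank_range_of_inj (hrig.injective_pi hVW), Module.finrank_pi_fintype,
      Finset.sum_const, Finset.card_univ, smul_eq_mul] at hdim
    have hcard : 2 * Module.finrank K W ≤ Fintype.card ι * Module.finrank K W :=
      Nat.mul_le_mul_right _ Fintype.one_lt_card
    exact ⟨W, .of K ((ι → W) ⧸ LinearMap.range (LinearMap.pi F)), _, ‹_›, inferInstance,
      by simp only; omega, by simp only; omega, hrig.comp_single hq hFq, hbrick.comp_single hq hFq⟩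

variable (K) in
lemma exists_rigid_brick_matrices (ι : Type) [Finite ι] [Nontrivial ι] (m : ℕ) :
    ∃ (a c : ℕ) (M : ι → Matrix (Fin c) (Fin a) K), m ≤ c ∧
      (∀ G : ι → Matrix (Fin c) (Fin a) K, ∃ (A : Matrix (Fin c) (Fin c) K)
        (B : Matrix (Fin a) (Fin a) K), ∀ i, A * M i + M i * B = G i) ∧
      ∀ (A : Matrix (Fin c) (Fin c) K) (B : Matrix (Fin a) (Fin a) K),
        (∀ i, A * M i = M i * B) → ∃ s : K, A = s • 1 := by
  obtain ⟨V, W, F, _, _, hm, -, hrig, hbrick⟩ := exists_isRigidTuple_isBrickTuple K ι m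
  let v := Module.finBasis K V
  let w := Module.finBasis K W
  refine ⟨_, _, fun i ↦ LinearMap.toMatrix v w (F i), hm, fun G ↦ ?_, fun A B hAB ↦ ?_⟩
  · obtain ⟨α, β, hαβ⟩ := hrig fun i ↦ Matrix.toLin v w (G i)
    refine ⟨LinearMap.toMatrix w w α, LinearMap.toMatrix v v β, fun i ↦ ?_⟩
    rw [← LinearMap.toMatrix_comp, ← LinearMap.toMatrix_comp, ← map_add, hαβ,
      LinearMap.toMatrix_toLin]
  · obtain ⟨s, hs⟩ := hbrick (Matrix.toLin w w A) (Matrix.toLin v v B) fun i ↦ by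
      have := congrArg (Matrix.toLin v w) (hAB i)
      rwa [Matrix.toLin_mul v w w, Matrix.toLin_mul v v w, Matrix.toLin_toMatrix] at this
    refine ⟨s, (Matrix.toLin w w).injective ?_⟩
    rw [hs, map_smul, Matrix.toLin_one]

end Kronecker

section Entries

variable {ι κ μ : Type*} [Fintype ι] [Fintype κ] {V : ι → Type*} {W : κ → Type*} {U : μ → Type*}
  [∀ i, AddCommGroup (V i)] [∀ i, Module R (V i)] [∀ j, AddCommGroup (W j)] [∀ j, Module R (W j)]
  [∀ k, AddCommGroup (U k)] [∀ k, Module R (U k)]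

/-- The linear map between finite products with matrix of components `f`. -/
def ofEntries (f : ∀ j i, V i →ₗ[R] U j) : (∀ i, V i) →ₗ[R] ∀ j, U j :=
  LinearMap.pi fun j ↦ ∑ i, f j i ∘ₗ LinearMap.proj i

lemma ofEntries_apply (f : ∀ j i, V i →ₗ[R] U j) (x : ∀ i, V i) (j : μ) :
    ofEntries f x j = ∑ i, f j i (x i) := by
  simp [ofEntries, LinearMap.sum_apply]

lemma exists_ofEntries_eq (φ : (∀ i, V i) →ₗ[R] ∀ j, U j) :
    ∃ f : ∀ j i, V i →ₗ[R] U j, ofEntries f = φ := by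
  classical
  refine ⟨fun j i ↦ LinearMap.proj j ∘ₗ φ ∘ₗ LinearMap.single R V i,
    LinearMap.ext fun x ↦ funext fun j ↦ ?_⟩
  conv_rhs => rw [← Finset.univ_sum_single x, map_sum, Finset.sum_apply]
  simp [ofEntries_apply]

lemma ofEntries_injective :
    Injective (ofEntries : (∀ j i, V i →ₗ[R] U j) → (∀ i, V i) →ₗ[R] ∀ j, U j) := by
  classical
  refine fun f g h ↦ funext fun j ↦ funext fun i ↦ LinearMap.ext fun x ↦ ?_
  have hx := congrFun (LinearMap.congr_fun h (Pi.single i x)) j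
  simp only [ofEntries_apply] at hx
  rwa [Finset.sum_eq_single i (by simp +contextual) (by simp),
    Finset.sum_eq_single i (by simp +contextual) (by simp), Pi.single_eq_same] at hx

lemma ofEntries_comp (g : ∀ k j, W j →ₗ[R] U k) (f : ∀ j i, V i →ₗ[R] W j) :
    ofEntries g ∘ₗ ofEntries f = ofEntries fun k i ↦ ∑ j, g k j ∘ₗ f j i := by
  refine LinearMap.ext fun x ↦ funext fun k ↦ ?_
  simp only [LinearMap.comp_apply, ofEntries_apply, map_sum, LinearMap.sum_apply]
  exact Finset.sum_comm

lemma ofEntries_add (f g : ∀ j i, V i →ₗ[R] U j) :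
    ofEntries f + ofEntries g = ofEntries fun j i ↦ f j i + g j i := by
  refine LinearMap.ext fun x ↦ funext fun j ↦ ?_
  simp [ofEntries_apply, Finset.sum_add_distrib]

end Entries

variable (R) in
/-- A complete irredundant system of finitely generated indecomposable projective `R`-modules
between which every nonzero map is injective. -/
structure IndecProjSystem where
  Index : Type
  finite : Finite Index
  P : Index → ModCat R
  module_finite (y : Index) : Module.Finite R (P y)
  projective (y : Index) : Module.Projective R (P y)
  isIndecomposable (y : Index) : IsIndecomposable R (P y)
  eq_of_linearEquiv {y z : Index} (e : P y ≃ₗ[R] P z) : y = z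
  subsingleton_of_hom_eq_zero (M : Type) [AddCommGroup M] [Module R M]
    (h : ∀ y (g : P y →ₗ[R] M), g = 0) : Subsingleton M
  injective {y z : Index} {g : P y →ₗ[R] P z} (hg : g ≠ 0) : Injective g

attribute [instance] IndecProjSystem.finite IndecProjSystem.module_finite
  IndecProjSystem.projective

lemma IsLocallyHereditaryRing.nonempty_indecProjSystem [IsArtinianRing R]
    (h : IsLocallyHereditaryRing R) : Nonempty (IndecProjSystem R) := by
  obtain ⟨ι, _, W, hW, ⟨e⟩⟩ := exists_linearEquiv_pi_isIndecomposable R R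
  have hWR (i : ι) : MemAdd R (W i) R :=
    .trans (.proj (W := fun i ↦ W i) i) (.of_linearEquiv e.symm)
  have hfin (i : ι) : Module.Finite R (W i) := (hWR i).finite
  have hproj (i : ι) : Module.Projective R (W i) := (hWR i).projective
  let iso : Setoid ι :=
    { r i j := Nonempty (W i ≃ₗ[R] W j)
      iseqv := ⟨fun i ↦ ⟨.refl R _⟩, fun ⟨e⟩ ↦ ⟨e.symm⟩, fun ⟨e⟩ ⟨e'⟩ ↦ ⟨e.trans e'⟩⟩ }
  refine ⟨⟨Quotient iso, inferInstance, fun q ↦ W q.out, fun q ↦ hfin _, fun q ↦ hproj _,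
    fun q ↦ hW _, fun {q q'} e ↦ ?_, fun M _ _ hM ↦ subsingleton_of_forall_eq 0 fun m ↦ ?_,
    fun {q q'} g hg ↦ ?_⟩⟩
  · rw [← q.out_eq, ← q'.out_eq]
    exact Quotient.sound ⟨e⟩
  · have hWM (i : ι) (g : W i →ₗ[R] M) : g = 0 := by
      obtain ⟨e'⟩ := Quotient.exact (Quotient.out_eq (⟦i⟧ : Quotient iso))
      exact (LinearEquiv.eq_comp_toLinearMap_iff (e₁₂ := e') g 0).1 (hM ⟦i⟧ (g ∘ₗ e'.toLinearMap))
    have hRM : LinearMap.toSpanSingleton R M m ∘ₗ e.symm.toLinearMap = 0 := by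
      classical
      exact LinearMap.pi_ext' fun i ↦ hWM i _
    simpa using LinearMap.congr_fun hRM (e 1)
  · exact (h (W q.out) (W q'.out) (ModuleCat.ofHom g) (hfin _) (hfin _)
      ((projective_iff _).2 (hproj _)) ((projective_iff _).2 (hproj _))
      ((isIndecMod_iff _).2 (hW _)) ((isIndecMod_iff _).2 (hW _))).resolve_right
      fun h0 ↦ hg (congrArg ModuleCat.Hom.hom h0)

namespace IndecProjSystem

variable (D : IndecProjSystem R) {x y z : D.Index}

instance (y : D.Index) : Nontrivial (D.P y) := (D.isIndecomposable y).1

variable {D}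

lemma comp_ne_zero {g : D.P x →ₗ[R] D.P y} {g' : D.P y →ₗ[R] D.P z} (hg : g ≠ 0) (hg' : g' ≠ 0) :
    g' ∘ₗ g ≠ 0 := fun h ↦ by
  obtain ⟨v, hv⟩ := exists_ne (0 : D.P x)
  refine hv ((D.injective hg').comp (D.injective hg) ?_)
  simpa using LinearMap.congr_fun h v

lemma eq_of_surjective {g : D.P y →ₗ[R] D.P z} (hg : Surjective g) : y = z := by
  obtain ⟨s, hs⟩ := Module.projective_lifting_property g LinearMap.id hg
  exact D.eq_of_linearEquiv (.ofBijective g ((D.isIndecomposable y).bijective_of_retract hs).2)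

lemma apply_mem_jacobson [IsArtinianRing R] (h : y ≠ z) (g : D.P y →ₗ[R] D.P z) (v : D.P y) :
    g v ∈ Module.jacobson R (D.P z) :=
  (D.isIndecomposable z).le_jacobson
    (fun htop ↦ h (eq_of_surjective (LinearMap.range_eq_top.1 htop))) ⟨v, rfl⟩

instance [IsArtinianRing R] : PartialOrder D.Index where
  le y z := ∃ g : D.P y →ₗ[R] D.P z, g ≠ 0
  le_refl y := ⟨LinearMap.id, fun h ↦ by
    obtain ⟨v, hv⟩ := exists_ne (0 : D.P y)
    exact hv (LinearMap.congr_fun h v)⟩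
  le_trans _ _ _ := fun ⟨_, hg⟩ ⟨_, hg'⟩ ↦ ⟨_, comp_ne_zero hg hg'⟩
  le_antisymm y z := fun ⟨g, hg⟩ ⟨g', hg'⟩ ↦ by
    have hbij := IsArtinian.bijective_of_injective_endomorphism _
      (D.injective (comp_ne_zero hg' hg))
    exact eq_of_surjective (Surjective.of_comp hbij.2)

end IndecProjSystem

section MatrixHom

variable {K : Type*} {ι κ μ ν : Type*} [CommRing K] [Algebra K R] [Fintype ι] [Fintype κ]
  [Fintype μ] {V W : Type*} [AddCommGroup V] [Module R V] [AddCommGroup W] [Module R W]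
  [Module K W] [IsScalarTower K R W]

variable (R W) in
/-- The map `W^κ → W^ν` given by a matrix of scalars. -/
def scalarHom (A : Matrix ν κ K) : (κ → W) →ₗ[R] (ν → W) :=
  ofEntries fun j i ↦ A j i • LinearMap.id

/-- The map `V^κ → W^ν` given by the pencil of matrices `M` in the maps `b`. -/
def pencilHom (b : ι → V →ₗ[R] W) (M : ι → Matrix ν κ K) : (κ → V) →ₗ[R] (ν → W) :=
  ofEntries fun j i ↦ ∑ l, M l j i • b l

lemma scalarHom_smul_one [DecidableEq κ] (c : K) :
    scalarHom R W (c • 1 : Matrix κ κ K) = c • LinearMap.id := by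
  refine LinearMap.ext fun x ↦ funext fun j ↦ ?_
  rw [scalarHom, ofEntries_apply, Finset.sum_eq_single j (fun i _ hi ↦ ?_) (by simp)]
  · simp
  · simp [Matrix.one_apply_ne hi.symm]

lemma exists_scalarHom_eq (h : ∀ g : W →ₗ[R] W, ∃ c : K, g = c • LinearMap.id)
    (φ : (κ → W) →ₗ[R] (ν → W)) : ∃ A : Matrix ν κ K, scalarHom R W A = φ := by
  obtain ⟨f, rfl⟩ := exists_ofEntries_eq φ
  choose A hA using fun j i ↦ h (f j i)
  exact ⟨.of A, congrArg ofEntries (funext₂ fun j i ↦ (hA j i).symm)⟩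

lemma exists_pencilHom_eq (b : Module.Basis ι K (V →ₗ[R] W)) (φ : (κ → V) →ₗ[R] (ν → W)) :
    ∃ M : ι → Matrix ν κ K, pencilHom b M = φ := by
  obtain ⟨f, rfl⟩ := exists_ofEntries_eq φ
  exact ⟨fun l ↦ .of fun j i ↦ b.repr (f j i) l,
    congrArg ofEntries (funext₂ fun j i ↦ b.sum_repr (f j i))⟩

lemma pencilHom_injective (b : Module.Basis ι K (V →ₗ[R] W)) :
    Injective (pencilHom b : (ι → Matrix ν κ K) → (κ → V) →ₗ[R] (ν → W)) := by
  intro M M' h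
  funext l j i
  have hji := congrFun₂ (ofEntries_injective h) j i
  exact congrFun (b.equivFun.symm.injective (by simpa [b.equivFun_symm_apply] using hji)) l

lemma pencilHom_add (b : ι → V →ₗ[R] W) (M M' : ι → Matrix ν κ K) :
    pencilHom b M + pencilHom b M' = pencilHom b (M + M') := by
  simp [pencilHom, ofEntries_add, add_smul, Finset.sum_add_distrib]

lemma scalarHom_comp_pencilHom (b : ι → V →ₗ[R] W) (A : Matrix ν μ K) (M : ι → Matrix μ κ K) :
    scalarHom R W A ∘ₗ pencilHom b M = pencilHom b fun l ↦ A * M l := by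
  simp only [scalarHom, pencilHom, ofEntries_comp]
  congr! 3 with k i
  simp only [LinearMap.smul_comp, LinearMap.id_comp, Finset.smul_sum, smul_smul,
    Matrix.mul_apply, Finset.sum_smul]
  exact Finset.sum_comm

lemma pencilHom_comp_scalarHom [Module K V] [IsScalarTower K R V] (b : ι → V →ₗ[R] W)
    (M : ι → Matrix ν μ K) (A : Matrix μ κ K) :
    pencilHom b M ∘ₗ scalarHom R V A = pencilHom b fun l ↦ M l * A := by
  simp only [scalarHom, pencilHom, ofEntries_comp]
  congr! 3 with k i
  refine LinearMap.ext fun x ↦ ?_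
  simp only [LinearMap.sum_apply, LinearMap.comp_apply, LinearMap.smul_apply, LinearMap.id_apply,
    LinearMap.map_smul_of_tower, smul_smul, Matrix.mul_apply, Finset.sum_smul]
  exact Finset.sum_comm

end MatrixHom

lemma exists_homShiftVanishes_hasScalarEnd {K ι : Type} [Field K] [Algebra K R] [Finite ι]
    [Nontrivial ι] {V W : Type} [AddCommGroup V] [Module R V] [Module K V] [IsScalarTower K R V]
    [AddCommGroup W] [Module R W] [Module K W] [IsScalarTower K R W]
    (b : Module.Basis ι K (V →ₗ[R] W)) (hV : ∀ g : V →ₗ[R] V, ∃ c : K, g = c • LinearMap.id)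
    (hW : ∀ g : W →ₗ[R] W, ∃ c : K, g = c • LinearMap.id) (m : ℕ) :
    ∃ (a c : ℕ) (f : (Fin a → V) →ₗ[R] (Fin c → W)),
      m ≤ c ∧ HomShiftVanishes f f ∧ HasScalarEnd K f := by
  have := Fintype.ofFinite ι
  obtain ⟨a, c, M, hm, hrig, hbrick⟩ := exists_rigid_brick_matrices K ι m
  refine ⟨a, c, pencilHom b M, hm, fun φ ↦ ?_, fun α β hαβ ↦ ?_⟩
  · obtain ⟨G, rfl⟩ := exists_pencilHom_eq b φ
    obtain ⟨A, B, hAB⟩ := hrig G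
    refine ⟨scalarHom R W A, scalarHom R V B, ?_⟩
    rw [scalarHom_comp_pencilHom, pencilHom_comp_scalarHom, pencilHom_add]
    exact congrArg _ (funext hAB)
  · obtain ⟨A, rfl⟩ := exists_scalarHom_eq hW α
    obtain ⟨B, rfl⟩ := exists_scalarHom_eq hV β
    rw [scalarHom_comp_pencilHom, pencilHom_comp_scalarHom] at hαβ
    obtain ⟨s, rfl⟩ := hbrick A B (congrFun (pencilHom_injective b hαβ))
    exact ⟨s, scalarHom_smul_one s⟩

namespace IndecProjSystem

section

variable {D : IndecProjSystem R} [IsArtinianRing R] {ι κ : Type*} [Finite ι]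
  {y : ι → D.Index} {z : κ → D.Index}

lemma pi_apply_mem_jacobson (h : ∀ i j, y i ≠ z j) (φ : (∀ i, D.P (y i)) →ₗ[R] ∀ j, D.P (z j))
    (x : ∀ i, D.P (y i)) (j : κ) : φ x j ∈ Module.jacobson R (D.P (z j)) := by
  have := Fintype.ofFinite ι
  obtain ⟨f, rfl⟩ := exists_ofEntries_eq φ
  rw [ofEntries_apply]
  exact Submodule.sum_mem _ fun i _ ↦ apply_mem_jacobson (h i j) _ _

end

variable {D : IndecProjSystem R} {K : Type} [Field K] [IsAlgClosed K] [Algebra K R]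
  [FiniteDimensional K R] {y z : D.Index}

variable (K) in
lemma exists_eq_smul_id (g : D.P y →ₗ[R] D.P y) : ∃ c : K, g = c • LinearMap.id := by
  have : Module.Finite K (D.P y) := .trans R _
  obtain ⟨c, hc⟩ := Module.End.exists_eigenvalue (g.restrictScalars K)
  obtain ⟨v, hv⟩ := hc.exists_hasEigenvector
  refine ⟨c, sub_eq_zero.1 (by_contra fun h ↦ hv.2 (D.injective h ?_))⟩
  simpa [sub_eq_zero] using hv.apply_eq_smul

variable [IsArtinianRing R]

/-- Two independent maps `P y → P z` would yield preprojective representations of a Kronecker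
quiver of unbounded dimension. -/
lemma exists_eq_smul (hB : BoundedTauRigid R) {g : D.P y →ₗ[R] D.P z} (hg : g ≠ 0)
    (g' : D.P y →ₗ[R] D.P z) : ∃ c : K, c • g = g' := by
  obtain rfl | hyz := eq_or_ne y z
  · obtain ⟨c, rfl⟩ := D.exists_eq_smul_id K g
    obtain ⟨c', rfl⟩ := D.exists_eq_smul_id K g'
    exact ⟨c' / c, by rw [smul_smul, div_mul_cancel₀ _ (by rintro rfl; simp at hg)]⟩
  have : Module.Finite K (D.P y →ₗ[R] D.P z) := finite_linearMap R (D.P y) (D.P z) K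
  let b := Module.finBasis K (D.P y →ₗ[R] D.P z)
  obtain hn | hn := le_or_gt (Module.finrank K (D.P y →ₗ[R] D.P z)) 1
  · have : Nontrivial (D.P y →ₗ[R] D.P z) := ⟨g, 0, hg⟩
    exact (finrank_eq_one_iff_of_nonzero' g hg).1 (hn.antisymm Module.finrank_pos) g'
  obtain ⟨B, hB⟩ := hB.exists_card_le K
  have : Nontrivial (Fin (Module.finrank K (D.P y →ₗ[R] D.P z))) := Fin.nontrivial_iff_two_le.2 hn
  obtain ⟨a, c, f, hc, hrig, hend⟩ := exists_homShiftVanishes_hasScalarEnd b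
    (D.exists_eq_smul_id K) (D.exists_eq_smul_id K) (B + 1)
  have : Module.Projective R (Fin a → D.P y) := projective_pi
  have hcB : c ≤ B := hB (W := fun _ ↦ D.P z) hrig hend
    (pi_apply_mem_jacobson (y := fun _ ↦ y) (z := fun _ ↦ z) (fun _ _ ↦ hyz) f)
  omega

end IndecProjSystem

section Zigzag

variable {K : Type*} [Ring K] {p N : ℕ}

lemma exists_diagonal_recurrence (N : ℕ) (D : ℕ → ℕ → K) (c d : ℕ → K) :
    ∃ A : ℕ → ℕ → K, (∀ v < N, ∀ w, A (v + 1) (w + 1) = A v w + D v w) ∧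
      (∀ w, A 0 (w + 1) = c w) ∧ ∀ w ≤ N, A N w = d w := by
  refine ⟨fun v w ↦ if v < w then c (w - v - 1) + ∑ i ∈ Finset.range v, D i (w - v + i)
    else d (w + (N - v)) - ∑ i ∈ Finset.range (N - v), D (v + i) (w + i),
    fun v hv w ↦ ?_, by simp, fun w hw ↦ by simp [hw.not_gt]⟩
  obtain h | h := lt_or_ge v w
  · have hw : w - v + v = w := by omega
    simp [h, Finset.sum_range_succ, add_assoc, hw]
  · have hk : N - v = N - (v + 1) + 1 := by omega
    have hw : w + 1 + (N - (v + 1)) = w + (N - (v + 1) + 1) := by omega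
    simp only [add_lt_add_iff_right, h.not_gt, if_false, hk, hw, Finset.sum_range_succ', add_zero,
      add_right_comm v 1, add_right_comm w 1, ← add_assoc]
    abel

lemma eq_ite_of_diagonal_recurrence {A : ℕ → ℕ → K}
    (h : ∀ v < N, ∀ w < N, A (v + 1) (w + 1) = A v w) (h₀ : ∀ w < N, A 0 (w + 1) = 0)
    (hN : ∀ w < N, A N w = 0) {v w : ℕ} (hv : v ≤ N) (hw : w ≤ N) :
    A v w = if v = w then A 0 0 else 0 := by
  have hdiag (v w k : ℕ) (hv : v + k ≤ N) (hw : w + k ≤ N) : A (v + k) (w + k) = A v w := by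
    induction k with
    | zero => rfl
    | succ k ih => exact (h (v + k) (by omega) (w + k) (by omega)).trans (ih (by omega) (by omega))
  obtain hvw | rfl | hvw := lt_trichotomy v w
  · obtain ⟨k, rfl⟩ := Nat.exists_eq_add_of_lt hvw
    rw [if_neg hvw.ne, ← h₀ k (by omega), ← hdiag 0 (k + 1) v (by omega) (by omega)]
    congr 1 <;> omega
  · simpa using hdiag 0 0 v (by omega) (by omega)
  · obtain ⟨k, rfl⟩ := Nat.exists_eq_add_of_le hv
    rw [if_neg hvw.ne', ← hN (w + k) (by omega), hdiag v w k (by omega) (by omega)]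

lemma not_modEq_succ (hp : 2 ≤ p) (u : ℕ) : ¬ u ≡ u + 1 [MOD p] := fun h ↦ by
  have := Nat.le_of_dvd one_pos (by simpa using (Nat.modEq_iff_dvd' (Nat.le_succ u)).1 h)
  omega

lemma exists_zigzag_eq (hp : 2 ≤ p) (N : ℕ) {C : ℕ → ℕ → K}
    (hC : ∀ v w, ¬ (v ≡ w [MOD p] ∨ v ≡ w + 1 [MOD p]) → C v w = 0) :
    ∃ A B : ℕ → ℕ → K, (∀ v w, ¬ v ≡ w [MOD p] → A v w = 0) ∧
      (∀ v w, ¬ v ≡ w + 1 [MOD p] → B v w = 0) ∧ (∀ w, B 0 w = 0) ∧ (∀ w, B (N + 1) w = 0) ∧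
      ∀ v ≤ N, ∀ w < N, A v w + A v (w + 1) + (B v w + B (v + 1) w) = C v w := by
  obtain ⟨A, hA, hA₀, hAN⟩ :=
    exists_diagonal_recurrence N (fun v w ↦ C (v + 1) w - C v w) (C 0) (C N)
  refine ⟨fun v w ↦ if v ≡ w [MOD p] then A v w else 0,
    fun v w ↦ if v ≡ w + 1 [MOD p] ∧ v ≠ 0 ∧ v ≠ N + 1 then C v w - A v (w + 1) else 0,
    fun v w h ↦ if_neg h, fun v w h ↦ if_neg fun h' ↦ h h'.1, by simp, by simp,
    fun v hv w hw ↦ ?_⟩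
  have hsucc : v + 1 ≡ w + 1 [MOD p] ↔ v ≡ w [MOD p] :=
    ⟨fun h ↦ h.add_right_cancel' 1, fun h ↦ h.add_right 1⟩
  by_cases h : v ≡ w [MOD p]
  · have h' : ¬ v ≡ w + 1 [MOD p] := fun h' ↦ not_modEq_succ hp w (h.symm.trans h')
    obtain rfl | hvN := hv.eq_or_lt
    · simp [h, h', hAN w hw.le]
    · have hAC : C (v + 1) w - A (v + 1) (w + 1) = C v w - A v w := by rw [hA v hvN]; abel
      simp [h, h', hsucc, hvN.ne, hAC]
  · by_cases h' : v ≡ w + 1 [MOD p]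
    · obtain rfl | hv₀ := eq_or_ne v 0
      · simp [h, h', hsucc, hA₀]
      · have hvN : v ≠ N + 1 := by omega
        simp [h, h', hsucc, hv₀, hvN]
    · simp [h, h', hsucc, hC v w (by tauto)]

lemma eq_ite_of_zigzag_eq (hp : 2 ≤ p) {A B : ℕ → ℕ → K} (hA : ∀ v w, ¬ v ≡ w [MOD p] → A v w = 0)
    (hB : ∀ v w, ¬ v ≡ w + 1 [MOD p] → B v w = 0) (hB₀ : ∀ w, B 0 w = 0)
    (hBN : ∀ w, B (N + 1) w = 0)
    (h : ∀ v ≤ N, ∀ w < N, A v w + A v (w + 1) = B v w + B (v + 1) w) {v w : ℕ} (hv : v ≤ N)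
    (hw : w ≤ N) : A v w = if v = w then A 0 0 else 0 := by
  have hAB (v : ℕ) (hv : v ≤ N) (w : ℕ) (hw : w < N) : A v w = B (v + 1) w := by
    by_cases hvw : v ≡ w [MOD p]
    · have hvw' : ¬ v ≡ w + 1 [MOD p] := fun h' ↦ not_modEq_succ hp w (hvw.symm.trans h')
      simpa [hA _ _ hvw', hB _ _ hvw'] using h v hv w hw
    · rw [hA _ _ hvw, hB _ _ fun h' ↦ hvw (h'.add_right_cancel' 1)]
  have hAB' (v : ℕ) (hv : v ≤ N) (w : ℕ) (hw : w < N) : A v (w + 1) = B v w := by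
    simpa [hAB v hv w hw, add_comm (B v w)] using h v hv w hw
  exact eq_ite_of_diagonal_recurrence
    (fun v hv w hw ↦ (hAB' _ hv w hw).trans (hAB v hv.le w hw).symm)
    (fun w hw ↦ (hAB' 0 N.zero_le w hw).trans (hB₀ w))
    (fun w hw ↦ (hAB N le_rfl w hw).trans (hBN w)) hv hw

end Zigzag

/-- The elements `b u` and `t u`, with `u` read modulo `p`, form a crown: `b 0 < t 0 > b (p - 1) <
t (p - 1) > ⋯ > b 0`, with no further relations. -/
structure IsCrown {α : Type*} [LE α] (p : ℕ) (b t : ℕ → α) : Prop where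
  two_le : 2 ≤ p
  bot_le_bot_iff (u v : ℕ) : b u ≤ b v ↔ u ≡ v [MOD p]
  top_le_top_iff (u v : ℕ) : t u ≤ t v ↔ u ≡ v [MOD p]
  bot_le_top_iff (u v : ℕ) : b u ≤ t v ↔ v ≡ u [MOD p] ∨ v ≡ u + 1 [MOD p]

namespace IsCrown

variable {α : Type*} [PartialOrder α] {p : ℕ} {b t : ℕ → α} (h : IsCrown p b t)
include h

lemma bot_eq_bot {u v : ℕ} (huv : u ≡ v [MOD p]) : b u = b v :=
  le_antisymm ((h.bot_le_bot_iff u v).2 huv) ((h.bot_le_bot_iff v u).2 huv.symm)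

lemma top_eq_top {u v : ℕ} (huv : u ≡ v [MOD p]) : t u = t v :=
  le_antisymm ((h.top_le_top_iff u v).2 huv) ((h.top_le_top_iff v u).2 huv.symm)

lemma bot_ne_top (u v : ℕ) : b u ≠ t v := fun huv ↦ by
  have h₀ := (h.bot_le_top_iff u u).2 (.inl rfl)
  have h₁ := (h.bot_le_top_iff u (u + 1)).2 (.inr rfl)
  rw [huv, h.top_le_top_iff] at h₀ h₁
  exact not_modEq_succ h.two_le u (h₀.symm.trans h₁)

end IsCrown

namespace IndecProjSystem

variable {D : IndecProjSystem R}

section IncidenceHom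

variable {K : Type} [Field K] [Algebra K R] {e : ∀ y z, D.P y →ₗ[R] D.P z} {x y z : ℕ → D.Index}
  {l m n : ℕ}

/-- The map `∏ i < n, P (y i) → ∏ j < m, P (z j)` with components `C j i • e (y i) (z j)`. -/
def incidenceHom (e : ∀ y z, D.P y →ₗ[R] D.P z) (y z : ℕ → D.Index) (m n : ℕ) (C : ℕ → ℕ → K) :
    (∀ i : Fin n, D.P (y i)) →ₗ[R] ∀ j : Fin m, D.P (z j) :=
  ofEntries fun j i ↦ C j i • e (y i) (z j)

lemma incidenceHom_congr {C C' : ℕ → ℕ → K} (h : ∀ j < m, ∀ i < n, C j i = C' j i) :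
    incidenceHom e y z m n C = incidenceHom e y z m n C' :=
  congrArg ofEntries (funext₂ fun j i ↦ by rw [h j j.2 i i.2])

lemma incidenceHom_add (C C' : ℕ → ℕ → K) :
    incidenceHom e y z m n C + incidenceHom e y z m n C' =
      incidenceHom e y z m n fun j i ↦ C j i + C' j i := by
  simp only [incidenceHom, ofEntries_add, add_smul]

lemma incidenceHom_comp {C C' : ℕ → ℕ → K}
    (h : ∀ i j k, C' k j ≠ 0 → C j i ≠ 0 → e (y j) (z k) ∘ₗ e (x i) (y j) = e (x i) (z k)) :
    incidenceHom e y z m n C' ∘ₗ incidenceHom e x y n l C =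
      incidenceHom e x z m l fun k i ↦ ∑ j ∈ Finset.range n, C' k j * C j i := by
  simp only [incidenceHom, ofEntries_comp]
  refine congrArg ofEntries (funext₂ fun k i ↦ LinearMap.ext fun v ↦ ?_)
  rw [← Fin.sum_univ_eq_sum_range (fun j ↦ C' k j * C j i), Finset.sum_smul]
  simp only [LinearMap.sum_apply]
  refine Finset.sum_congr rfl fun j _ ↦ ?_
  by_cases hC' : C' k j = 0
  · simp [hC']
  by_cases hC : C j i = 0
  · simp [hC]
  rw [← h i j k hC' hC]
  simp [LinearMap.map_smul_of_tower, smul_smul]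

variable [IsArtinianRing R] (he : ∀ y z, y ≤ z → e y z ≠ 0)
include he

lemma eq_of_incidenceHom_eq {C C' : ℕ → ℕ → K}
    (h : incidenceHom e y z m n C = incidenceHom e y z m n C') {j i : ℕ} (hj : j < m) (hi : i < n)
    (hle : y i ≤ z j) : C j i = C' j i :=
  smul_left_injective K (he _ _ hle) (congrFun₂ (ofEntries_injective h) ⟨j, hj⟩ ⟨i, hi⟩)

lemma exists_incidenceHom_eq [IsAlgClosed K] [FiniteDimensional K R] (hB : BoundedTauRigid R)
    (φ : (∀ i : Fin n, D.P (y i)) →ₗ[R] ∀ j : Fin m, D.P (z j)) :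
    ∃ C : ℕ → ℕ → K, (∀ j i, ¬ y i ≤ z j → C j i = 0) ∧ incidenceHom e y z m n C = φ := by
  obtain ⟨f, rfl⟩ := exists_ofEntries_eq φ
  have hf (j : Fin m) (i : Fin n) :
      ∃ c : K, (¬ y i ≤ z j → c = 0) ∧ c • e (y i) (z j) = f j i := by
    by_cases hle : y i ≤ z j
    · exact (exists_eq_smul hB (he _ _ hle) (f j i)).imp fun c hc ↦ ⟨absurd hle, hc⟩
    · exact ⟨0, fun _ ↦ rfl, by rw [zero_smul]; exact (not_not.1 fun h ↦ hle ⟨_, h⟩).symm⟩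
  choose C hC hCf using hf
  refine ⟨fun j i ↦ if h : j < m ∧ i < n then C ⟨j, h.1⟩ ⟨i, h.2⟩ else 0, fun j i hle ↦ ?_,
    congrArg ofEntries (funext₂ fun j i ↦ ?_)⟩
  · dsimp only
    split_ifs with h
    · exact hC ⟨j, h.1⟩ ⟨i, h.2⟩ hle
    · rfl
  · simpa using hCf j i

end IncidenceHom

variable [IsArtinianRing R]

variable (D) in
lemma exists_hom_system : ∃ e : ∀ y z, D.P y →ₗ[R] D.P z,
    (∀ y, e y y = LinearMap.id) ∧ ∀ y z, y ≤ z → e y z ≠ 0 := by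
  classical
  have hone (y : D.Index) : (LinearMap.id : D.P y →ₗ[R] D.P y) ≠ 0 := one_ne_zero
  refine ⟨fun y ↦ update (fun z ↦ if h : y ≤ z then h.choose else 0) y LinearMap.id,
    fun y ↦ update_self .., fun y z h ↦ ?_⟩
  dsimp only
  obtain rfl | hyz := eq_or_ne z y
  · rw [update_self]
    exact hone z
  · rw [update_of_ne hyz, dif_pos h]
    exact h.choose_spec

/-- The `0`-`1` matrix of the crown unrolled into a zigzag. -/
def zigzagMatrix (K : Type) [Field K] (v w : ℕ) : K := if v = w ∨ v = w + 1 then 1 else 0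

section

variable {K : Type} [Field K] {N : ℕ}

lemma sum_mul_zigzagMatrix (A : ℕ → K) {w : ℕ} (hw : w < N) :
    ∑ j ∈ Finset.range (N + 1), A j * zigzagMatrix K j w = A w + A (w + 1) := by
  have h (j : ℕ) : A j * zigzagMatrix K j w =
      (if j = w then A j else 0) + if j = w + 1 then A j else 0 := by
    unfold zigzagMatrix
    split_ifs <;> first | omega | simp
  simp only [h, Finset.sum_add_distrib, Finset.sum_ite_eq', Finset.mem_range]
  rw [if_pos (by omega), if_pos (by omega)]

lemma sum_zigzagMatrix_mul {B : ℕ → K} (h₀ : B 0 = 0) (hN : B (N + 1) = 0) {v : ℕ} (hv : v ≤ N) :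
    ∑ j ∈ Finset.range N, zigzagMatrix K v j * B (j + 1) = B v + B (v + 1) := by
  have h (j : ℕ) : zigzagMatrix K v j * B (j + 1) =
      (if j + 1 = v then B (j + 1) else 0) + if j = v then B (j + 1) else 0 := by
    unfold zigzagMatrix
    split_ifs <;> first | omega | simp
  simp only [h, Finset.sum_add_distrib]
  congr 1
  · have hsum := Finset.sum_range_succ' (fun j ↦ if j = v then B j else 0) N
    rw [Finset.sum_ite_eq', if_pos (Finset.mem_range.2 (by omega))] at hsum
    simpa [h₀] using hsum.symm
  · obtain rfl | hvN := hv.eq_or_lt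
    · simp [hN]
    · simp [hvN]

end

end IndecProjSystem

namespace IndecProjSystem

section Crown

variable {D : IndecProjSystem R} [IsArtinianRing R] {K : Type} [Field K] [Algebra K R]
  {e : ∀ y z, D.P y →ₗ[R] D.P z} {b t : ℕ → D.Index} {p N : ℕ} (hcr : IsCrown p b t)
  (hid : ∀ y, e y y = LinearMap.id)
include hcr hid

lemma incidenceHom_comp_zigzag {A : ℕ → ℕ → K} (hA : ∀ v w, ¬ v ≡ w [MOD p] → A v w = 0) :
    incidenceHom e t t (N + 1) (N + 1) A ∘ₗ incidenceHom e b t (N + 1) N (zigzagMatrix K) =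
      incidenceHom e b t (N + 1) N fun v w ↦ A v w + A v (w + 1) := by
  rw [incidenceHom_comp fun i j k hkj _ ↦ ?_]
  · exact incidenceHom_congr fun v _ w hw ↦ sum_mul_zigzagMatrix (A v) hw
  · rw [hcr.top_eq_top (not_not.1 (mt (hA k j) hkj)), hid, LinearMap.id_comp]

lemma zigzag_comp_incidenceHom {B : ℕ → ℕ → K} (hB : ∀ v w, ¬ v ≡ w + 1 [MOD p] → B v w = 0)
    (hB₀ : ∀ w, B 0 w = 0) (hBN : ∀ w, B (N + 1) w = 0) :
    incidenceHom e b t (N + 1) N (zigzagMatrix K) ∘ₗ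
        incidenceHom e b b N N (fun v w ↦ B (v + 1) w) =
      incidenceHom e b t (N + 1) N fun v w ↦ B v w + B (v + 1) w := by
  rw [incidenceHom_comp fun i j k _ hji ↦ ?_]
  · exact incidenceHom_congr fun v hv w _ ↦
      sum_zigzagMatrix_mul (B := fun v ↦ B v w) (hB₀ w) (hBN w) (Nat.lt_succ_iff.1 hv)
  · have hmod : j + 1 ≡ i + 1 [MOD p] := not_not.1 (mt (hB (j + 1) i) hji)
    rw [hcr.bot_eq_bot (hmod.add_right_cancel' 1), hid, LinearMap.comp_id]

variable [IsAlgClosed K] [FiniteDimensional K R] (hB : BoundedTauRigid R)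
  (he : ∀ y z, y ≤ z → e y z ≠ 0)
include hB he

lemma homShiftVanishes_zigzag :
    HomShiftVanishes (incidenceHom e b t (N + 1) N (zigzagMatrix K))
      (incidenceHom e b t (N + 1) N (zigzagMatrix K)) := fun φ ↦ by
  obtain ⟨C, hC, rfl⟩ := exists_incidenceHom_eq (K := K) he hB φ
  obtain ⟨A, B, hA, hB, hB₀, hBN, h⟩ := exists_zigzag_eq hcr.two_le N
    fun v w hvw ↦ hC v w (mt (hcr.bot_le_top_iff w v).1 hvw)
  refine ⟨incidenceHom e t t _ _ A, incidenceHom e b b _ _ fun v w ↦ B (v + 1) w, ?_⟩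
  rw [incidenceHom_comp_zigzag hcr hid hA, zigzag_comp_incidenceHom hcr hid hB hB₀ hBN,
    incidenceHom_add]
  exact incidenceHom_congr fun v hv w hw ↦ h v (Nat.lt_succ_iff.1 hv) w hw

lemma hasScalarEnd_zigzag :
    HasScalarEnd K (incidenceHom e b t (N + 1) N (zigzagMatrix K)) := fun α β hαβ ↦ by
  obtain ⟨A, hA, rfl⟩ := exists_incidenceHom_eq (K := K) he hB α
  obtain ⟨B, hB, rfl⟩ := exists_incidenceHom_eq (K := K) he hB β
  replace hA (v w : ℕ) (hvw : ¬ v ≡ w [MOD p]) : A v w = 0 :=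
    hA v w fun hle ↦ hvw ((hcr.top_le_top_iff w v).1 hle).symm
  let B' (v w : ℕ) : K := if v = 0 ∨ v = N + 1 then 0 else B (v - 1) w
  have hB' (v w : ℕ) (hvw : ¬ v ≡ w + 1 [MOD p]) : B' v w = 0 := by
    by_cases hv : v = 0 ∨ v = N + 1
    · exact if_pos hv
    · refine (if_neg hv).trans (hB _ _ fun hle ↦ hvw ?_)
      have := (((hcr.bot_le_bot_iff _ _).1 hle).add_right 1).symm
      rwa [Nat.sub_add_cancel (by omega)] at this
  have hBB' : incidenceHom e b b N N B = incidenceHom e b b N N fun v w ↦ B' (v + 1) w :=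
    incidenceHom_congr fun v hv w _ ↦ by simp [B', hv.ne]
  have hB₀ (w : ℕ) : B' 0 w = 0 := by simp [B']
  have hBN (w : ℕ) : B' (N + 1) w = 0 := by simp [B']
  rw [hBB', incidenceHom_comp_zigzag hcr hid hA, zigzag_comp_incidenceHom hcr hid hB' hB₀ hBN]
    at hαβ
  have hAB' (v : ℕ) (hv : v ≤ N) (w : ℕ) (hw : w < N) :
      A v w + A v (w + 1) = B' v w + B' (v + 1) w := by
    by_cases hle : b w ≤ t v
    · exact eq_of_incidenceHom_eq he hαβ (by omega) hw hle
    · have hvw := mt (hcr.bot_le_top_iff w v).2 hle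
      rw [not_or] at hvw
      rw [hA v w hvw.1, hA v (w + 1) hvw.2, hB' v w hvw.2,
        hB' (v + 1) w fun h ↦ hvw.1 (h.add_right_cancel' 1)]
  refine ⟨A 0 0, LinearMap.ext fun x ↦ funext fun j ↦ ?_⟩
  have hAj (i : Fin (N + 1)) : A j i = if (j : ℕ) = i then A 0 0 else 0 :=
    eq_ite_of_zigzag_eq hcr.two_le hA hB' hB₀ hBN hAB' (by omega) (by omega)
  simp only [incidenceHom, ofEntries_apply, hAj]
  rw [Finset.sum_eq_single j (fun i _ hi ↦ by simp [Fin.val_ne_iff.2 hi.symm]) (by simp)]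
  simp [hid]

end Crown

lemma not_isCrown (K : Type) [Field K] [IsAlgClosed K] [Algebra K R] [FiniteDimensional K R]
    [IsArtinianRing R] {D : IndecProjSystem R} (hB : BoundedTauRigid R) {p : ℕ}
    {b t : ℕ → D.Index} : ¬ IsCrown p b t := fun hcr ↦ by
  obtain ⟨e, hid, he⟩ := D.exists_hom_system
  obtain ⟨N, hN⟩ := hB.exists_card_le K
  have : Module.Projective R (∀ i : Fin N, D.P (b i)) := projective_pi
  have hle : N + 1 ≤ N := hN (W := fun j : Fin (N + 1) ↦ D.P (t j))
    (homShiftVanishes_zigzag (K := K) hcr hid hB he) (hasScalarEnd_zigzag hcr hid hB he)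
    (pi_apply_mem_jacobson (y := fun i : Fin N ↦ b i) (z := fun j : Fin (N + 1) ↦ t j)
      (fun i j ↦ hcr.bot_ne_top i j) _)
  omega

end IndecProjSystem

lemma IsCrown.of_lt {α : Type*} [LE α] {n : ℕ} {b t : ℕ → α} (hn : 2 ≤ n)
    (hbb : ∀ i < n, ∀ j < n, b i ≤ b j ↔ i = j) (htt : ∀ i < n, ∀ j < n, t i ≤ t j ↔ i = j)
    (hbt : ∀ i < n, ∀ j < n, b i ≤ t j ↔ j = i ∨ j = i + 1 ∨ (j = 0 ∧ i + 1 = n)) :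
    IsCrown n (fun u ↦ b (u % n)) (fun u ↦ t (u % n)) := by
  have hlt (u : ℕ) : u % n < n := Nat.mod_lt u (by omega)
  refine ⟨hn, fun u v ↦ hbb _ (hlt u) _ (hlt v), fun u v ↦ htt _ (hlt u) _ (hlt v), fun u v ↦ ?_⟩
  have hsucc : (u + 1) % n = if u % n + 1 = n then 0 else u % n + 1 := by
    rw [Nat.add_mod, Nat.mod_eq_of_lt (a := 1) (by omega)]
    split_ifs with h
    · rw [h, Nat.mod_self]
    · exact Nat.mod_eq_of_lt (by have := hlt u; omega)
  have hu := hlt u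
  have hv := hlt v
  rw [hbt _ hu _ hv, Nat.ModEq, Nat.ModEq, hsucc]
  split_ifs <;> omega

lemma exists_seq_of_reflTransGen {α : Type*} {r : α → α → Prop} {a c : α}
    (h : Relation.ReflTransGen r a c) :
    ∃ (m : ℕ) (s : ℕ → α), s 0 = a ∧ s m = c ∧ ∀ i < m, r (s i) (s (i + 1)) := by
  induction h using Relation.ReflTransGen.head_induction_on with
  | refl => exact ⟨0, fun _ ↦ c, rfl, rfl, by simp⟩
  | @head a _ hab _ ih =>
    obtain ⟨m, s, rfl, hm, hs⟩ := ih
    exact ⟨m + 1, fun i ↦ Nat.casesOn i a s, rfl, hm,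
      Nat.rec (fun _ ↦ hab) fun i _ hi ↦ hs i (by omega)⟩

section Fence

variable {α : Type*} [PartialOrder α] {S : Set α} {x : α} {C : α → Prop} {m : ℕ} {b : ℕ → α}

/-- `a` and `c` are comparable elements of `S`. -/
def ComparableIn (S : Set α) (a c : α) : Prop := a ∈ S ∧ c ∈ S ∧ (a ≤ c ∨ c ≤ a)

/-- `a` and `c` have a common upper bound in `S`. -/
def BoundedIn (S : Set α) (a c : α) : Prop := ∃ s ∈ S, a ≤ s ∧ c ≤ s

/-- A sequence of elements, consecutive ones being bounded in `S`, that joins two elements below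
`x`, the first of which satisfies `C` while the last does not. -/
structure IsSeparatingFence (S : Set α) (x : α) (C : α → Prop) (b : ℕ → α) (m : ℕ) : Prop where
  left_lt : b 0 < x
  left : C (b 0)
  right_lt : b m < x
  right : ¬ C (b m)
  boundedIn {i : ℕ} (hi : i < m) : BoundedIn S (b i) (b (i + 1))

/-- A separating fence of minimal length. -/
structure IsMinimalFence (S : Set α) (x : α) (C : α → Prop) (b : ℕ → α) (m : ℕ) : Prop extends
    IsSeparatingFence S x C b m where
  minimal {k : ℕ} (hk : k < m) (b' : ℕ → α) : ¬ IsSeparatingFence S x C b' k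

lemma exists_isMinimalFence {y y' : α} (hy : y < x) (hy' : y' < x) (hC : C y) (hC' : ¬ C y')
    (h : Relation.ReflTransGen (ComparableIn S) y y') : ∃ b m, IsMinimalFence S x C b m := by
  classical
  have hex : ∃ m b, IsSeparatingFence S x C b m := by
    obtain ⟨m, s, rfl, rfl, hs⟩ := exists_seq_of_reflTransGen h
    refine ⟨m, s, hy, hC, hy', hC', fun {i} hi ↦ ?_⟩
    obtain ⟨hi, hi', hle | hle⟩ := hs i hi
    · exact ⟨_, hi', hle, le_rfl⟩
    · exact ⟨_, hi, le_rfl, hle⟩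
  obtain ⟨b, hb⟩ := Nat.find_spec hex
  exact ⟨b, Nat.find hex, hb, fun hk b' hb' ↦ Nat.find_min hex hk ⟨b', hb'⟩⟩

namespace IsMinimalFence

lemma pos (h : IsMinimalFence S x C b m) : 0 < m := by
  refine Nat.pos_of_ne_zero ?_
  rintro rfl
  exact h.right h.left

lemma not_boundedIn (h : IsMinimalFence S x C b m) {i j : ℕ} (hij : i + 1 < j) (hj : j ≤ m) :
    ¬ BoundedIn S (b i) (b j) := fun hbd ↦ by
  obtain ⟨d, rfl⟩ := Nat.exists_eq_add_of_lt hij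
  obtain ⟨k, rfl⟩ := Nat.exists_eq_add_of_le hj
  refine h.minimal (k := i + 1 + k) (by omega) (fun l ↦ if l ≤ i then b l else b (l + (d + 1)))
    ⟨by simpa using h.left_lt, by simpa using h.left, ?_, ?_, fun {l} hl ↦ ?_⟩
  · have hlt := h.right_lt
    rwa [if_neg (by omega), show i + 1 + k + (d + 1) = i + 1 + d + 1 + k by omega]
  · have hC := h.right
    rwa [if_neg (by omega), show i + 1 + k + (d + 1) = i + 1 + d + 1 + k by omega]
  obtain hli | rfl | hli := lt_trichotomy l i
  · rw [if_pos (by omega), if_pos (by omega)]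
    exact h.boundedIn (by omega)
  · rwa [if_pos le_rfl, if_neg (by omega), ← add_assoc]
  · rw [if_neg (by omega), if_neg (by omega), add_right_comm l 1]
    exact h.boundedIn (by omega)

lemma eq_zero_or_eq_of_lt (h : IsMinimalFence S x C b m) {i : ℕ} (hi : i ≤ m) (hlt : b i < x) :
    i = 0 ∨ i = m := by
  by_contra! hne
  by_cases hC : C (b i)
  · refine h.minimal (k := m - i) (by omega) (fun k ↦ b (k + i)) ⟨by simpa, by simpa, ?_, ?_,
      fun {k} hk ↦ ?_⟩
    · simpa [Nat.sub_add_cancel hi] using h.right_lt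
    · simpa [Nat.sub_add_cancel hi] using h.right
    · rw [add_right_comm k 1]
      exact h.boundedIn (by omega)
  · exact h.minimal (by omega) b ⟨h.left_lt, h.left, hlt, hC, fun hk ↦ h.boundedIn (by omega)⟩

lemma le_iff (h : IsMinimalFence S x C b m) (hS : ∀ s ∈ S, ¬ x ≤ s) {i : ℕ} (hi : i ≤ m) :
    b i ≤ x ↔ i = 0 ∨ i = m := by
  refine ⟨fun hle ↦ h.eq_zero_or_eq_of_lt hi (hle.lt_of_ne ?_), ?_⟩
  · rintro rfl
    obtain him | rfl := hi.lt_or_eq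
    · obtain ⟨s, hs, hle, -⟩ := h.boundedIn him
      exact hS s hs hle
    · exact h.right_lt.false
  · rintro (rfl | rfl)
    exacts [h.left_lt.le, h.right_lt.le]

lemma le_bound_iff (h : IsMinimalFence S x C b m) {i j : ℕ} (hi : i ≤ m) (hj : j < m) {s : α}
    (hs : s ∈ S) (hl : b j ≤ s) (hr : b (j + 1) ≤ s) : b i ≤ s ↔ i = j ∨ i = j + 1 := by
  refine ⟨fun hle ↦ ?_, ?_⟩
  · by_contra! hne
    obtain hij | hij := lt_or_ge i j
    · exact h.not_boundedIn (by omega) hj ⟨s, hs, hle, hr⟩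
    · exact h.not_boundedIn (by omega) hi ⟨s, hs, hl, hle⟩
  · rintro (rfl | rfl)
    exacts [hl, hr]

lemma le_iff_eq (h : IsMinimalFence S x C b m) (hS : ∀ s ∈ S, ¬ x ≤ s)
    (hC : ∀ y z, y < x → z < x → y ≤ z → (C y ↔ C z)) {i j : ℕ} (hi : i ≤ m) (hj : j ≤ m) :
    b i ≤ b j ↔ i = j := by
  refine ⟨fun hle ↦ ?_, fun hij ↦ (congrArg b hij).le⟩
  by_contra hij
  have hbound {k : ℕ} (hk : k < m) (hjk : j = k ∨ j = k + 1) : i = k ∨ i = k + 1 := by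
    obtain ⟨s, hs, hl, hr⟩ := h.boundedIn hk
    exact (h.le_bound_iff hi hk hs hl hr).1 (hle.trans ((h.le_bound_iff hj hk hs hl hr).2 hjk))
  have hright (hjm : j < m) := hbound hjm (.inl rfl)
  have hleft (hj₀ : 0 < j) := hbound (k := j - 1) (by omega) (by omega)
  have hend (hj' : j = 0 ∨ j = m) := (h.le_iff hS hi).1 (hle.trans ((h.le_iff hS hj).2 hj'))
  obtain ⟨rfl, rfl⟩ | ⟨rfl, rfl⟩ : (i = 0 ∧ j = m) ∨ (i = m ∧ j = 0) := by omega
  · exact h.right ((hC _ _ h.left_lt h.right_lt hle).1 h.left)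
  · exact h.right ((hC _ _ h.right_lt h.left_lt hle).2 h.left)

lemma not_bound_le (h : IsMinimalFence S x C b m) (hS : ∀ s ∈ S, ¬ x ≤ s)
    (hC : ∀ y z, y < x → z < x → y ≤ z → (C y ↔ C z)) {i : ℕ} (hi : i < m) {s : α} (hs : s ∈ S)
    (hl : b i ≤ s) (hr : b (i + 1) ≤ s) : ¬ s ≤ x := fun hle ↦ by
  have hi₀ := (h.le_iff hS hi.le).1 (hl.trans hle)
  have him := (h.le_iff hS hi).1 (hr.trans hle)
  obtain ⟨rfl, rfl⟩ : i = 0 ∧ m = 1 := by omega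
  have hlt : s < x := hle.lt_of_not_ge (hS s hs)
  exact h.right ((hC _ _ h.right_lt hlt hr).2 ((hC _ _ h.left_lt hlt hl).1 h.left))

/-- Together with `x` as an additional top, a minimal fence and its upper bounds form a crown. -/
lemma exists_isCrown (h : IsMinimalFence S x C b m) (hS : ∀ s ∈ S, ¬ x ≤ s)
    (hC : ∀ y z, y < x → z < x → y ≤ z → (C y ↔ C z)) :
    ∃ (p : ℕ) (b t : ℕ → α), IsCrown p b t := by
  have hm := h.pos
  have : Nonempty α := ⟨x⟩
  choose! t hts htl htr using fun i (hi : i < m) ↦ h.boundedIn hi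
  have hbt {i j : ℕ} (hi : i ≤ m) (hj : j < m) : b i ≤ t j ↔ i = j ∨ i = j + 1 :=
    h.le_bound_iff hi hj (hts j hj) (htl j hj) (htr j hj)
  refine ⟨m + 1, _, _, IsCrown.of_lt (b := b) (t := fun i ↦ Nat.casesOn i x t) (by omega)
    (fun i hi j hj ↦ h.le_iff_eq hS hC (by omega) (by omega)) ?_ ?_⟩
  · rintro (_ | i) hi (_ | j) hj
    · simp
    · simpa using hS _ (hts j (by omega))
    · simpa using h.not_bound_le hS hC (by omega) (hts i (by omega)) (htl i (by omega))
        (htr i (by omega))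
    · refine ⟨fun hle ↦ ?_, fun hij ↦ by rw [hij]⟩
      have h₁ := (hbt (by omega) (by omega)).1 ((htl i (by omega)).trans hle)
      have h₂ := (hbt (by omega) (by omega)).1 ((htr i (by omega)).trans hle)
      omega
  · rintro i hi (_ | j) hj
    · exact (h.le_iff hS (by omega)).trans (by omega)
    · exact (hbt (by omega) (by omega)).trans (by omega)

end IsMinimalFence

lemma of_reflTransGen_comparableIn (hcr : ∀ (p : ℕ) (b t : ℕ → α), ¬ IsCrown p b t)
    (hS : ∀ s ∈ S, ¬ x ≤ s) (hC : ∀ y z, y < x → z < x → y ≤ z → (C y ↔ C z)) {y y' : α}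
    (hy : y < x) (hy' : y' < x) (h : Relation.ReflTransGen (ComparableIn S) y y') (hCy : C y) :
    C y' := by
  by_contra hCy'
  obtain ⟨b, m, hb⟩ := exists_isMinimalFence hy hy' hCy hCy' h
  obtain ⟨p, b, t, hbt⟩ := hb.exists_isCrown hS hC
  exact hcr p b t hbt

end Fence

section Supported

lemma exists_hom_ne_zero_of_iSup {P M : Type*} [AddCommGroup P] [Module R P] [AddCommGroup M]
    [Module R M] [Module.Projective R P] {ι : Type*} (p : ι → Submodule R M)
    {g : P →ₗ[R] ↥(⨆ i, p i)} (hg : g ≠ 0) : ∃ i, ∃ f : P →ₗ[R] p i, f ≠ 0 := by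
  classical
  by_contra! hp
  let Φ := DFinsupp.lsum ℕ (fun i ↦ (p i).subtype)
  have hrange : LinearMap.range Φ = ⨆ i, p i := (Submodule.iSup_eq_range_dfinsupp_lsum p).symm
  obtain ⟨h, hh⟩ := Module.projective_lifting_property Φ.rangeRestrict
    ((LinearEquiv.ofEq _ _ hrange.symm).toLinearMap ∘ₗ g) Φ.surjective_rangeRestrict
  refine hg (LinearMap.ext fun v ↦ Subtype.ext ?_)
  have hv : h v = 0 := DFinsupp.ext fun i ↦ LinearMap.congr_fun (hp i (DFinsupp.lapply i ∘ₗ h)) v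
  simpa [hv] using congrArg Subtype.val (LinearMap.congr_fun hh v).symm

lemma IsIndecomposable.eq_top_or_eq_top_of_isCompl {M : Type*} [AddCommGroup M] [Module R M]
    (hM : IsIndecomposable R M) {p q : Submodule R M} (hpq : IsCompl p q) : p = ⊤ ∨ q = ⊤ := by
  obtain hp | hp := subsingleton_or_nontrivial p
  · exact .inr (eq_top_of_bot_isCompl (p.subsingleton_iff_eq_bot.1 hp ▸ hpq))
  · exact .inl <| p.range_subtype ▸ LinearMap.range_eq_top.2 (hM.bijective_of_retract
      (Submodule.projectionOnto_comp_subtype hpq)).1.2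

lemma subtype_comp_ne_zero {M N : Type*} [AddCommGroup M] [Module R M] [AddCommGroup N]
    [Module R N] {p : Submodule R M} {g : N →ₗ[R] p} (hg : g ≠ 0) : p.subtype ∘ₗ g ≠ 0 :=
  fun h ↦ hg (LinearMap.ext fun v ↦ Subtype.ext (LinearMap.congr_fun h v))

namespace IndecProjSystem

variable (D : IndecProjSystem R)

/-- The finitely generated modules supported on `W`, that is, the modules none of whose composition
factors is the top of `P z` for some `z ∉ W`. -/
def SupportedOn (W : Set D.Index) : ModuleProp R :=
  fun M _ _ ↦ Module.Finite R M ∧ ∀ z ∉ W, ∀ g : D.P z →ₗ[R] M, g = 0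

/-- The trace in `M` of the projectives `P y` with `y ∈ A`: the sum of the images of all maps
`P y → M`. -/
def trace (A : Set D.Index) (M : Type) [AddCommGroup M] [Module R M] : Submodule R M :=
  ⨆ i : Σ y : A, D.P y →ₗ[R] M, LinearMap.range i.2

variable {D} {A B W : Set D.Index} {M N : Type} [AddCommGroup M] [Module R M] [AddCommGroup N]
  [Module R N]

lemma apply_mem_trace {y : D.Index} (hy : y ∈ A) (g : D.P y →ₗ[R] M) (v : D.P y) :
    g v ∈ D.trace A M :=
  Submodule.mem_iSup_of_mem (⟨⟨y, hy⟩, g⟩ : Σ y : A, D.P y →ₗ[R] M) ⟨v, rfl⟩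

lemma trace_le {p : Submodule R M} (h : ∀ y ∈ A, ∀ (g : D.P y →ₗ[R] M) v, g v ∈ p) :
    D.trace A M ≤ p :=
  iSup_le fun i ↦ by
    rintro _ ⟨v, rfl⟩
    exact h i.1 i.1.2 i.2 v

lemma trace_le_comap (f : M →ₗ[R] N) : D.trace A M ≤ (D.trace A N).comap f :=
  trace_le fun _ hy g v ↦ apply_mem_trace hy (f ∘ₗ g) v

lemma exists_comp_ne_zero {g : M →ₗ[R] N} (hg : g ≠ 0) :
    ∃ (y : D.Index) (h : D.P y →ₗ[R] M), g ∘ₗ h ≠ 0 := by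
  by_contra! hc
  have : Subsingleton (LinearMap.range g) := D.subsingleton_of_hom_eq_zero _ fun y h ↦ by
    obtain ⟨h', rfl⟩ :=
      Module.projective_lifting_property g.rangeRestrict h g.surjective_rangeRestrict
    exact LinearMap.ext fun v ↦ Subtype.ext (LinearMap.congr_fun (hc y h') v)
  exact hg (LinearMap.range_eq_bot.1 ((LinearMap.range g).subsingleton_iff_eq_bot.1 this))

namespace SupportedOn

lemma trace_eq_top (h : D.SupportedOn A M) : D.trace A M = ⊤ := by
  have : Subsingleton (M ⧸ D.trace A M) := D.subsingleton_of_hom_eq_zero _ fun y g ↦ by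
    obtain ⟨g', rfl⟩ := Module.projective_lifting_property (D.trace A M).mkQ g
      (Submodule.mkQ_surjective _)
    by_cases hy : y ∈ A
    · exact LinearMap.ext fun v ↦ (Submodule.Quotient.mk_eq_zero _).2 (apply_mem_trace hy g' v)
    · rw [h.2 y hy g', LinearMap.comp_zero]
  exact Submodule.Quotient.subsingleton_iff.1 this

lemma mono (hAW : A ⊆ W) (h : D.SupportedOn A M) : D.SupportedOn W M :=
  ⟨h.1, fun z hz ↦ h.2 z fun hzA ↦ hz (hAW hzA)⟩

lemma quotient {f : M →ₗ[R] N} (hf : Surjective f) (h : D.SupportedOn W M) :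
    D.SupportedOn W N := by
  have := h.1
  refine ⟨.of_surjective f hf, fun z hz g ↦ ?_⟩
  obtain ⟨g', rfl⟩ := Module.projective_lifting_property f g hf
  rw [h.2 z hz g', LinearMap.comp_zero]

lemma hom_eq_zero (hM : D.SupportedOn A M) (hN : D.SupportedOn B N) (hAB : Disjoint A B)
    (g : M →ₗ[R] N) : g = 0 := by
  by_contra hg
  obtain ⟨y, h, hgh⟩ := exists_comp_ne_zero (D := D) hg
  by_cases hy : y ∈ A
  · exact hgh (hN.2 y (hAB.notMem_of_mem_left hy) _)
  · exact hgh (by rw [hM.2 y hy h, LinearMap.comp_zero])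

lemma of_injective [IsArtinianRing R] {f : M →ₗ[R] N} (hf : Injective f) (h : D.SupportedOn W N) :
    D.SupportedOn W M := by
  have := h.1
  exact ⟨.of_injective f hf, fun z hz g ↦
    LinearMap.ext fun v ↦ hf (by simpa using LinearMap.congr_fun (h.2 z hz (f ∘ₗ g)) v)⟩

end SupportedOn

lemma isTorsionClass_supportedOn : IsTorsionClass (D.SupportedOn W) where
  finite h := h.1
  quotient _ hg h := h.quotient hg
  extension {M N} _ _ _ _ g hg hk hN := by
    have := hk.1
    have := hN.1
    have : Module.Finite R (M ⧸ LinearMap.ker g) :=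
      .equiv (LinearMap.quotKerEquivOfSurjective g hg).symm
    refine ⟨.of_submodule_quotient (LinearMap.ker g), fun z hz f ↦ ?_⟩
    have hgf := LinearMap.congr_fun (hN.2 z hz (g ∘ₗ f))
    exact LinearMap.ext fun v ↦
      congrArg Subtype.val (LinearMap.congr_fun (hk.2 z hz (f.codRestrict _ hgf)) v)

variable [IsArtinianRing R]

lemma supportedOn_P (hW : IsLowerSet W) {y : D.Index} (hy : y ∈ W) : D.SupportedOn W (D.P y) :=
  ⟨inferInstance, fun _ hz g ↦ by_contra fun hg ↦ hz (hW ⟨g, hg⟩ hy)⟩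

lemma supportedOn_trace [Module.Finite R M] (hA : IsLowerSet A) :
    D.SupportedOn A (D.trace A M) := by
  refine ⟨inferInstance, fun z hz g ↦ ?_⟩
  by_contra hg
  obtain ⟨⟨⟨y, hy⟩, f⟩, k, hk⟩ := exists_hom_ne_zero_of_iSup _ hg
  obtain ⟨k', rfl⟩ :=
    Module.projective_lifting_property f.rangeRestrict k f.surjective_rangeRestrict
  refine hz (hA ⟨k', ?_⟩ hy)
  rintro rfl
  exact hk (LinearMap.comp_zero _)

lemma supportedOn_jacobson (x : D.Index) :
    D.SupportedOn (Set.Iio x) (Module.jacobson R (D.P x)) := by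
  refine ⟨inferInstance, fun z hz g ↦ ?_⟩
  by_contra hg
  have hg' := subtype_comp_ne_zero hg
  refine hz (lt_of_le_of_ne (show z ≤ x from ⟨_, hg'⟩) ?_)
  rintro rfl
  have hsurj := (IsArtinian.bijective_of_injective_endomorphism _ (D.injective hg')).2
  refine (Module.jacobson_lt_top R (D.P z)).ne (top_le_iff.1 fun v _ ↦ ?_)
  obtain ⟨u, rfl⟩ := hsurj v
  exact (g u).2

lemma SupportedOn.or_of_union (h : D.SupportedOn (A ∪ B) M) (hM : IsIndecomposable R M)
    (hA : IsLowerSet A) (hB : IsLowerSet B) (hAB : Disjoint A B) :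
    D.SupportedOn A M ∨ D.SupportedOn B M := by
  have := h.1
  have htA : D.SupportedOn A (D.trace A M) := supportedOn_trace hA
  have htB : D.SupportedOn B (D.trace B M) := supportedOn_trace hB
  have hcompl : IsCompl (D.trace A M) (D.trace B M) := by
    refine ⟨Submodule.disjoint_def.2 fun m hmA hmB ↦ ?_,
      codisjoint_iff_le_sup.2 (h.trace_eq_top ▸ trace_le ?_)⟩
    · have hid := SupportedOn.hom_eq_zero
        (htA.of_injective (Submodule.inclusion_injective (inf_le_left (b := D.trace B M))))
        (htB.of_injective (Submodule.inclusion_injective (inf_le_right (a := D.trace A M))))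
        hAB LinearMap.id
      exact congrArg Subtype.val (LinearMap.congr_fun hid ⟨m, hmA, hmB⟩)
    · rintro y (hy | hy) g v
      · exact Submodule.mem_sup_left (apply_mem_trace hy g v)
      · exact Submodule.mem_sup_right (apply_mem_trace hy g v)
  have of_eq_top {C : Set D.Index} (hC : D.SupportedOn C (D.trace C M)) (htop : D.trace C M = ⊤) :
      D.SupportedOn C M := by
    refine hC.quotient (f := (D.trace C M).subtype) (LinearMap.range_eq_top.1 ?_)
    rw [Submodule.range_subtype, htop]
  exact (hM.eq_top_or_eq_top_of_isCompl hcompl).imp (of_eq_top htA) (of_eq_top htB)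

end IndecProjSystem

end Supported

section OnePointExtension

namespace IndecProjSystem

variable {D : IndecProjSystem R} {S : Set D.Index} {x : D.Index} {M N : Type} [AddCommGroup M]
  [Module R M] [AddCommGroup N] [Module R N]

section Linear

variable {K : Type} [Field K] [IsAlgClosed K] [Algebra K R] [FiniteDimensional K R] [Module K M]
  [IsScalarTower K R M] {k : ℕ} {h : Fin k → D.P x →ₗ[R] M}

lemma mem_jacobson_of_linearIndependent (hh : LinearIndependent K h) {p : Submodule R M}
    (hp : ∀ g : D.P x →ₗ[R] p, g = 0) {v : Fin k → D.P x} (hv : ∑ j, h j (v j) ∈ p) (j : Fin k) :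
    v j ∈ Module.jacobson R (D.P x) := by
  have := IsArtinianRing.of_finite K R
  let c : (Fin k → D.P x) →ₗ[R] M := ∑ j, h j ∘ₗ LinearMap.proj j
  have hc (v) : c v = ∑ j, h j (v j) := by simp [c, LinearMap.sum_apply]
  let f : p.comap c →ₗ[R] D.P x := LinearMap.proj j ∘ₗ (p.comap c).subtype
  suffices htop : LinearMap.range f ≠ ⊤ from
    (D.isIndecomposable x).le_jacobson htop ⟨⟨v, by simpa [hc] using hv⟩, rfl⟩
  intro htop
  obtain ⟨σ, hσ⟩ :=
    Module.projective_lifting_property f LinearMap.id (LinearMap.range_eq_top.1 htop)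
  choose d hd using fun i ↦
    D.exists_eq_smul_id K (LinearMap.proj i ∘ₗ (p.comap c).subtype ∘ₗ σ)
  have hcσ (m : D.P x) : c (σ m) = 0 := congrArg Subtype.val (LinearMap.congr_fun
    (hp ((c ∘ₗ (p.comap c).subtype ∘ₗ σ).codRestrict p fun m ↦ (σ m).2)) m)
  have hσd (i : Fin k) (m : D.P x) : (σ m : Fin k → D.P x) i = d i • m :=
    LinearMap.congr_fun (hd i) m
  have hd0 : d j = 0 := Fintype.linearIndependent_iff.1 hh d (LinearMap.ext fun m ↦ by
    simpa [hc, hσd, LinearMap.sum_apply, LinearMap.map_smul_of_tower] using hcσ m) j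
  obtain ⟨m, hm⟩ := exists_ne (0 : D.P x)
  refine hm ?_
  rw [← LinearMap.id_apply (R := R) m, ← hσ]
  exact (hσd j m).trans (by rw [hd0, zero_smul])

omit [IsAlgClosed K] [FiniteDimensional K R] in
lemma trace_sup_range_eq_top (hh : Submodule.span K (Set.range h) = ⊤)
    (hM : D.SupportedOn (insert x S) M) :
    D.trace S M ⊔ LinearMap.range (∑ j, h j ∘ₗ LinearMap.proj j) = ⊤ := by
  refine top_le_iff.1 (hM.trace_eq_top ▸ trace_le ?_)
  rintro y (rfl | hy) g v
  · obtain ⟨d, rfl⟩ :=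
      (Submodule.mem_span_range_iff_exists_fun K).1 (hh ▸ Submodule.mem_top (x := g))
    exact Submodule.mem_sup_right ⟨fun j ↦ d j • v, by simp [LinearMap.sum_apply]⟩
  · exact Submodule.mem_sup_left (apply_mem_trace hy g v)

end Linear

lemma apply_mem_trace_of_mem_jacobson [IsArtinianRing R] (hxS : Set.Iio x ⊆ S)
    (g : D.P x →ₗ[R] M) {v : D.P x} (hv : v ∈ Module.jacobson R (D.P x)) : g v ∈ D.trace S M := by
  have htop := ((supportedOn_jacobson x).mono hxS).trace_eq_top
  exact trace_le_comap (g ∘ₗ (Module.jacobson R (D.P x)).subtype)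
    (htop.ge (Submodule.mem_top (x := (⟨v, hv⟩ : Module.jacobson R (D.P x)))))

variable (K : Type) [Field K] [IsAlgClosed K] [Algebra K R] [FiniteDimensional K R]
  [IsArtinianRing R]

include K

lemma exists_extension_of_trace (hS : IsLowerSet S) (hx : x ∉ S) (hxS : Set.Iio x ⊆ S)
    (hM : D.SupportedOn (insert x S) M) (r : D.trace S M →ₗ[R] N)
    (hN : ∀ f : Module.jacobson R (D.P x) →ₗ[R] N, f = 0) :
    ∃ p : M →ₗ[R] N, p ∘ₗ (D.trace S M).subtype = r := by
  have := hM.1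
  let : Module K M := Module.restrictScalars K R M
  have : IsScalarTower K R M := .restrictScalars K R M
  have := finite_linearMap R (D.P x) M K
  let n := Module.finrank K (D.P x →ₗ[R] M)
  let b := Module.finBasis K (D.P x →ₗ[R] M)
  let c : (Fin n → D.P x) →ₗ[R] M := ∑ j, b j ∘ₗ LinearMap.proj j
  let b' (j) : Module.jacobson R (D.P x) →ₗ[R] D.trace S M :=
    (b j).restrict fun _ hv ↦ apply_mem_trace_of_mem_jacobson hxS (b j) hv
  have hsurj : Surjective ((D.trace S M).subtype.coprod c) := by
    rw [← LinearMap.range_eq_top, LinearMap.range_coprod, Submodule.range_subtype]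
    exact trace_sup_range_eq_top b.span_eq hM
  suffices hker : LinearMap.ker ((D.trace S M).subtype.coprod c) ≤
      LinearMap.ker (r ∘ₗ LinearMap.fst R (D.trace S M) (Fin n → D.P x)) by
    obtain ⟨p, hp⟩ := exists_comp_eq_of_ker_le hsurj hker
    exact ⟨p, LinearMap.ext fun a ↦ by simpa using LinearMap.congr_fun hp (a, 0)⟩
  rintro ⟨a, v⟩ hav
  have hcv : (a : M) = -∑ j, b j (v j) := eq_neg_of_add_eq_zero_left <| by
    simpa [c, LinearMap.sum_apply] using hav
  have hv := mem_jacobson_of_linearIndependent b.linearIndependent ((supportedOn_trace hS).2 x hx)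
    (neg_mem_iff.1 (hcv ▸ a.2))
  have ha : a = -∑ j, b' j ⟨v j, hv j⟩ := Subtype.ext (by simp [hcv, b'])
  have hrb (j) : r (b' j ⟨v j, hv j⟩) = 0 :=
    LinearMap.congr_fun (hN (r ∘ₗ b' j)) ⟨v j, hv j⟩
  simp [ha, hrb]

/-- If every map from the radical of `P x` to `X` vanished, the projection of the trace of `Z` onto
its summand `X` would extend to `Z`. -/
lemma exists_jacobson_hom_ne_zero (hS : IsLowerSet S) (hx : x ∉ S) (hxS : Set.Iio x ⊆ S)
    {Z Y : ModCat R} (hZ : IsIndecomposable R Z) (hZx : D.SupportedOn (insert x S) Z)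
    (hZS : ¬ D.SupportedOn S Z) (hY : IsIndecomposable R Y) (hYS : D.SupportedOn S Y)
    {g : Z →ₗ[R] Y} (hg : g ≠ 0) :
    ∃ X : ModCat R, IsIndecomposable R X ∧ D.SupportedOn S X ∧
      (∃ h : Module.jacobson R (D.P x) →ₗ[R] X, h ≠ 0) ∧
      ∃ u : X →ₗ[R] Y, u ≠ 0 ∧ ¬ Bijective u := by
  have := hZx.1
  have htr : D.SupportedOn S (D.trace S Z) := supportedOn_trace hS
  have not_retract {V : ModCat R} (hV : Nontrivial V) (hVS : D.SupportedOn S V) (s : V →ₗ[R] Z)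
      (r : Z →ₗ[R] V) : r ∘ₗ s ≠ LinearMap.id := fun hrs ↦
    hZS (hVS.quotient (hZ.bijective_of_retract hrs).1.2)
  have hgtr : g ∘ₗ (D.trace S Z).subtype ≠ 0 := fun h0 ↦ by
    obtain ⟨y, f, hf⟩ := exists_comp_ne_zero (D := D) hg
    by_cases hy : y ∈ S
    · exact hf (LinearMap.ext fun v ↦ LinearMap.congr_fun h0 ⟨f v, apply_mem_trace hy f v⟩)
    · exact hf (hYS.2 y hy _)
  obtain ⟨X, s, r, -, hX, hrs, hgs⟩ := exists_isIndecomposable_comp_ne_zero hgtr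
  have hXS : D.SupportedOn S X := htr.quotient (LinearMap.surjective_of_comp_eq_id _ _ hrs)
  refine ⟨X, hX, hXS, ?_, _, hgs, fun hbij ↦ ?_⟩
  · by_contra! hno
    obtain ⟨p, hp⟩ := exists_extension_of_trace K hS hx hxS hZx r hno
    exact not_retract hX.1 hXS ((D.trace S Z).subtype ∘ₗ s) p (by
      rw [← LinearMap.comp_assoc, hp, hrs])
  · let e := LinearEquiv.ofBijective _ hbij
    exact not_retract hY.1 hYS ((D.trace S Z).subtype ∘ₗ s ∘ₗ e.symm.toLinearMap) g
      (LinearMap.ext e.apply_symm_apply)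

end IndecProjSystem

end OnePointExtension

section Component

variable {α : Type*} [PartialOrder α] {S : Set α} {y z w : α}

/-- The connected component of `y` in the comparability graph of `S`. -/
def component (S : Set α) (y : α) : Set α := {z | Relation.ReflTransGen (ComparableIn S) y z}

lemma self_mem_component : y ∈ component S y := .refl

lemma component_subset (hy : y ∈ S) : component S y ⊆ S := fun z hz ↦ by
  obtain rfl | ⟨_, _, h⟩ := hz.cases_tail
  exacts [hy, h.2.1]

lemma mem_component_of_le_or_le (hy : y ∈ S) (hz : z ∈ component S y) (hw : w ∈ S)
    (h : z ≤ w ∨ w ≤ z) : w ∈ component S y :=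
  hz.tail ⟨component_subset hy hz, hw, h⟩

lemma isLowerSet_component (hS : IsLowerSet S) (hy : y ∈ S) : IsLowerSet (component S y) :=
  fun _ _ hle hz ↦
    mem_component_of_le_or_le hy hz (hS hle (component_subset hy hz)) (.inr hle)

lemma isLowerSet_diff_component (hS : IsLowerSet S) (hy : y ∈ S) :
    IsLowerSet (S \ component S y) := fun _ _ hle hz ↦
  ⟨hS hle hz.1, fun hw ↦ hz.2 (mem_component_of_le_or_le hy hw hz.1 (.inl hle))⟩

end Component

section RadicalComponent

namespace IndecProjSystem

variable {D : IndecProjSystem R} [IsArtinianRing R] {S : Set D.Index} {x y z : D.Index}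

section Support

variable {M N : Type} [AddCommGroup M] [Module R M] [AddCommGroup N] [Module R N]

lemma SupportedOn.component_or_diff (hS : IsLowerSet S) (hy : y ∈ S) (hM : IsIndecomposable R M)
    (h : D.SupportedOn S M) :
    D.SupportedOn (component S y) M ∨ D.SupportedOn (S \ component S y) M :=
  SupportedOn.or_of_union (by rwa [Set.union_sdiff_cancel (component_subset hy)]) hM
    (isLowerSet_component hS hy) (isLowerSet_diff_component hS hy) Set.disjoint_sdiff_right

lemma SupportedOn.component_of_hom (hS : IsLowerSet S) (hy : y ∈ S) (hM : IsIndecomposable R M)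
    (h : D.SupportedOn S M) (hN : D.SupportedOn (component S y) N) {g : M →ₗ[R] N} (hg : g ≠ 0) :
    D.SupportedOn (component S y) M :=
  (h.component_or_diff hS hy hM).resolve_right fun h' ↦
    hg (h'.hom_eq_zero hN Set.disjoint_sdiff_left g)

end Support

section ScalarEnd

variable {K : Type} [Field K] [IsAlgClosed K] [Algebra K R] [FiniteDimensional K R]
  {p : Submodule R (D.P x)}

lemma exists_eq_smul_of_submodule (hB : BoundedTauRigid R) {g : D.P y →ₗ[R] p} (hg : g ≠ 0)
    (g' : D.P y →ₗ[R] p) : ∃ c : K, c • g = g' := by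
  obtain ⟨c, hc⟩ := exists_eq_smul (K := K) hB (subtype_comp_ne_zero hg) (p.subtype ∘ₗ g')
  exact ⟨c, LinearMap.ext fun v ↦ Subtype.ext (LinearMap.congr_fun hc v)⟩

lemma forall_comp_eq_smul_iff (hB : BoundedTauRigid R) (φ : p →ₗ[R] p) (c : K) (hyz : y ≤ z)
    (hz : ∃ g : D.P z →ₗ[R] p, g ≠ 0) :
    (∀ g : D.P y →ₗ[R] p, φ ∘ₗ g = c • g) ↔ ∀ g : D.P z →ₗ[R] p, φ ∘ₗ g = c • g := by
  obtain ⟨k, hk⟩ := hyz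
  obtain ⟨g₀, hg₀⟩ := hz
  have hg₀k : g₀ ∘ₗ k ≠ 0 := fun h ↦
    comp_ne_zero hk (subtype_comp_ne_zero hg₀) (by
      rw [LinearMap.comp_assoc, h, LinearMap.comp_zero])
  refine ⟨fun h g ↦ ?_, fun h g ↦ ?_⟩
  · obtain ⟨d, hd⟩ := exists_eq_smul_of_submodule (K := K) hB hg₀ (φ ∘ₗ g₀)
    have hdc : d = c := smul_left_injective K hg₀k <| by
      simpa only [← LinearMap.comp_assoc, ← hd, LinearMap.smul_comp] using h (g₀ ∘ₗ k)
    obtain ⟨a, rfl⟩ := exists_eq_smul_of_submodule (K := K) hB hg₀ g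
    rw [LinearMap.comp_smul, ← hd, hdc, smul_comm]
  · obtain ⟨a, rfl⟩ := exists_eq_smul_of_submodule (K := K) hB hg₀k g
    rw [LinearMap.comp_smul, ← LinearMap.comp_assoc, h g₀, LinearMap.smul_comp, smul_comm]

end ScalarEnd

lemma exists_hom_trace_ne_zero {A : Set D.Index} (hy : y ∈ A) (hyx : y ≤ x) :
    ∃ g : D.P y →ₗ[R] D.trace A (D.P x), g ≠ 0 := by
  obtain ⟨g, hg⟩ := hyx
  exact ⟨g.codRestrict _ (apply_mem_trace hy g), fun h ↦
    hg (LinearMap.ext fun v ↦ congrArg Subtype.val (LinearMap.congr_fun h v))⟩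

section

variable (K : Type) [Field K] [IsAlgClosed K] [Algebra K R] [FiniteDimensional K R]

include K

/-- An endomorphism acts on the maps from each `P w` by a scalar; the scalars agree along the
component because there are no crowns. -/
lemma isIndecomposable_trace_component (hB : BoundedTauRigid R) (hS : IsLowerSet S) (hx : x ∉ S)
    (hxS : Set.Iio x ⊆ S) (hy : y < x) :
    IsIndecomposable R (D.trace (component S y) (D.P x)) := by
  let E := D.trace (component S y) (D.P x)
  have hE : D.SupportedOn (component S y) E := supportedOn_trace (isLowerSet_component hS (hxS hy))
  obtain ⟨g₀, hg₀⟩ := exists_hom_trace_ne_zero (self_mem_component (S := S)) hy.le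
  have : Nontrivial E := by
    by_contra hE
    have := not_nontrivial_iff_subsingleton.1 hE
    exact hg₀ (LinearMap.ext fun v ↦ Subsingleton.elim _ _)
  refine isIndecomposable_of_end_eq_smul K fun φ ↦ ?_
  obtain ⟨c, hc⟩ := exists_eq_smul_of_submodule (K := K) hB hg₀ (φ ∘ₗ g₀)
  refine ⟨c, sub_eq_zero.1 (by_contra fun hφ ↦ ?_)⟩
  obtain ⟨w, g, hg⟩ := exists_comp_ne_zero (D := D) hφ
  have hw : w ∈ component S y := by_contra fun hw ↦ hg (by rw [hE.2 w hw g, LinearMap.comp_zero])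
  have hwx : w < x := by
    refine lt_of_le_of_ne ⟨_, subtype_comp_ne_zero (g := g) ?_⟩ fun h ↦
      hx (h ▸ component_subset (hxS hy) hw)
    rintro rfl
    exact hg (LinearMap.comp_zero _)
  have hstep (v u : D.Index) (_ : v < x) (hu : u < x) (hvu : v ≤ u) :
      (∀ g : D.P v →ₗ[R] E, φ ∘ₗ g = c • g) ↔ ∀ g : D.P u →ₗ[R] E, φ ∘ₗ g = c • g := by
    by_cases huE : u ∈ component S y
    · exact forall_comp_eq_smul_iff hB φ c hvu (exists_hom_trace_ne_zero huE hu.le)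
    · have hvE : v ∉ component S y := fun hvE ↦
        huE (mem_component_of_le_or_le (hxS hy) hvE (hxS hu) (.inl hvu))
      simp [hE.2 v hvE, hE.2 u huE]
  refine hg ?_
  rw [LinearMap.sub_comp, sub_eq_zero, LinearMap.smul_comp, LinearMap.id_comp]
  refine of_reflTransGen_comparableIn (fun p b t ↦ not_isCrown K hB) (fun s hs hxs ↦ hx (hS hxs hs))
    hstep hy hwx hw (fun g ↦ ?_) g
  obtain ⟨a, rfl⟩ := exists_eq_smul_of_submodule (K := K) hB hg₀ g
  rw [LinearMap.comp_smul, ← hc, smul_comm]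

end

end IndecProjSystem

end RadicalComponent

section Predecessors

/-- A function that is weakly increasing along nonzero maps between indecomposable modules of `C`,
and strictly increasing along those that are not isomorphisms. -/
def IsHomRank (C : ModuleProp R) (r : ModCat R → ℕ) : Prop :=
  ∀ {Y Y' : ModCat R}, IsIndecomposable R Y → C Y → IsIndecomposable R Y' → C Y' →
    ∀ g : Y →ₗ[R] Y', g ≠ 0 → r Y ≤ r Y' ∧ (r Y = r Y' → Bijective g)

/-- `Z` and `Y` are indecomposable modules of `C` with a nonzero map `Z → Y`. -/
def IsHomPred (C : ModuleProp R) (Z Y : ModCat R) : Prop :=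
  IsIndecomposable R Z ∧ C Z ∧ IsIndecomposable R Y ∧ C Y ∧ ∃ g : Z →ₗ[R] Y, g ≠ 0

/-- `Y` is an indecomposable module of `C`, all of whose predecessors in `C` (the modules from which
a chain of nonzero maps between indecomposable modules of `C` leads to `Y`) lie in `C'`. -/
structure PredecessorsIn (C C' : ModuleProp R) (Y : ModCat R) : Prop where
  isIndecomposable : IsIndecomposable R Y
  mem : C Y
  of_reflTransGen {Z : ModCat R} : Relation.ReflTransGen (IsHomPred C) Z Y → C' Z

lemma PredecessorsIn.of_hom {C C' : ModuleProp R} {Y Z : ModCat R} (h : PredecessorsIn C C' Y)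
    (hZ : IsIndecomposable R Z) (hCZ : C Z) {g : Z →ₗ[R] Y} (hg : g ≠ 0) :
    PredecessorsIn C C' Z :=
  ⟨hZ, hCZ, fun hV ↦ h.of_reflTransGen (hV.tail ⟨hZ, hCZ, h.isIndecomposable, h.mem, g, hg⟩)⟩

namespace IndecProjSystem

variable {D : IndecProjSystem R} [IsArtinianRing R] {S A : Set D.Index} {x y : D.Index}
  {r : ModCat R → ℕ}

lemma exists_hom_of_trace_ne_zero {X : Type} [AddCommGroup X] [Module R X] (hxA : x ∉ A)
    (hX : D.SupportedOn A X) {h : Module.jacobson R (D.P x) →ₗ[R] X} (hh : h ≠ 0) :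
    ∃ k : D.trace A (D.P x) →ₗ[R] X, k ≠ 0 := by
  have hle : D.trace A (D.P x) ≤ Module.jacobson R (D.P x) :=
    trace_le fun z hz g v ↦ apply_mem_jacobson (ne_of_mem_of_not_mem hz hxA) g v
  obtain ⟨w, t, ht⟩ := exists_comp_ne_zero (D := D) hh
  have hw : w ∈ A := by_contra fun hw ↦ ht (hX.2 w hw _)
  refine ⟨h ∘ₗ Submodule.inclusion hle, fun h0 ↦ ht (LinearMap.ext fun v ↦ ?_)⟩
  exact LinearMap.congr_fun h0
    ⟨t v, apply_mem_trace hw ((Module.jacobson R (D.P x)).subtype ∘ₗ t) v⟩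

variable (K : Type) [Field K] [IsAlgClosed K] [Algebra K R] [FiniteDimensional K R]

include K

lemma supportedOn_of_hom_component (hB : BoundedTauRigid R) (hS : IsLowerSet S) (hx : x ∉ S)
    (hxS : Set.Iio x ⊆ S) (hr : IsHomRank (D.SupportedOn S) r) (hy : y < x) {Z Z' : ModCat R}
    (hZ : IsIndecomposable R Z) (hZx : D.SupportedOn (insert x S) Z) (hZ' : IsIndecomposable R Z')
    (hZ'y : D.SupportedOn (component S y) Z')
    (hle : r Z' ≤ r (.of R (D.trace (component S y) (D.P x)))) {g : Z →ₗ[R] Z'} (hg : g ≠ 0) :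
    D.SupportedOn S Z := by
  by_contra hZS
  have hyS := hxS hy
  have hZ'S := hZ'y.mono (component_subset hyS)
  obtain ⟨X, hX, hXS, ⟨h, hh⟩, u, hu, hbij⟩ :=
    exists_jacobson_hom_ne_zero K hS hx hxS hZ hZx hZS hZ' hZ'S hg
  have hXy : D.SupportedOn (component S y) X := hXS.component_of_hom hS hyS hX hZ'y hu
  obtain ⟨k, hk⟩ := exists_hom_of_trace_ne_zero (fun hxy ↦ hx (component_subset hyS hxy)) hXy hh
  have hE := isIndecomposable_trace_component K hB hS hx hxS hy
  have hES : D.SupportedOn S (D.trace (component S y) (D.P x)) :=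
    (supportedOn_trace (isLowerSet_component hS hyS)).mono (component_subset hyS)
  have hEX := (hr (Y := .of R (D.trace (component S y) (D.P x))) hE hES hX hXS k hk).1
  obtain ⟨hXZ', hXZ'_bij⟩ := hr hX hXS hZ' hZ'S u hu
  exact hbij (hXZ'_bij (by omega))

lemma predecessorsIn_trace_component (hB : BoundedTauRigid R) (hS : IsLowerSet S) (hx : x ∉ S)
    (hxS : Set.Iio x ⊆ S) (hr : IsHomRank (D.SupportedOn S) r) (hy : y < x) :
    PredecessorsIn (D.SupportedOn (insert x S)) (D.SupportedOn S)
      (.of R (D.trace (component S y) (D.P x))) := by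
  let E : ModCat R := .of R (D.trace (component S y) (D.P x))
  have hyS := hxS hy
  have hcS := component_subset hyS
  have hE : IsIndecomposable R E := isIndecomposable_trace_component K hB hS hx hxS hy
  have hEy : D.SupportedOn (component S y) E := supportedOn_trace (isLowerSet_component hS hyS)
  refine ⟨hE, hEy.mono (hcS.trans (Set.subset_insert x S)), fun {Z} hZ ↦ ?_⟩
  suffices h : D.SupportedOn (component S y) Z ∧ IsIndecomposable R Z ∧ r Z ≤ r E from h.1.mono hcS
  induction hZ using Relation.ReflTransGen.head_induction_on with
  | refl => exact ⟨hEy, hE, le_rfl⟩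
  | head hZ _ ih =>
    obtain ⟨hZ, hZx, -, -, g, hg⟩ := hZ
    obtain ⟨hZ'y, hZ', hle⟩ := ih
    have hZS := supportedOn_of_hom_component K hB hS hx hxS hr hy hZ hZx hZ' hZ'y hle hg
    exact ⟨hZS.component_of_hom hS hyS hZ hZ'y hg, hZ,
      (hr hZ hZS hZ' (hZ'y.mono hcS) g hg).1.trans hle⟩

lemma predecessorsIn_of_hom_jacobson (hB : BoundedTauRigid R) (hS : IsLowerSet S) (hx : x ∉ S)
    (hxS : Set.Iio x ⊆ S) (hr : IsHomRank (D.SupportedOn S) r) {Y : ModCat R}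
    (hY : IsIndecomposable R Y) (hYx : D.SupportedOn (insert x S) Y)
    {k : Y →ₗ[R] Module.jacobson R (D.P x)} (hk : k ≠ 0) :
    PredecessorsIn (D.SupportedOn (insert x S)) (D.SupportedOn S) Y := by
  obtain ⟨V, s, p, -, hV, hps, hpk⟩ := exists_isIndecomposable_ne_zero_comp hk
  have hVx : D.SupportedOn (Set.Iio x) V :=
    (supportedOn_jacobson x).quotient (LinearMap.surjective_of_comp_eq_id _ _ hps)
  have hVS := hVx.mono hxS
  have hid : (LinearMap.id : V →ₗ[R] V) ≠ 0 := fun h ↦ hpk (by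
    rw [← LinearMap.id_comp (p ∘ₗ k), h, LinearMap.zero_comp])
  obtain ⟨y, t, ht⟩ := exists_comp_ne_zero (D := D) hid
  have hy : y < x := by_contra fun hy ↦ ht (hVx.2 y hy t)
  have hVy : D.SupportedOn (component S y) V :=
    (hVS.component_or_diff hS (hxS hy) hV).resolve_right fun hVy ↦
      ht (hVy.2 y (fun hy ↦ hy.2 self_mem_component) t)
  let i : V →ₗ[R] D.P x := (Module.jacobson R (D.P x)).subtype ∘ₗ s
  have hi (v : V) : i v ∈ D.trace (component S y) (D.P x) :=
    trace_le_comap i (hVy.trace_eq_top.ge Submodule.mem_top)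
  have hi0 : i.codRestrict _ hi ≠ 0 := fun h ↦ hid <| LinearMap.ext fun v ↦ by
    have hiv : i v = 0 := congrArg Subtype.val (LinearMap.congr_fun h v)
    have hsv : s v = 0 := Subtype.ext hiv
    simpa [hsv] using (LinearMap.congr_fun hps v).symm
  have hV_pred := (predecessorsIn_trace_component K hB hS hx hxS hr hy).of_hom hV
    (hVS.mono (Set.subset_insert x S)) hi0
  exact hV_pred.of_hom hY hYx hpk

end IndecProjSystem

end Predecessors

section RelativelySimpleProjective

variable {T : ModuleProp R} {X Y Z U : Type} [AddCommGroup X] [Module R X] [AddCommGroup Y]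
  [Module R Y] [AddCommGroup Z] [Module R Z] [AddCommGroup U] [Module R U]

namespace IsSimpleProjectiveIn

lemma isIndecomposable (hX : IsSimpleProjectiveIn T X) : IsIndecomposable R X := by
  refine ⟨hX.nontrivial, fun e he ↦ or_iff_not_imp_left.2 fun he0 ↦ ?_⟩
  obtain ⟨s, hs⟩ := hX.exists_section hX.mem e he0
  calc e = e ∘ₗ (e ∘ₗ s) := by rw [hs, LinearMap.comp_id]
    _ = e ∘ₗ s := by rw [← LinearMap.comp_assoc]; exact congrArg (· ∘ₗ s) he
    _ = 1 := hs

lemma bijective_of_isIndecomposable (hX : IsSimpleProjectiveIn T X) (hTY : T Y)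
    (hY : IsIndecomposable R Y) {g : Y →ₗ[R] X} (hg : g ≠ 0) : Bijective g := by
  have := hX.nontrivial
  obtain ⟨s, hs⟩ := hX.exists_section hTY g hg
  exact (hY.bijective_of_retract hs).2

lemma bijective_of_not_leftPerpIn (hX : IsSimpleProjectiveIn T X) (hY : IsIndecomposable R Y)
    (hTY : T Y) (hYX : ¬ leftPerpIn T X Y) (hZ : IsIndecomposable R Z) (hTZ : T Z) {g : Z →ₗ[R] Y}
    (hg : g ≠ 0) : Bijective g := by
  obtain ⟨φ, hφ⟩ : ∃ φ : Y →ₗ[R] X, φ ≠ 0 := by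
    by_contra! hzero
    exact hYX ⟨hTY, hzero⟩
  have hφ_bij := hX.bijective_of_isIndecomposable hTY hY hφ
  have hφg : φ ∘ₗ g ≠ 0 := fun h0 ↦ hg <| LinearMap.ext fun v ↦ hφ_bij.1 <| by
    simpa using LinearMap.congr_fun h0 v
  exact (Bijective.of_comp_iff' hφ_bij g).1 (hX.bijective_of_isIndecomposable hTZ hZ hφg)

lemma isTauRigid [IsArtinianRing R] (hX : IsSimpleProjectiveIn T X) (hT : IsTorsionClass T)
    (hU : IsExtProgenerator T U) : IsTauRigid R X := by
  have := hT.finite hX.mem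
  refine .of_isExtProjective <|
    (hU.isExtProjective.of_memAdd (hX.memAdd_of_isExtProgenerator hT hU)).mono fun hY ↦ ?_
  obtain ⟨ι, _, t, ht⟩ := hY
  exact hT.quotient t ht (hT.of_memAdd (.pi fun _ ↦ .refl R X) hX.mem)

end IsSimpleProjectiveIn

lemma PredecessorsIn.exists_isSimpleProjectiveIn [IsArtinianRing R] {C C' : ModuleProp R}
    {r : ModCat R → ℕ} (hr : IsHomRank C' r) (hT : IsTorsionClass T)
    (hTC : ∀ {Z : Type} [AddCommGroup Z] [Module R Z], T Z → C Z) {Y : ModCat R} (hTY : T Y)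
    (hY : PredecessorsIn C C' Y) : ∃ X : ModCat R, IsSimpleProjectiveIn T X := by
  let A : Set (ModCat R) := {Z | T Z ∧ PredecessorsIn C C' Z}
  obtain ⟨X, ⟨hTX, hX⟩, hmin⟩ := exists_minimalFor_of_wellFoundedLT (· ∈ A) r ⟨Y, hTY, hY⟩
  refine ⟨X, hX.isIndecomposable.1, hTX, fun {Z} _ _ hTZ g hg ↦ ?_⟩
  have := hT.finite hTZ
  obtain ⟨V, s, p, -, hV, hps, hgs⟩ := exists_isIndecomposable_comp_ne_zero hg
  have hTV : T V := hT.quotient p (LinearMap.surjective_of_comp_eq_id _ _ hps) hTZ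
  have hVC := hX.of_hom hV (hTC hTV) hgs
  obtain ⟨hle, hbij⟩ := hr hV (hVC.of_reflTransGen .refl) hX.isIndecomposable
    (hX.of_reflTransGen .refl) _ hgs
  let e := LinearEquiv.ofBijective (g ∘ₗ s) (hbij (hle.antisymm (hmin ⟨hTV, hVC⟩ hle)))
  exact ⟨s ∘ₗ e.symm.toLinearMap, LinearMap.ext e.apply_symm_apply⟩

namespace IndecProjSystem

variable {D : IndecProjSystem R} [IsArtinianRing R] {S : Set D.Index} {x : D.Index}

lemma exists_isSimpleProjectiveIn_of_hom (K : Type) [Field K] [IsAlgClosed K] [Algebra K R]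
    [FiniteDimensional K R] (hB : BoundedTauRigid R) (hS : IsLowerSet S) (hx : x ∉ S)
    (hxS : Set.Iio x ⊆ S) {r : ModCat R → ℕ} (hr : IsHomRank (D.SupportedOn S) r)
    (hT : IsTorsionClass T)
    (hTx : ∀ {Z : Type} [AddCommGroup Z] [Module R Z], T Z → D.SupportedOn (insert x S) Z)
    (hY : T Y) {g : Y →ₗ[R] D.P x} (hg : g ≠ 0) : ∃ X : ModCat R, IsSimpleProjectiveIn T X := by
  by_contra hno
  have hsurj {Z : Type} [AddCommGroup Z] [Module R Z] (hZ : T Z) {f : Z →ₗ[R] D.P x}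
      (hf : f ≠ 0) : Surjective f := by
    rw [← LinearMap.range_eq_top]
    by_contra hrange
    have hle := (D.isIndecomposable x).le_jacobson hrange
    have := hT.finite hZ
    obtain ⟨V, s, p, -, hV, hps, hfs⟩ := exists_isIndecomposable_comp_ne_zero hf
    have hTV : T V := hT.quotient p (LinearMap.surjective_of_comp_eq_id _ _ hps) hZ
    let k := (f ∘ₗ s).codRestrict (Module.jacobson R (D.P x)) fun v ↦ hle ⟨s v, rfl⟩
    have hk : k ≠ 0 := fun h ↦ hfs <| LinearMap.ext fun v ↦
      congrArg Subtype.val (LinearMap.congr_fun h v)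
    exact hno <| (predecessorsIn_of_hom_jacobson K hB hS hx hxS hr hV (hTx hTV)
      hk).exists_isSimpleProjectiveIn hr hT hTx hTV
  refine hno ⟨.of R (D.P x), (D.isIndecomposable x).1, hT.quotient g (hsurj hY hg) hY,
    fun hZ f hf ↦ ?_⟩
  exact Module.projective_lifting_property f LinearMap.id (hsurj hZ hf)

end IndecProjSystem

end RelativelySimpleProjective

section Peeling

namespace IndecProjSystem

variable {D : IndecProjSystem R} {W : Set D.Index}

variable (D W) in
/-- `T` arises from the class of modules supported on `W` by successively removing the modules of
`l`, listed in reverse order: in each step, a module that is simple projective relative to the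
current torsion class is removed by passing to its left perpendicular category. -/
inductive IsPeeling : ModuleProp R → List (ModCat R) → Prop
  | nil : IsPeeling (D.SupportedOn W) []
  | cons {T : ModuleProp R} {l : List (ModCat R)} {X : ModCat R} :
    IsPeeling T l → IsSimpleProjectiveIn T X → IsPeeling (leftPerpIn T X) (X :: l)

variable (D W) in
/-- `U` detects simple projectives in `T`: if a quotient-closed subclass of `T` has no nonzero map
to the indecomposable projectives in `W` but one to `U`, then it has a relatively simple projective
module. This property of Ext-progenerators of `T` is inherited under mutation. -/
def DetectsSimpleProjectives (T : ModuleProp R) (U : Type) [AddCommGroup U] [Module R U] : Prop :=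
  ∀ T' : ModuleProp R, (∀ {Y : Type} [AddCommGroup Y] [Module R Y], T' Y → T Y) →
    (∀ {Y Z : Type} [AddCommGroup Y] [Module R Y] [AddCommGroup Z] [Module R Z] (g : Y →ₗ[R] Z),
      Surjective g → T' Y → T' Z) →
    (∀ {Y : Type} [AddCommGroup Y] [Module R Y], T' Y → ∀ y ∈ W, ∀ g : Y →ₗ[R] D.P y, g = 0) →
    ∀ (Y : ModCat R) (g : Y →ₗ[R] U), T' Y → g ≠ 0 → ∃ X : ModCat R, IsSimpleProjectiveIn T' X

lemma detectsSimpleProjectives_pi :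
    D.DetectsSimpleProjectives W (D.SupportedOn W) (∀ y : W, D.P y) :=
  fun _ _ _ hzero _ g hY hg ↦ (hg <| LinearMap.ext fun v ↦ funext fun y ↦
    LinearMap.congr_fun (hzero hY y y.2 (LinearMap.proj y ∘ₗ g)) v).elim

lemma isExtProgenerator_pi (K : Type*) [Field K] [Algebra K R] [FiniteDimensional K R]
    [IsArtinianRing R] (hW : IsLowerSet W) :
    IsExtProgenerator (D.SupportedOn W) (∀ y : W, D.P y) := by
  have hproj : Module.Projective R (∀ y : W, D.P y) := projective_pi
  have hmem : D.SupportedOn W (∀ y : W, D.P y) := ⟨inferInstance, fun z hz g ↦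
    LinearMap.ext fun v ↦ funext fun y ↦
      LinearMap.congr_fun ((supportedOn_P hW y.2).2 z hz (LinearMap.proj y ∘ₗ g)) v⟩
  refine ⟨hmem, fun _ _ _ _ _ _ p hp _ g ↦ Module.projective_lifting_property p g hp,
    fun {Y} _ _ hY ↦ ?_⟩
  have := hY.1
  obtain ⟨n, q, hq⟩ := exists_right_approximation R (∀ y : W, D.P y) Y K
  refine ⟨.of R (Fin n → ∀ y : W, D.P y), .pi fun _ ↦ .refl R _, q, ?_,
    (isTorsionClass_supportedOn.pi n hmem).of_injective (LinearMap.ker q).injective_subtype⟩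
  rw [← LinearMap.range_eq_top, ← top_le_iff, ← hY.trace_eq_top]
  classical
  refine trace_le fun y hy g v ↦ ?_
  obtain ⟨ψ, hψ⟩ := hq (g ∘ₗ LinearMap.proj (⟨y, hy⟩ : W))
  refine ⟨ψ (Pi.single ⟨y, hy⟩ v), ?_⟩
  simpa using LinearMap.congr_fun hψ (Pi.single ⟨y, hy⟩ v)

namespace IsPeeling

variable {T : ModuleProp R} {l : List (ModCat R)}

lemma isTorsionClass (h : IsPeeling D W T l) : IsTorsionClass T := by
  induction h with
  | nil => exact isTorsionClass_supportedOn
  | cons _ _ ih => exact ih.leftPerpIn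

lemma supportedOn (h : IsPeeling D W T l) {Y : Type} [AddCommGroup Y] [Module R Y] (hY : T Y) :
    D.SupportedOn W Y := by
  induction h with
  | nil => exact hY
  | cons _ _ ih => exact ih hY.1

lemma hom_eq_zero (h : IsPeeling D W T l) {X : ModCat R} (hX : X ∈ l) {Y : Type} [AddCommGroup Y]
    [Module R Y] (hY : T Y) (g : Y →ₗ[R] X) : g = 0 := by
  induction h with
  | nil => simp at hX
  | cons _ _ ih =>
    obtain rfl | hX := List.mem_cons.1 hX
    · exact hY.2 g
    · exact ih hX hY.1

lemma pairwise_hom_eq_zero (h : IsPeeling D W T l) :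
    l.Pairwise fun X Y : ModCat R ↦ ∀ g : X →ₗ[R] Y, g = 0 := by
  induction h with
  | nil => exact .nil
  | cons h hX ih => exact .cons (fun Y hY g ↦ h.hom_eq_zero hY hX.mem g) ih

lemma mem_or_exists_linearEquiv (h : IsPeeling D W T l) {Y : ModCat R}
    (hY : IsIndecomposable R Y) (hYW : D.SupportedOn W Y) :
    T Y ∨ ∃ X ∈ l, Nonempty (Y ≃ₗ[R] X) := by
  induction h with
  | nil => exact .inl hYW
  | @cons T _ X _ hX ih =>
    obtain hTY | ⟨Z, hZ, e⟩ := ih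
    · refine or_iff_not_imp_left.2 fun hY' ↦ ?_
      obtain ⟨g, hg⟩ : ∃ g : Y →ₗ[R] X, g ≠ 0 := by
        by_contra! hzero
        exact hY' ⟨hTY, hzero⟩
      exact ⟨X, List.mem_cons_self, ⟨.ofBijective g (hX.bijective_of_isIndecomposable hTY hY hg)⟩⟩
    · exact .inr ⟨Z, List.mem_cons_of_mem X hZ, e⟩

lemma hom_eq_zero_of_not_mem (h : IsPeeling D W T l) {Y : ModCat R} (hY : IsIndecomposable R Y)
    (hYW : D.SupportedOn W Y) (hTY : ¬ T Y) {Z : Type} [AddCommGroup Z] [Module R Z] (hZ : T Z)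
    (g : Z →ₗ[R] Y) : g = 0 := by
  obtain ⟨X, hX, ⟨e⟩⟩ := (h.mem_or_exists_linearEquiv hY hYW).resolve_left hTY
  have hg := h.hom_eq_zero hX hZ (e.toLinearMap ∘ₗ g)
  exact LinearMap.ext fun v ↦ by simpa using LinearMap.congr_fun hg v

lemma exists_isHomRank (h : IsPeeling D W T l) :
    ∃ r : ModCat R → ℕ, IsHomRank (fun Y _ _ ↦ D.SupportedOn W Y ∧ ¬ T Y) r ∧
      ∀ Y : ModCat R, IsIndecomposable R Y → D.SupportedOn W Y → ¬ T Y → r Y < l.length := by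
  classical
  induction h with
  | nil => exact ⟨0, fun _ hY ↦ (hY.2 hY.1).elim, fun _ _ hY hY' ↦ (hY' hY).elim⟩
  | @cons T l X h hX ih =>
    obtain ⟨r, hr, hlt⟩ := ih
    refine ⟨fun Y ↦ if T Y then l.length else r Y,
      fun {Y Y'} hY hYW hY' hYW' g hg ↦ ?_, fun Y hY hYW _ ↦ ?_⟩
    · by_cases hTY : T Y <;> by_cases hTY' : T Y' <;> simp only [hTY, hTY', if_true, if_false]
      · exact ⟨le_rfl, fun _ ↦ hX.bijective_of_not_leftPerpIn hY' hTY' hYW'.2 hY hTY hg⟩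
      · exact (hg (h.hom_eq_zero_of_not_mem hY' hYW'.1 hTY' hTY g)).elim
      · have := hlt Y hY hYW.1 hTY
        exact ⟨this.le, fun heq ↦ (this.ne heq).elim⟩
      · exact hr hY ⟨hYW.1, hTY⟩ hY' ⟨hYW'.1, hTY'⟩ g hg
    · dsimp only
      split_ifs with hTY
      · simp
      · exact (hlt Y hY hYW hTY).trans (by simp)

end IsPeeling

end IndecProjSystem

end Peeling

section RepresentationFinite

namespace IndecProjSystem

variable {D : IndecProjSystem R} {W : Set D.Index} {T : ModuleProp R} {l : List (ModCat R)}

namespace IsPeeling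

variable (K : Type) [Field K] [Algebra K R] [FiniteDimensional K R] [IsArtinianRing R]

include K

lemma exists_isExtProgenerator (hW : IsLowerSet W) (h : IsPeeling D W T l) :
    ∃ U : ModCat R, IsExtProgenerator T U ∧ D.DetectsSimpleProjectives W T U := by
  induction h with
  | nil => exact ⟨.of R (∀ y : W, D.P y), isExtProgenerator_pi K hW, detectsSimpleProjectives_pi⟩
  | cons h hX ih =>
    obtain ⟨U, hU, hdet⟩ := ih
    obtain ⟨U', hU', hstep⟩ := exists_mutation K h.isTorsionClass hX hU
    refine ⟨U', hU', fun T' hT' hquot hzero Y g hY hg ↦ ?_⟩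
    obtain hX' | ⟨Z, f, hZ, hf⟩ := hstep T' hT' hquot Y g hY hg
    · exact hX'
    · exact hdet T' (fun hY ↦ (hT' hY).1) hquot hzero Z f hZ hf

lemma finite_and_isIndecomposable_and_isTauRigid (hW : IsLowerSet W) (h : IsPeeling D W T l)
    {X : ModCat R} (hX : X ∈ l) : Module.Finite R X ∧ IsIndecomposable R X ∧ IsTauRigid R X := by
  induction h with
  | nil => simp at hX
  | cons h hX' ih =>
    obtain rfl | hX := List.mem_cons.1 hX
    · obtain ⟨U, hU, -⟩ := h.exists_isExtProgenerator K hW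
      exact ⟨h.isTorsionClass.finite hX'.mem, hX'.isIndecomposable,
        hX'.isTauRigid h.isTorsionClass hU⟩
    · exact ih hX

lemma length_le (hW : IsLowerSet W) (h : IsPeeling D W T l) {ι : Type*} [Finite ι]
    {F : ι → ModCat R} (hF : ∀ {M : Type} [AddCommGroup M] [Module R M], Module.Finite R M →
      IsIndecomposable R M → IsTauRigid R M → ∃ i, Nonempty (M ≃ₗ[R] F i)) :
    l.length ≤ Nat.card ι := by
  have hl (j : Fin l.length) := h.finite_and_isIndecomposable_and_isTauRigid K hW (l.get_mem j)
  choose φ hφ using fun j ↦ hF (hl j).1 (hl j).2.1 (hl j).2.2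
  have hinj : Injective φ := Injective.of_lt_imp_ne fun i j hij hφij ↦ by
    obtain ⟨e⟩ := hφ i
    obtain ⟨e'⟩ := hφij ▸ hφ j
    have := (hl i).2.1.1
    exact LinearMap.ne_zero_of_injective (e.trans e'.symm).injective
      (List.pairwise_iff_get.1 h.pairwise_hom_eq_zero i j hij (e.trans e'.symm).toLinearMap)
  simpa using Nat.card_le_card_of_injective φ hinj

lemma exists_isSimpleProjectiveIn [IsAlgClosed K] (hB : BoundedTauRigid R) (hW : IsLowerSet W)
    (hrank : ∀ S < W, IsLowerSet S → ∃ r, IsHomRank (D.SupportedOn S) r) (h : IsPeeling D W T l)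
    {Y : ModCat R} (hY : T Y) (hnt : Nontrivial Y) : ∃ X : ModCat R, IsSimpleProjectiveIn T X := by
  by_cases hP : ∃ (Z : ModCat R) (_ : T Z) (y : D.Index) (_ : y ∈ W) (g : Z →ₗ[R] D.P y), g ≠ 0
  · obtain ⟨Z, hZ, y, hy, g, hg⟩ := hP
    obtain ⟨x, ⟨k, hk⟩, hx⟩ := W.toFinite.exists_le_maximal hy
    have hS : IsLowerSet (W \ {x}) := fun a b hba ha ↦ ⟨hW hba ha.1, fun hbx ↦
      ha.2 (hx.eq_of_le ha.1 (hbx ▸ hba)).symm⟩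
    have hWx : insert x (W \ {x}) = W := Set.insert_sdiff_self_of_mem hx.prop
    obtain ⟨r, hr⟩ := hrank (W \ {x}) (Set.sdiff_singleton_ssubset.2 hx.prop) hS
    refine exists_isSimpleProjectiveIn_of_hom K hB hS (fun hxx ↦ hxx.2 rfl)
      (fun z hz ↦ ⟨hW hz.le hx.prop, hz.ne⟩) hr h.isTorsionClass
      (fun hZ ↦ hWx.symm ▸ h.supportedOn hZ) hZ (g := k ∘ₗ g) fun hkg ↦ hg ?_
    exact LinearMap.ext fun v ↦ D.injective hk (by simpa using LinearMap.congr_fun hkg v)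
  · push Not at hP
    obtain ⟨U, hU, hdet⟩ := h.exists_isExtProgenerator K hW
    refine hdet T id h.isTorsionClass.quotient (fun {Z} _ _ hZ ↦ hP (.of R Z) hZ) U LinearMap.id
      hU.mem fun hid ↦ ?_
    obtain ⟨U₀, hU₀, q, hq, -⟩ := hU.exists_cover hY
    have hq0 : q = 0 := hU₀.eq_zero_of_source (fun f ↦ by
      rw [← LinearMap.comp_id f, hid, LinearMap.comp_zero]) q
    exact LinearMap.ne_zero_of_surjective hq hq0

end IsPeeling

variable (K : Type) [Field K] [IsAlgClosed K] [Algebra K R] [FiniteDimensional K R]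
  [IsArtinianRing R]

include K

lemma exists_isPeeling_not_isIndecomposable (hft : IsTauTiltingFiniteRing R) (hW : IsLowerSet W)
    (hrank : ∀ S < W, IsLowerSet S → ∃ r, IsHomRank (D.SupportedOn S) r) :
    ∃ T l, IsPeeling D W T l ∧ ∀ Y : ModCat R, T Y → ¬ IsIndecomposable R Y := by
  have hB := hft.boundedTauRigid K
  obtain ⟨ι, _, F, hF⟩ := hft.exists_finite_tauRigid K
  by_contra! hne
  have hpeel (n : ℕ) : ∃ T l, IsPeeling D W T l ∧ l.length = n := by
    induction n with
    | zero => exact ⟨_, [], .nil, rfl⟩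
    | succ n ih =>
      obtain ⟨T, l, h, rfl⟩ := ih
      obtain ⟨Y, hTY, hY⟩ := hne T l h
      obtain ⟨X, hX⟩ := h.exists_isSimpleProjectiveIn K hB hW hrank hTY hY.1
      exact ⟨_, _, h.cons hX, rfl⟩
  obtain ⟨T, l, h, hl⟩ := hpeel (Nat.card ι + 1)
  have := h.length_le K hW hF
  omega

lemma exists_isHomRank (hft : IsTauTiltingFiniteRing R) (hW : IsLowerSet W) :
    ∃ r, IsHomRank (D.SupportedOn W) r := by
  induction W using WellFoundedLT.induction with
  | ind W ih =>
    obtain ⟨T, l, h, hT⟩ :=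
      exists_isPeeling_not_isIndecomposable K hft hW fun S hSW hS ↦ ih S hSW hS
    obtain ⟨r, hr, -⟩ := h.exists_isHomRank
    exact ⟨r, fun {Y Y'} hY hYW hY' hYW' ↦
      hr hY ⟨hYW, fun hTY ↦ hT Y hTY hY⟩ hY' ⟨hYW', fun hTY ↦ hT Y' hTY hY'⟩⟩

lemma isRepFiniteRing (D : IndecProjSystem R) (hft : IsTauTiltingFiniteRing R) :
    IsRepFiniteRing R := by
  obtain ⟨T, l, h, hT⟩ := exists_isPeeling_not_isIndecomposable (D := D) K hft isLowerSet_univ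
    fun S _ hS ↦ exists_isHomRank K hft hS
  refine ⟨l.length, l.get, fun M hfin hM ↦ ?_⟩
  rw [isIndecMod_iff] at hM
  have hMW : D.SupportedOn Set.univ M := ⟨hfin, fun z hz ↦ (hz trivial).elim⟩
  obtain ⟨X, hX, e⟩ := (h.mem_or_exists_linearEquiv hM hMW).resolve_left fun hTM ↦ hT M hTM hM
  obtain ⟨i, rfl⟩ := List.get_of_mem hX
  exact ⟨i, (nonempty_iso_iff M _).2 e⟩

end IndecProjSystem

end RepresentationFinite

/-- Theorem 4.11 of the paper.  Every τ-tilting-finite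
locally hereditary finite-dimensional algebra over an algebraically closed
field is representation-finite. -/
theorem tau_tilting_finite_locally_hereditary_is_rep_finite
    (K Λ : Type) [Field K] [IsAlgClosed K] [Ring Λ] [Algebra K Λ] [FiniteDimensional K Λ]
    (hlh : IsLocallyHereditaryRing Λᵐᵒᵖ)
    (ht : IsTauTiltingFinite Λ) :
    IsRepFinite Λ := by
  have := IsArtinianRing.of_finite K Λᵐᵒᵖ
  obtain ⟨D⟩ := hlh.nonempty_indecProjSystem
  exact D.isRepFiniteRing K ht

end PaperSilting
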